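/- arXiv:2306.14969 — 12 statements merged into one kernel-verified Lean document; each statement's English description precedes it below -/
import Mathlib

section
/- Let W and V be n×n complex matrices. For every θ₀ ∈ ℝ, the map θ ↦ exp(W + θ·V) (matrix exponential) is differentiable at θ₀ and its derivative equals the Bochner integral ∫₀¹ exp((1−s)·H) · V · exp(s·H) ds, where H = W + θ₀·V (Duhamel's formula). -/
open scoped Matrix.Norms.L2Operator

theorem duhamel_aux {A : Type*} [NormedRing A] [NormedAlgebra ℝ A] [CompleteSpace A]
    (W V : A) (θ₀ : ℝ) :
    HasDerivAt (fun θ : ℝ => NormedSpace.exp (W + θ • V))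
      (∫ s in (0:ℝ)..1,
        NormedSpace.exp ((1 - s) • (W + θ₀ • V)) * V * NormedSpace.exp (s • (W + θ₀ • V)))
      θ₀ := by
  letI : NormedAlgebra ℚ A := NormedAlgebra.restrictScalars ℚ ℝ A
  have hexp : Continuous (NormedSpace.exp : A → A) := NormedSpace.exp_continuous
  set H := W + θ₀ • V with hH
  let G : ℝ → A := fun θ => ∫ s in (0:ℝ)..1,
    NormedSpace.exp ((1 - s) • H) * V * NormedSpace.exp (s • (W + θ • V))
  have hG : Continuous G := by
    apply intervalIntegral.continuous_parametric_intervalIntegral_of_continuous'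
    simp only [Function.uncurry_def]
    exact ((hexp.comp (by fun_prop)).mul continuous_const).mul (hexp.comp (by fun_prop))
  have key : ∀ θ : ℝ, NormedSpace.exp (W + θ • V) - NormedSpace.exp H = (θ - θ₀) • G θ := by
    intro θ
    have hd : ∀ s ∈ Set.uIcc (0:ℝ) 1, HasDerivAt
        (fun s : ℝ => NormedSpace.exp ((1 - s) • H) * NormedSpace.exp (s • (W + θ • V)))
        ((θ - θ₀) • (NormedSpace.exp ((1 - s) • H) * V * NormedSpace.exp (s • (W + θ • V)))) s := by
      intro s _
      have h1 : HasDerivAt (fun s : ℝ => NormedSpace.exp ((1 - s) • H))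
          ((-1 : ℝ) • (NormedSpace.exp ((1 - s) • H) * H)) s :=
        (hasDerivAt_exp_smul_const (𝕂 := ℝ) H (1 - s)).scomp s ((hasDerivAt_id s).const_sub 1)
      have h2 := hasDerivAt_exp_smul_const' (𝕂 := ℝ) (W + θ • V) s
      refine (h1.mul h2).congr_deriv ?_
      have : W + θ • V = H + (θ - θ₀) • V := by rw [hH, sub_smul]; abel
      generalize NormedSpace.exp (s • (W + θ • V)) = E
      rw [this]
      simp only [add_mul, mul_add, smul_mul_assoc, mul_smul_comm, neg_smul, one_smul, mul_assoc,
        neg_mul]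
      abel
    have := intervalIntegral.integral_eq_sub_of_hasDerivAt hd (by
      apply Continuous.intervalIntegrable
      exact (((hexp.comp (by fun_prop)).mul continuous_const).mul
        (hexp.comp (by fun_prop))).const_smul _)
    rw [intervalIntegral.integral_smul] at this
    simp only [sub_self, sub_zero, zero_smul, one_smul, NormedSpace.exp_zero, one_mul,
      mul_one] at this
    exact this.symm
  rw [hasDerivAt_iff_tendsto_slope]
  have ht : Filter.Tendsto G (nhdsWithin θ₀ {θ₀}ᶜ) (nhds (G θ₀)) :=
    (hG.tendsto θ₀).mono_left nhdsWithin_le_nhds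
  refine ht.congr' ?_
  filter_upwards [self_mem_nhdsWithin] with θ hθ
  have hne : θ - θ₀ ≠ 0 := sub_ne_zero.mpr hθ
  rw [slope_def_module, key θ, smul_smul, inv_mul_cancel₀ hne, one_smul]

/-- **Duhamel's formula.** For `n × n` complex matrices `W` and `V`, the map
`θ ↦ exp (W + θ • V)` is differentiable at every `θ₀ ∈ ℝ`, with derivative
`∫₀¹ exp ((1 - s) • H) * V * exp (s • H) ds` where `H = W + θ₀ • V`. -/
theorem duhamel_formula {n : ℕ} (W V : Matrix (Fin n) (Fin n) ℂ) (θ₀ : ℝ) :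
    HasDerivAt (fun θ : ℝ => NormedSpace.exp (W + θ • V))
      (∫ s in (0:ℝ)..1,
        NormedSpace.exp ((1 - s) • (W + θ₀ • V)) * V * NormedSpace.exp (s • (W + θ₀ • V)))
      θ₀ := by
  letI : NormedAlgebra ℝ (Matrix (Fin n) (Fin n) ℂ) := NormedAlgebra.restrictScalars ℝ ℂ _
  exact duhamel_aux W V θ₀
end

section
/- The log-partition function θ ↦ log Z(θ) is differentiable on ℝ^m, and its partial derivative with respect to θ_i at any θ equals the Gibbs expectation value Tr[ρ_θ H_i]. Consequently, for any density matrix η, the QBM objective F is differentiable with ∇F(θ)_i = Tr[ρ_θ H_i] − Tr[η H_i]. -/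
open scoped Matrix.Norms.L2Operator ComplexOrder

namespace QBM2

variable {n m : ℕ}

/-- The Hamiltonian `H(θ) = ∑ i, θ i • H i`. -/
noncomputable def ham (H : Fin m → Matrix (Fin n) (Fin n) ℂ) (θ : Fin m → ℝ) :
    Matrix (Fin n) (Fin n) ℂ :=
  ∑ i, θ i • H i

/-- The partition function `Z(θ) = Tr[exp H(θ)]` (its real part). -/
noncomputable def Z (H : Fin m → Matrix (Fin n) (Fin n) ℂ) (θ : Fin m → ℝ) : ℝ :=
  (NormedSpace.exp (ham H θ)).trace.re

/-- The Gibbs state `ρ_θ = exp H(θ) / Z(θ)`. -/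
noncomputable def gibbs (H : Fin m → Matrix (Fin n) (Fin n) ℂ) (θ : Fin m → ℝ) :
    Matrix (Fin n) (Fin n) ℂ :=
  (Z H θ : ℂ)⁻¹ • NormedSpace.exp (ham H θ)

/-- The log-partition function `θ ↦ log Z(θ)`. -/
noncomputable def logZ (H : Fin m → Matrix (Fin n) (Fin n) ℂ) (θ : Fin m → ℝ) : ℝ :=
  Real.log (Z H θ)

/-- The QBM objective `F(θ) = log Z(θ) − ∑ i, θ i * Tr[η H i]`. -/
noncomputable def F (H : Fin m → Matrix (Fin n) (Fin n) ℂ) (η : Matrix (Fin n) (Fin n) ℂ)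
    (θ : Fin m → ℝ) : ℝ :=
  logZ H θ - ∑ i, θ i * (η * H i).trace.re

lemma contDiff_mexp : ContDiff ℝ 1
    (NormedSpace.exp : Matrix (Fin n) (Fin n) ℂ → Matrix (Fin n) (Fin n) ℂ) := by
  rw [contDiff_iff_contDiffAt]
  intro x
  exact (NormedSpace.exp_analytic (𝕂 := ℝ) x).contDiffAt

lemma hasFDerivAt_mexp (x : Matrix (Fin n) (Fin n) ℂ) :
    HasFDerivAt (NormedSpace.exp : Matrix (Fin n) (Fin n) ℂ → Matrix (Fin n) (Fin n) ℂ)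
      (fderiv ℝ NormedSpace.exp x) x :=
  (contDiff_mexp.differentiable one_ne_zero x).hasFDerivAt

lemma fderiv_double (A B : Matrix (Fin n) (Fin n) ℂ) :
    fderiv ℝ NormedSpace.exp ((2:ℝ) • A) ((2:ℝ) • B) =
      NormedSpace.exp A * fderiv ℝ NormedSpace.exp A B
        + fderiv ℝ NormedSpace.exp A B * NormedSpace.exp A := by
  have h1 := (hasFDerivAt_mexp A).mul' (hasFDerivAt_mexp A)
  have h2 : HasFDerivAt (fun X : Matrix (Fin n) (Fin n) ℂ => (2:ℝ) • X)
      ((2:ℝ) • ContinuousLinearMap.id ℝ _) A := (hasFDerivAt_id A).const_smul (2:ℝ)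
  have h3 := (hasFDerivAt_mexp ((2:ℝ) • A)).comp A h2
  have e : (NormedSpace.exp : Matrix (Fin n) (Fin n) ℂ → Matrix (Fin n) (Fin n) ℂ) ∘
      (fun X : Matrix (Fin n) (Fin n) ℂ => (2:ℝ) • X) =
      (NormedSpace.exp * NormedSpace.exp) := by
    funext X
    simp only [Function.comp, Pi.mul_apply]
    rw [two_smul, Matrix.exp_add_of_commute _ _ (Commute.refl X)]
  rw [e] at h3
  have h4 := congrArg (fun L => L B) (h3.unique h1)
  simpa using h4

lemma phi_half (A B : Matrix (Fin n) (Fin n) ℂ) (s : ℝ) :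
    (NormedSpace.exp ((1 - s) • A) * fderiv ℝ NormedSpace.exp (s • A) B).trace =
    (NormedSpace.exp ((1 - s/2) • A) * fderiv ℝ NormedSpace.exp ((s/2) • A) B).trace := by
  have h := fderiv_double ((s/2) • A) ((1/2:ℝ) • B)
  rw [smul_smul, smul_smul, show (2:ℝ) * (s/2) = s by ring, show (2:ℝ) * (1/2) = 1 by norm_num,
    one_smul, map_smul] at h
  have e : NormedSpace.exp ((1 - s/2) • A) =
      NormedSpace.exp ((1 - s) • A) * NormedSpace.exp ((s/2) • A) := by
    rw [← Matrix.exp_add_of_commute _ _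
      (((Commute.refl A).smul_left _).smul_right _), ← add_smul]
    congr 2; ring
  have e' : NormedSpace.exp ((1 - s/2) • A) =
      NormedSpace.exp ((s/2) • A) * NormedSpace.exp ((1 - s) • A) := by
    rw [← Matrix.exp_add_of_commute _ _
      (((Commute.refl A).smul_left _).smul_right _), ← add_smul]
    congr 2; ring
  set D := fderiv ℝ NormedSpace.exp ((s/2) • A) B
  rw [h, mul_add, Matrix.trace_add, ← mul_assoc, ← mul_assoc, mul_smul_comm, mul_smul_comm,
    smul_mul_assoc, ← e, Matrix.trace_smul, Matrix.trace_smul,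
    Matrix.trace_mul_comm _ (NormedSpace.exp ((s/2) • A)), ← mul_assoc, ← e', ← add_smul]
  norm_num

lemma trace_fderiv_exp (A B : Matrix (Fin n) (Fin n) ℂ) :
    (fderiv ℝ NormedSpace.exp A B).trace = (NormedSpace.exp A * B).trace := by
  let φ : ℝ → ℂ := fun s =>
    (NormedSpace.exp ((1 - s) • A) * fderiv ℝ NormedSpace.exp (s • A) B).trace
  have hc : Continuous φ := by
    have c1 : Continuous (NormedSpace.exp : Matrix (Fin n) (Fin n) ℂ → Matrix (Fin n) (Fin n) ℂ) :=
      contDiff_mexp.continuous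
    have c2 := contDiff_mexp (n := n).continuous_fderiv one_ne_zero
    have c3 : Continuous fun s : ℝ => fderiv ℝ NormedSpace.exp (s • A) B :=
      (c2.comp (continuous_id.smul continuous_const)).clm_apply continuous_const
    have c4 : Continuous fun s : ℝ => NormedSpace.exp ((1 - s) • A) :=
      c1.comp ((continuous_const.sub continuous_id).smul continuous_const)
    exact (c4.mul c3).matrix_trace
  have hk : ∀ k : ℕ, φ ((1/2:ℝ)^k) = φ 1 := by
    intro k
    induction k with
    | zero => simp
    | succ k ih =>
      rw [← ih, pow_succ]
      have := phi_half A B ((1/2:ℝ)^k)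
      rw [show (1/2:ℝ)^k * (1/2) = (1/2:ℝ)^k/2 by ring]
      exact this.symm
  have hl : Filter.Tendsto (fun k : ℕ => φ ((1/2:ℝ)^k)) Filter.atTop (nhds (φ 0)) :=
    (hc.tendsto 0).comp (tendsto_pow_atTop_nhds_zero_of_lt_one (by norm_num) (by norm_num))
  simp only [hk] at hl
  have h01 := tendsto_nhds_unique tendsto_const_nhds hl
  have h0 : fderiv ℝ NormedSpace.exp (0 : Matrix (Fin n) (Fin n) ℂ) = 1 :=
    (hasFDerivAt_exp_zero (𝕂 := ℝ) (𝔸 := Matrix (Fin n) (Fin n) ℂ)).fderiv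
  simpa [φ, h0] using h01

lemma Z_pos [NeZero n] (H : Fin m → Matrix (Fin n) (Fin n) ℂ)
    (hH : ∀ i, (H i).IsHermitian) (θ : Fin m → ℝ) : 0 < Z H θ := by
  have hh : (ham H θ).IsHermitian := by
    unfold ham Matrix.IsHermitian
    rw [Matrix.conjTranspose_sum]
    refine Finset.sum_congr rfl fun i _ => ?_
    rw [Matrix.conjTranspose_smul, (hH i).eq]; simp
  have hh2 : ((1/2:ℝ) • ham H θ).IsHermitian := by
    unfold Matrix.IsHermitian
    rw [Matrix.conjTranspose_smul, hh.eq]; simp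
  have e : NormedSpace.exp (ham H θ) = (NormedSpace.exp ((1/2:ℝ) • ham H θ)).conjTranspose *
      NormedSpace.exp ((1/2:ℝ) • ham H θ) := by
    rw [hh2.exp.eq, ← Matrix.exp_add_of_commute _ _ (Commute.refl _), ← add_smul]
    norm_num
  have hp : (NormedSpace.exp (ham H θ)).PosDef := by
    rw [e]
    exact Matrix.PosDef.conjTranspose_mul_self _
      (Matrix.mulVec_injective_of_isUnit (Matrix.isUnit_exp _))
  exact (Complex.pos_iff.mp hp.trace_pos).1

lemma hasFDerivAt_Z (H : Fin m → Matrix (Fin n) (Fin n) ℂ) (θ : Fin m → ℝ) :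
    ∃ L : (Fin m → ℝ) →L[ℝ] ℝ, HasFDerivAt (Z H) L θ ∧
      ∀ i, L (Pi.single i 1) = (NormedSpace.exp (ham H θ) * H i).trace.re := by
  let hamL : (Fin m → ℝ) →L[ℝ] Matrix (Fin n) (Fin n) ℂ :=
    ∑ i, (ContinuousLinearMap.proj (R := ℝ) (φ := fun _ : Fin m => ℝ) i).smulRight (H i)
  have hL : ∀ t, hamL t = ham H t := by
    intro t; simp [hamL, ham]
  let T : Matrix (Fin n) (Fin n) ℂ →L[ℝ] ℝ :=
    LinearMap.toContinuousLinearMap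
      (Complex.reLm ∘ₗ (Matrix.traceLinearMap (Fin n) ℝ ℂ))
  have hT : ∀ X, T X = X.trace.re := fun X => rfl
  have h1 : HasFDerivAt (ham H) hamL θ := by
    have := hamL.hasFDerivAt (x := θ)
    rwa [show (⇑hamL) = ham H from funext hL] at this
  refine ⟨_, T.hasFDerivAt.comp θ ((hasFDerivAt_mexp (ham H θ)).comp θ h1), fun i => ?_⟩
  have : hamL (Pi.single i 1) = H i := by
    simp [hamL, Pi.single_apply]
  simp only [ContinuousLinearMap.comp_apply, this, hT, trace_fderiv_exp]

/-- The log-partition function is differentiable with partial derivatives the Gibbs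
expectation values `Tr[ρ_θ H i]`; consequently the QBM objective `F` is differentiable with
`∇F(θ)_i = Tr[ρ_θ H i] − Tr[η H i]`. -/
theorem logZ_differentiable_and_gradient (H : Fin m → Matrix (Fin n) (Fin n) ℂ)
    (hH : ∀ i, (H i).IsHermitian)
    (η : Matrix (Fin n) (Fin n) ℂ) (hη : η.PosSemidef) (hηtr : η.trace = 1) :
    (Differentiable ℝ (logZ H) ∧
      ∀ (θ : Fin m → ℝ) (i : Fin m),
        fderiv ℝ (logZ H) θ (Pi.single i 1) = (gibbs H θ * H i).trace.re) ∧
    (Differentiable ℝ (F H η) ∧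
      ∀ (θ : Fin m → ℝ) (i : Fin m),
        fderiv ℝ (F H η) θ (Pi.single i 1) =
          (gibbs H θ * H i).trace.re - (η * H i).trace.re) := by
  have hn : NeZero n := ⟨by rintro rfl; simp [Matrix.trace] at hηtr⟩
  have key : ∀ θ : Fin m → ℝ, ∃ L : (Fin m → ℝ) →L[ℝ] ℝ, HasFDerivAt (logZ H) L θ ∧
      ∀ i, L (Pi.single i 1) = (gibbs H θ * H i).trace.re := by
    intro θ
    obtain ⟨L, hL, hLi⟩ := hasFDerivAt_Z H θ
    refine ⟨_, hL.log (Z_pos H hH θ).ne', fun i => ?_⟩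
    simp only [ContinuousLinearMap.smul_apply, hLi, gibbs, Matrix.smul_mul, Matrix.trace_smul,
      smul_eq_mul, ← Complex.ofReal_inv, Complex.re_ofReal_mul]
  have key2 : ∀ θ : Fin m → ℝ, ∃ L : (Fin m → ℝ) →L[ℝ] ℝ, HasFDerivAt (F H η) L θ ∧
      ∀ i, L (Pi.single i 1) = (gibbs H θ * H i).trace.re - (η * H i).trace.re := by
    intro θ
    obtain ⟨L, hL, hLi⟩ := key θ
    let K : (Fin m → ℝ) →L[ℝ] ℝ :=
      ∑ i, (ContinuousLinearMap.proj (R := ℝ) (φ := fun _ : Fin m => ℝ) i).smulRight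
        ((η * H i).trace.re)
    have hK : ∀ t, K t = ∑ i, t i * (η * H i).trace.re := by
      intro t; simp [K]
    have h1 : HasFDerivAt (fun t : Fin m → ℝ => ∑ i, t i * (η * H i).trace.re) K θ := by
      have := K.hasFDerivAt (x := θ)
      rwa [show (⇑K) = _ from funext hK] at this
    refine ⟨_, hL.sub h1, fun i => ?_⟩
    rw [ContinuousLinearMap.sub_apply, hLi, hK]
    simp [Pi.single_apply]
  refine ⟨⟨fun θ => ?_, fun θ i => ?_⟩, ⟨fun θ => ?_, fun θ i => ?_⟩⟩
  · obtain ⟨L, hL, -⟩ := key θ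
    exact hL.differentiableAt
  · obtain ⟨L, hL, h⟩ := key θ
    rw [hL.fderiv, h]
  · obtain ⟨L, hL, -⟩ := key2 θ
    exact hL.differentiableAt
  · obtain ⟨L, hL, h⟩ := key2 θ
    rw [hL.fderiv, h]

end QBM2
end

section
/- The log-partition function θ ↦ log Z(θ) is a convex function on ℝ^m. Consequently, for any density matrix η, the QBM objective F(θ) = log Z(θ) − ∑_{i=1}^m θ_i Tr[η H_i] is convex on ℝ^m, i.e. the quantum relative entropy S(η‖ρ_θ) is a convex function of the parameters θ. -/
open scoped Matrix.Norms.L2Operator ComplexOrder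

namespace QBM3

variable {n m : ℕ}

/-- The Hamiltonian `H(θ) = ∑ i, θ i • H i`. -/
noncomputable def ham (H : Fin m → Matrix (Fin n) (Fin n) ℂ) (θ : Fin m → ℝ) :
    Matrix (Fin n) (Fin n) ℂ :=
  ∑ i, θ i • H i

/-- The partition function `Z(θ) = Tr[exp H(θ)]` (its real part). -/
noncomputable def Z (H : Fin m → Matrix (Fin n) (Fin n) ℂ) (θ : Fin m → ℝ) : ℝ :=
  (NormedSpace.exp (ham H θ)).trace.re

/-- The Gibbs state `ρ_θ = exp H(θ) / Z(θ)`. -/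
noncomputable def gibbs (H : Fin m → Matrix (Fin n) (Fin n) ℂ) (θ : Fin m → ℝ) :
    Matrix (Fin n) (Fin n) ℂ :=
  (Z H θ : ℂ)⁻¹ • NormedSpace.exp (ham H θ)

/-- The log-partition function `θ ↦ log Z(θ)`. -/
noncomputable def logZ (H : Fin m → Matrix (Fin n) (Fin n) ℂ) (θ : Fin m → ℝ) : ℝ :=
  Real.log (Z H θ)

/-- The QBM objective `F(θ) = log Z(θ) − ∑ i, θ i * Tr[η H i]`. -/
noncomputable def F (H : Fin m → Matrix (Fin n) (Fin n) ℂ) (η : Matrix (Fin n) (Fin n) ℂ)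
    (θ : Fin m → ℝ) : ℝ :=
  logZ H θ - ∑ i, θ i * (η * H i).trace.re

lemma diag_exists (X : Matrix (Fin n) (Fin n) ℂ) (hX : X.IsHermitian) :
    ∃ (V : Matrix (Fin n) (Fin n) ℂ) (x : Fin n → ℝ), star V * V = 1 ∧ V * star V = 1 ∧
      X = V * Matrix.diagonal (fun i => (x i : ℂ)) * star V ∧
      (NormedSpace.exp X).trace.re = ∑ j, Real.exp (x j) := by
  have h1 : star (hX.eigenvectorUnitary : Matrix (Fin n) (Fin n) ℂ) *
      (hX.eigenvectorUnitary : Matrix (Fin n) (Fin n) ℂ) = 1 :=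
    Unitary.coe_star_mul_self hX.eigenvectorUnitary
  have h2 : (hX.eigenvectorUnitary : Matrix (Fin n) (Fin n) ℂ) *
      star (hX.eigenvectorUnitary : Matrix (Fin n) (Fin n) ℂ) = 1 :=
    Unitary.coe_mul_star_self hX.eigenvectorUnitary
  have h3 : X = (hX.eigenvectorUnitary : Matrix (Fin n) (Fin n) ℂ) *
      Matrix.diagonal (fun i => (hX.eigenvalues i : ℂ)) *
      star (hX.eigenvectorUnitary : Matrix (Fin n) (Fin n) ℂ) := hX.spectral_theorem
  refine ⟨hX.eigenvectorUnitary, hX.eigenvalues, h1, h2, h3, ?_⟩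
  generalize (hX.eigenvectorUnitary : Matrix (Fin n) (Fin n) ℂ) = V at *
  generalize hX.eigenvalues = x at *
  have h4 : NormedSpace.exp X = V * NormedSpace.exp (Matrix.diagonal (fun i => (x i : ℂ))) *
      star V := by
    rw [h3]
    exact Matrix.exp_units_conj ⟨V, star V, h2, h1⟩ _
  rw [h4, Matrix.trace_mul_cycle, h1, one_mul, Matrix.exp_diagonal, Matrix.trace_diagonal,
    Complex.re_sum]
  refine Finset.sum_congr rfl fun j _ => ?_
  rw [Pi.coe_exp, ← Complex.exp_eq_exp_ℂ, Complex.exp_ofReal_re]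

lemma peierls (X : Matrix (Fin n) (Fin n) ℂ) (hX : X.IsHermitian)
    (U : Matrix (Fin n) (Fin n) ℂ) (hU : star U * U = 1) (hU' : U * star U = 1) :
    ∑ i, Real.exp ((star U * X * U) i i).re ≤ (NormedSpace.exp X).trace.re := by
  obtain ⟨V, x, hV, hV', hXV, htr⟩ := diag_exists X hX
  rw [htr]
  set W := star U * V with hW
  have hW1 : W * star W = 1 := by
    rw [hW, star_mul, star_star, mul_assoc, ← mul_assoc V, hV', one_mul, hU]
  have hW2 : star W * W = 1 := by
    rw [hW, star_mul, star_star, mul_assoc, ← mul_assoc U, hU', one_mul, hV]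
  have hE : star U * X * U = W * Matrix.diagonal (fun i => (x i : ℂ)) * star W := by
    rw [hXV, hW, star_mul, star_star]; simp only [mul_assoc]
  have hrow : ∀ i, ∑ j, Complex.normSq (W i j) = 1 := by
    intro i
    have := congrArg Complex.re (congrFun (congrFun hW1 i) i)
    simpa [Matrix.mul_apply, Matrix.star_apply, Complex.normSq_apply] using this
  have hcol : ∀ j, ∑ i, Complex.normSq (W i j) = 1 := by
    intro j
    have := congrArg Complex.re (congrFun (congrFun hW2 j) j)
    simpa [Matrix.mul_apply, Matrix.star_apply, Complex.normSq_apply] using this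
  have hd : ∀ i, ((star U * X * U) i i).re = ∑ j, Complex.normSq (W i j) * x j := by
    intro i
    rw [hE, Matrix.mul_apply, Complex.re_sum]
    refine Finset.sum_congr rfl fun j _ => ?_
    rw [Matrix.mul_diagonal, Matrix.star_apply]
    simp [Complex.normSq_apply]
    ring
  calc ∑ i, Real.exp ((star U * X * U) i i).re
      ≤ ∑ i, ∑ j, Complex.normSq (W i j) * Real.exp (x j) := by
        refine Finset.sum_le_sum fun i _ => ?_
        rw [hd]
        have := convexOn_exp.map_sum_le (t := Finset.univ)
          (w := fun j => Complex.normSq (W i j)) (p := x)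
          (fun j _ => Complex.normSq_nonneg _) (hrow i) (fun _ _ => Set.mem_univ _)
        simpa [smul_eq_mul] using this
    _ = ∑ j, Real.exp (x j) := by
        rw [Finset.sum_comm]
        refine Finset.sum_congr rfl fun j _ => ?_
        rw [← Finset.sum_mul, hcol, one_mul]

lemma ham_herm (H : Fin m → Matrix (Fin n) (Fin n) ℂ) (hH : ∀ i, (H i).IsHermitian)
    (θ : Fin m → ℝ) : (ham H θ).IsHermitian := by
  unfold ham Matrix.IsHermitian
  rw [Matrix.conjTranspose_sum]
  refine Finset.sum_congr rfl fun i _ => ?_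
  rw [Matrix.conjTranspose_smul, (hH i).eq, star_trivial]

lemma ham_lin (H : Fin m → Matrix (Fin n) (Fin n) ℂ) (θ φ : Fin m → ℝ) (a b : ℝ) :
    ham H (a • θ + b • φ) = a • ham H θ + b • ham H φ := by
  unfold ham
  rw [Finset.smul_sum, Finset.smul_sum, ← Finset.sum_add_distrib]
  refine Finset.sum_congr rfl fun i _ => ?_
  simp [add_smul, mul_smul]

lemma Z_pos (H : Fin m → Matrix (Fin n) (Fin n) ℂ) (hH : ∀ i, (H i).IsHermitian)
    (hn : Nonempty (Fin n)) (θ : Fin m → ℝ) : 0 < Z H θ := by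
  obtain ⟨V, x, -, -, -, h⟩ := diag_exists _ (ham_herm H hH θ)
  unfold Z
  rw [h]
  exact Finset.sum_pos (fun _ _ => Real.exp_pos _) Finset.univ_nonempty

lemma logZ_convex (H : Fin m → Matrix (Fin n) (Fin n) ℂ) (hH : ∀ i, (H i).IsHermitian)
    (hn : Nonempty (Fin n)) : ConvexOn ℝ Set.univ (logZ H) := by
  refine ⟨convex_univ, fun θ _ φ _ a b ha hb hab => ?_⟩
  obtain ⟨U, l, hU, hU', hA, htr⟩ := diag_exists _ (ham_herm H hH (a • θ + b • φ))
  have hP := Z_pos H hH hn θ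
  have hQ := Z_pos H hH hn φ
  have pP : ∑ i, Real.exp ((star U * ham H θ * U) i i).re ≤ Z H θ :=
    peierls _ (ham_herm H hH θ) U hU hU'
  have pQ : ∑ i, Real.exp ((star U * ham H φ * U) i i).re ≤ Z H φ :=
    peierls _ (ham_herm H hH φ) U hU hU'
  have hl : ∀ i, l i = a * ((star U * ham H θ * U) i i).re +
      b * ((star U * ham H φ * U) i i).re := by
    intro i
    have h1 : Matrix.diagonal (fun i => (l i : ℂ)) =
        a • (star U * ham H θ * U) + b • (star U * ham H φ * U) := by
      have : star U * ham H (a • θ + b • φ) * U = Matrix.diagonal (fun i => (l i : ℂ)) := by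
        rw [hA, mul_assoc, mul_assoc, hU, mul_one, ← mul_assoc, hU, one_mul]
      rw [← this, ham_lin]
      simp [mul_add, add_mul]
    have := congrArg Complex.re (congrFun (congrFun h1 i) i)
    simpa using this
  rw [logZ, Real.log_le_iff_le_exp (Z_pos H hH hn _)]
  rw [Z, htr]
  simp only [logZ, smul_eq_mul]
  have key : ∀ i, Real.exp (l i) ≤ Real.exp (a * Real.log (Z H θ) + b * Real.log (Z H φ)) *
      (a * (Real.exp ((star U * ham H θ * U) i i).re / Z H θ) +
       b * (Real.exp ((star U * ham H φ * U) i i).re / Z H φ)) := by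
    intro i
    have := convexOn_exp.2 (Set.mem_univ (((star U * ham H θ * U) i i).re - Real.log (Z H θ)))
      (Set.mem_univ (((star U * ham H φ * U) i i).re - Real.log (Z H φ))) ha hb hab
    simp only [smul_eq_mul, Real.exp_sub _ (Real.log _), Real.exp_log hP, Real.exp_log hQ] at this
    refine le_trans (le_of_eq ?_) (mul_le_mul_of_nonneg_left this (Real.exp_pos _).le)
    rw [← Real.exp_add, hl]
    congr 1
    ring
  refine (Finset.sum_le_sum fun i _ => key i).trans ?_
  rw [← Finset.mul_sum]
  refine mul_le_of_le_one_right (Real.exp_pos _).le ?_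
  rw [Finset.sum_add_distrib, ← Finset.mul_sum, ← Finset.mul_sum, ← Finset.sum_div,
    ← Finset.sum_div]
  calc _ ≤ a * 1 + b * 1 := by
        gcongr
        · exact (div_le_one hP).2 pP
        · exact (div_le_one hQ).2 pQ
    _ = 1 := by linarith

/-- The log-partition function is convex on `ℝ^m`; consequently, for any density matrix `η`,
the QBM objective `F` (i.e. the quantum relative entropy `S(η‖ρ_θ)` as a function of `θ`,
up to a constant) is convex. -/
theorem logZ_convex_and_F_convex (H : Fin m → Matrix (Fin n) (Fin n) ℂ)
    (hH : ∀ i, (H i).IsHermitian)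
    (η : Matrix (Fin n) (Fin n) ℂ) (hη : η.PosSemidef) (hηtr : η.trace = 1) :
    ConvexOn ℝ Set.univ (logZ H) ∧ ConvexOn ℝ Set.univ (F H η) := by
  have hn : Nonempty (Fin n) := by
    by_contra h
    rw [not_nonempty_iff] at h
    simp [Matrix.trace] at hηtr
  have h1 := logZ_convex H hH hn
  refine ⟨h1, convex_univ, fun θ hθ φ hφ a b ha hb hab => ?_⟩
  have h2 := h1.2 hθ hφ ha hb hab
  have h3 : ∑ i, (a • θ + b • φ) i * (η * H i).trace.re =
      a * ∑ i, θ i * (η * H i).trace.re + b * ∑ i, φ i * (η * H i).trace.re := by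
    rw [Finset.mul_sum, Finset.mul_sum, ← Finset.sum_add_distrib]
    refine Finset.sum_congr rfl fun i _ => ?_
    simp only [Pi.add_apply, Pi.smul_apply, smul_eq_mul]
    ring
  simp only [F, smul_eq_mul] at h2 ⊢
  rw [h3]
  linarith

end QBM3
end

section
/- Assume the Hermitian matrices H_1,…,H_m are nonzero, traceless, and pairwise orthogonal with respect to the Hilbert–Schmidt inner product (Tr[H_i H_j] = 0 for i ≠ j). If two parameter vectors a, b ∈ ℝ^m satisfy Tr[ρ_a H_i] = Tr[ρ_b H_i] for all i ∈ {1,…,m}, then ρ_a = ρ_b as matrices and a = b. In other words, the map from parameters to Gibbs-state expectation values is injective, so the stationary point of the quantum relative entropy is unique (strict convexity). -/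
open scoped Matrix.Norms.L2Operator ComplexOrder

namespace QBM4

variable {n m : ℕ}

/-- The Hamiltonian `H(θ) = ∑ i, θ i • H i`. -/
noncomputable def ham (H : Fin m → Matrix (Fin n) (Fin n) ℂ) (θ : Fin m → ℝ) :
    Matrix (Fin n) (Fin n) ℂ :=
  ∑ i, θ i • H i

/-- The partition function `Z(θ) = Tr[exp H(θ)]` (its real part). -/
noncomputable def Z (H : Fin m → Matrix (Fin n) (Fin n) ℂ) (θ : Fin m → ℝ) : ℝ :=
  (NormedSpace.exp (ham H θ)).trace.re

/-- The Gibbs state `ρ_θ = exp H(θ) / Z(θ)`. -/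
noncomputable def gibbs (H : Fin m → Matrix (Fin n) (Fin n) ℂ) (θ : Fin m → ℝ) :
    Matrix (Fin n) (Fin n) ℂ :=
  (Z H θ : ℂ)⁻¹ • NormedSpace.exp (ham H θ)

/-- The log-partition function `θ ↦ log Z(θ)`. -/
noncomputable def logZ (H : Fin m → Matrix (Fin n) (Fin n) ℂ) (θ : Fin m → ℝ) : ℝ :=
  Real.log (Z H θ)

/-- The QBM objective `F(θ) = log Z(θ) − ∑ i, θ i * Tr[η H i]`. -/
noncomputable def F (H : Fin m → Matrix (Fin n) (Fin n) ℂ) (η : Matrix (Fin n) (Fin n) ℂ)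
    (θ : Fin m → ℝ) : ℝ :=
  logZ H θ - ∑ i, θ i * (η * H i).trace.re

theorem exp_spec (A : Matrix (Fin n) (Fin n) ℂ) (hA : A.IsHermitian) :
    ∃ (U : Matrix (Fin n) (Fin n) ℂ) (α : Fin n → ℝ), U * U.conjTranspose = 1 ∧
      U.conjTranspose * U = 1 ∧
      A = U * Matrix.diagonal (fun i => (α i : ℂ)) * U.conjTranspose ∧
      NormedSpace.exp A =
        U * Matrix.diagonal (fun i => (Real.exp (α i) : ℂ)) * U.conjTranspose := by
  have h1 : (hA.eigenvectorUnitary : Matrix (Fin n) (Fin n) ℂ) *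
      (hA.eigenvectorUnitary : Matrix (Fin n) (Fin n) ℂ).conjTranspose = 1 :=
    Unitary.coe_mul_star_self hA.eigenvectorUnitary
  have h2 : (hA.eigenvectorUnitary : Matrix (Fin n) (Fin n) ℂ).conjTranspose *
      (hA.eigenvectorUnitary : Matrix (Fin n) (Fin n) ℂ) = 1 :=
    Unitary.coe_star_mul_self hA.eigenvectorUnitary
  have h3 : A = (hA.eigenvectorUnitary : Matrix (Fin n) (Fin n) ℂ) *
      Matrix.diagonal (fun i => (hA.eigenvalues i : ℂ)) *
      (hA.eigenvectorUnitary : Matrix (Fin n) (Fin n) ℂ).conjTranspose := by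
    have := hA.spectral_theorem
    rw [Unitary.conjStarAlgAut_apply] at this
    exact this
  generalize (hA.eigenvectorUnitary : Matrix (Fin n) (Fin n) ℂ) = U at h1 h2 h3
  refine ⟨U, hA.eigenvalues, h1, h2, h3, ?_⟩
  have hinv : U⁻¹ = U.conjTranspose := Matrix.inv_eq_right_inv h1
  have hU : IsUnit U := ⟨⟨U, U.conjTranspose, h1, h2⟩, rfl⟩
  generalize hA.eigenvalues = α at h3
  subst h3
  rw [← hinv, Matrix.exp_conj _ _ hU, Matrix.exp_diagonal]
  congr 3
  ext i
  rw [Pi.coe_exp, ← Complex.exp_eq_exp_ℂ, Complex.ofReal_exp]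

theorem mono_exp (x y : ℝ) : 0 ≤ (Real.exp x - Real.exp y) * (x - y) := by
  rcases le_total x y with h | h
  · exact mul_nonneg_of_nonpos_of_nonpos (sub_nonpos.2 (Real.exp_le_exp.2 h)) (sub_nonpos.2 h)
  · exact mul_nonneg (sub_nonneg.2 (Real.exp_le_exp.2 h)) (sub_nonneg.2 h)

theorem eq_of_trace (A B : Matrix (Fin n) (Fin n) ℂ) (hA : A.IsHermitian) (hB : B.IsHermitian)
    (h : ((NormedSpace.exp A - NormedSpace.exp B) * (A - B)).trace.re = 0) : A = B := by
  obtain ⟨U, α, hU1, hU2, hAU, hAe⟩ := exp_spec A hA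
  obtain ⟨V, β, hV1, hV2, hBV, hBe⟩ := exp_spec B hB
  set W := U.conjTranspose * V with hW
  have key : ∀ (p q : Fin n → ℂ), U.conjTranspose *
      (U * Matrix.diagonal p * U.conjTranspose - V * Matrix.diagonal q * V.conjTranspose) * V
      = Matrix.of fun i j => (p i - q j) * W i j := by
    intro p q
    have : U.conjTranspose *
      (U * Matrix.diagonal p * U.conjTranspose - V * Matrix.diagonal q * V.conjTranspose) * V
      = Matrix.diagonal p * W - W * Matrix.diagonal q := by
      calc _ = (U.conjTranspose * U) * Matrix.diagonal p * W
            - W * Matrix.diagonal q * (V.conjTranspose * V) := by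
              rw [hW]; noncomm_ring
        _ = _ := by rw [hU2, hV2]; simp
    rw [this]
    ext i j
    simp [Matrix.diagonal_mul, Matrix.mul_diagonal]
    ring
  have hX := key (fun i => (Real.exp (α i) : ℂ)) (fun i => (Real.exp (β i) : ℂ))
  have hY := key (fun i => (α i : ℂ)) (fun i => (β i : ℂ))
  rw [← hAe, ← hBe] at hX
  rw [← hAU, ← hBV] at hY
  have htr : ((NormedSpace.exp A - NormedSpace.exp B) * (A - B)).trace =
      ((U.conjTranspose * (NormedSpace.exp A - NormedSpace.exp B) * V) *
        (U.conjTranspose * (A - B) * V).conjTranspose).trace := by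
    have hY' : (A - B).conjTranspose = A - B := hA.sub hB
    rw [Matrix.conjTranspose_mul, Matrix.conjTranspose_mul, hY', Matrix.conjTranspose_conjTranspose]
    generalize NormedSpace.exp A - NormedSpace.exp B = X
    generalize A - B = Y
    symm
    calc _ = (U.conjTranspose * (X * (V * V.conjTranspose) * Y * U)).trace := by
          congr 1; noncomm_ring
      _ = _ := by
          rw [Matrix.trace_mul_comm, hV1, mul_one, Matrix.mul_assoc, hU1, mul_one]
  have hsum : ((NormedSpace.exp A - NormedSpace.exp B) * (A - B)).trace.re =
      ∑ i, ∑ j, (Real.exp (α i) - Real.exp (β j)) * (α i - β j) * Complex.normSq (W i j) := by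
    rw [htr, hX, hY, Matrix.trace, Complex.re_sum]
    refine Finset.sum_congr rfl fun i _ => ?_
    rw [Matrix.diag_apply, Matrix.mul_apply, Complex.re_sum]
    refine Finset.sum_congr rfl fun j _ => ?_
    rw [Matrix.conjTranspose_apply, Matrix.of_apply, Matrix.of_apply, ← Complex.ofReal_re
      ((Real.exp (α i) - Real.exp (β j)) * (α i - β j) * Complex.normSq (W i j))]
    congr 1
    push_cast
    rw [← Complex.mul_conj]
    simp
    ring
  rw [hsum] at h
  have hz : ∀ i j, ((α i : ℂ) - β j) * W i j = 0 := by
    intro i j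
    have h1 := (Finset.sum_eq_zero_iff_of_nonneg (fun i _ => Finset.sum_nonneg fun j _ =>
      mul_nonneg (mono_exp (α i) (β j)) (Complex.normSq_nonneg (W i j)))).1 h i (Finset.mem_univ _)
    have h2 := (Finset.sum_eq_zero_iff_of_nonneg (fun j _ =>
      mul_nonneg (mono_exp (α i) (β j)) (Complex.normSq_nonneg (W i j)))).1 h1 j (Finset.mem_univ _)
    rcases mul_eq_zero.1 h2 with h3 | h3
    · rcases mul_eq_zero.1 h3 with h4 | h4
      · have := Real.exp_injective (sub_eq_zero.1 h4)
        simp [this]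
      · have := sub_eq_zero.1 h4
        simp [this]
    · simp [Complex.normSq_eq_zero.1 h3]
  have hY0 : U.conjTranspose * (A - B) * V = 0 := by
    rw [hY]; ext i j; exact hz i j
  have : A - B = U * (U.conjTranspose * (A - B) * V) * V.conjTranspose := by
    calc A - B = (U * U.conjTranspose) * (A - B) * (V * V.conjTranspose) := by
          rw [hU1, hV1]; simp
      _ = _ := by noncomm_ring
  rw [hY0] at this
  exact sub_eq_zero.1 (by simpa using this)

theorem exp_trace (A : Matrix (Fin n) (Fin n) ℂ) (hA : A.IsHermitian) :
    ∃ α : Fin n → ℝ, (NormedSpace.exp A).trace = ((∑ i, Real.exp (α i) : ℝ) : ℂ) := by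
  obtain ⟨U, α, h1, h2, _, h4⟩ := exp_spec A hA
  refine ⟨α, ?_⟩
  rw [h4, Matrix.trace_mul_comm, ← Matrix.mul_assoc, h2, one_mul, Matrix.trace_diagonal]
  push_cast
  rfl

theorem ham_herm (H : Fin m → Matrix (Fin n) (Fin n) ℂ)
    (hHerm : ∀ i, (H i).IsHermitian) (a : Fin m → ℝ) : (ham H a).IsHermitian := by
  unfold ham Matrix.IsHermitian
  rw [Matrix.conjTranspose_sum]
  refine Finset.sum_congr rfl fun i _ => ?_
  rw [Matrix.conjTranspose_smul, (hHerm i).eq]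
  simp

theorem gibbs_facts (hn : 0 < n) (H : Fin m → Matrix (Fin n) (Fin n) ℂ)
    (hHerm : ∀ i, (H i).IsHermitian) (a : Fin m → ℝ) :
    (gibbs H a).trace = 1 ∧ ∃ c : ℝ,
      gibbs H a = NormedSpace.exp (ham H a - (c : ℂ) • (1 : Matrix (Fin n) (Fin n) ℂ)) := by
  obtain ⟨α, hα⟩ := exp_trace _ (ham_herm H hHerm a)
  have hZ : Z H a = ∑ i, Real.exp (α i) := by rw [Z, hα, Complex.ofReal_re]
  have hpos : 0 < Z H a := by
    rw [hZ]
    have : Nonempty (Fin n) := ⟨⟨0, hn⟩⟩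
    exact Finset.sum_pos (fun i _ => Real.exp_pos _) Finset.univ_nonempty
  constructor
  · rw [gibbs, Matrix.trace_smul, hα, ← hZ, smul_eq_mul,
      inv_mul_cancel₀ (Complex.ofReal_ne_zero.2 hpos.ne')]
  · refine ⟨Real.log (Z H a), ?_⟩
    have hd : -((Real.log (Z H a) : ℂ) • (1 : Matrix (Fin n) (Fin n) ℂ)) =
        Matrix.diagonal (fun _ => ((-Real.log (Z H a) : ℝ) : ℂ)) := by
      rw [Matrix.smul_one_eq_diagonal, Matrix.diagonal_neg]
      simp
    have he : NormedSpace.exp (-((Real.log (Z H a) : ℂ) • (1 : Matrix (Fin n) (Fin n) ℂ))) =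
        ((Z H a : ℂ)⁻¹) • 1 := by
      rw [hd, Matrix.exp_diagonal, Matrix.smul_one_eq_diagonal]
      congr 1
      ext i
      rw [Pi.coe_exp, ← Complex.exp_eq_exp_ℂ, ← Complex.ofReal_exp, Real.exp_neg,
        Real.exp_log hpos, Complex.ofReal_inv]
    rw [sub_eq_add_neg, Matrix.exp_add_of_commute, he, gibbs]
    · simp
    · exact ((Commute.one_right _).smul_right _).neg_right

/-- If the `H i` are nonzero, traceless, Hermitian, and pairwise orthogonal in the
Hilbert–Schmidt inner product, then equal Gibbs expectation values imply equal Gibbs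
states and equal parameters: the parameters-to-expectations map is injective
(uniqueness of the stationary point of the relative entropy / strict convexity). -/
theorem gibbs_expectations_injective (H : Fin m → Matrix (Fin n) (Fin n) ℂ)
    (hHerm : ∀ i, (H i).IsHermitian) (hne : ∀ i, H i ≠ 0)
    (htraceless : ∀ i, (H i).trace = 0)
    (horth : ∀ i j, i ≠ j → ((H i) * (H j)).trace = 0)
    (a b : Fin m → ℝ)
    (hexp : ∀ i, (gibbs H a * H i).trace.re = (gibbs H b * H i).trace.re) :
    gibbs H a = gibbs H b ∧ a = b := by
  suffices hab : a = b by exact ⟨by rw [hab], hab⟩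
  funext i
  have hn : 0 < n := by
    rcases Nat.eq_zero_or_pos n with h0 | h0
    · subst h0
      exact absurd (Subsingleton.elim _ _) (hne i)
    · exact h0
  obtain ⟨hta, ca, ha⟩ := gibbs_facts hn H hHerm a
  obtain ⟨htb, cb, hb⟩ := gibbs_facts hn H hHerm b
  have hherm : ∀ (θ : Fin m → ℝ) (c : ℝ),
      (ham H θ - (c : ℂ) • (1 : Matrix (Fin n) (Fin n) ℂ)).IsHermitian := by
    intro θ c
    refine (ham_herm H hHerm θ).sub ?_
    simp [Matrix.IsHermitian, Matrix.conjTranspose_smul]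
  have hlin : ∀ (θ : Fin m → ℝ), ((gibbs H a - gibbs H b) * ham H θ).trace.re = 0 := by
    intro θ
    rw [ham, Finset.mul_sum, Matrix.trace_sum, Complex.re_sum]
    refine Finset.sum_eq_zero fun j _ => ?_
    rw [Matrix.mul_smul, Matrix.trace_smul, Complex.smul_re, sub_mul, Matrix.trace_sub,
      Complex.sub_re, hexp j, sub_self, smul_zero]
  have heq := eq_of_trace _ _ (hherm a ca) (hherm b cb) (by
    rw [← ha, ← hb, Matrix.mul_sub, Matrix.mul_sub, Matrix.mul_sub]
    simp only [Matrix.trace_sub, Complex.sub_re, hlin, Matrix.mul_smul, Matrix.trace_smul, mul_one,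
      hta, htb]
    simp)
  have hproj : ∀ θ : Fin m → ℝ, (ham H θ * H i).trace = θ i • (H i * H i).trace := by
    intro θ
    rw [ham, Finset.sum_mul, Matrix.trace_sum, Finset.sum_eq_single i]
    · rw [Matrix.smul_mul, Matrix.trace_smul]
    · intro j _ hj
      rw [Matrix.smul_mul, Matrix.trace_smul, horth j i hj, smul_zero]
    · intro h; exact absurd (Finset.mem_univ _) h
  have h1 := congrArg (fun M => (M * H i).trace) heq
  simp only [sub_mul, Matrix.trace_sub, hproj, Matrix.smul_mul, one_mul, Matrix.trace_smul,
    htraceless, smul_zero, sub_zero] at h1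
  have hnz : (H i * H i).trace ≠ 0 := by
    intro h0
    have h2 : ((H i).conjTranspose * H i).trace = 0 := by rw [(hHerm i).eq]; exact h0
    exact hne i (Matrix.trace_conjTranspose_mul_self_eq_zero_iff.1 h2)
  exact smul_left_injective ℝ hnz h1

end QBM4
end

section
/- For all θ ∈ ℝ^m and all indices j, k ∈ {1,…,m}, the second partial derivative ∂²(log Z)/∂θ_j ∂θ_k exists at θ and satisfies |∂²(log Z(θ))/∂θ_j ∂θ_k| ≤ 2‖H_j‖·‖H_k‖, where ‖·‖ is the operator (spectral) norm. The same bound holds for the second partial derivatives of the QBM objective F for any density matrix η, since F differs from log Z by a linear function of θ. -/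
open scoped Matrix.Norms.L2Operator ComplexOrder

namespace QBM5

variable {n m : ℕ}

/-- The Hamiltonian `H(θ) = ∑ i, θ i • H i`. -/
noncomputable def ham (H : Fin m → Matrix (Fin n) (Fin n) ℂ) (θ : Fin m → ℝ) :
    Matrix (Fin n) (Fin n) ℂ :=
  ∑ i, θ i • H i

/-- The partition function `Z(θ) = Tr[exp H(θ)]` (its real part). -/
noncomputable def Z (H : Fin m → Matrix (Fin n) (Fin n) ℂ) (θ : Fin m → ℝ) : ℝ :=
  (NormedSpace.exp (ham H θ)).trace.re

/-- The Gibbs state `ρ_θ = exp H(θ) / Z(θ)`. -/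
noncomputable def gibbs (H : Fin m → Matrix (Fin n) (Fin n) ℂ) (θ : Fin m → ℝ) :
    Matrix (Fin n) (Fin n) ℂ :=
  (Z H θ : ℂ)⁻¹ • NormedSpace.exp (ham H θ)

/-- The log-partition function `θ ↦ log Z(θ)`. -/
noncomputable def logZ (H : Fin m → Matrix (Fin n) (Fin n) ℂ) (θ : Fin m → ℝ) : ℝ :=
  Real.log (Z H θ)

/-- The QBM objective `F(θ) = log Z(θ) − ∑ i, θ i * Tr[η H i]`. -/
noncomputable def F (H : Fin m → Matrix (Fin n) (Fin n) ℂ) (η : Matrix (Fin n) (Fin n) ℂ)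
    (θ : Fin m → ℝ) : ℝ :=
  logZ H θ - ∑ i, θ i * (η * H i).trace.re


/-- Square complex matrices. -/
abbrev Mat (n : ℕ) := Matrix (Fin n) (Fin n) ℂ

lemma contDiff_mexp {r : WithTop ℕ∞} : ContDiff ℝ r (NormedSpace.exp : Mat n → Mat n) := by
  have h : AnalyticOnNhd ℝ (NormedSpace.exp : Mat n → Mat n) Set.univ :=
    fun x _ => NormedSpace.exp_analytic x
  exact contDiffOn_univ.1 (h.contDiffOn uniqueDiffOn_univ)

lemma exp_split (X : Mat n) (s t : ℝ) :
    NormedSpace.exp ((s + t) • X) = NormedSpace.exp (s • X) * NormedSpace.exp (t • X) := by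
  rw [add_smul]
  exact Matrix.exp_add_of_commute _ _ ((Commute.refl X).smul_left s |>.smul_right t)

lemma fderiv_half (X B : Mat n) :
    fderiv ℝ (NormedSpace.exp : Mat n → Mat n) X B =
      (1 / 2 : ℝ) • (NormedSpace.exp ((1 / 2 : ℝ) • X) *
          fderiv ℝ (NormedSpace.exp : Mat n → Mat n) ((1 / 2 : ℝ) • X) B +
        fderiv ℝ (NormedSpace.exp : Mat n → Mat n) ((1 / 2 : ℝ) • X) B *
          NormedSpace.exp ((1 / 2 : ℝ) • X)) := by
  have hd : ∀ Y : Mat n, HasFDerivAt (NormedSpace.exp : Mat n → Mat n)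
      (fderiv ℝ (NormedSpace.exp : Mat n → Mat n) Y) Y := fun Y =>
    ((contDiff_mexp (r := 1)).differentiable (by simp) Y).hasFDerivAt
  have h1 : HasFDerivAt (fun Y : Mat n => (1 / 2 : ℝ) • Y)
      ((1 / 2 : ℝ) • ContinuousLinearMap.id ℝ (Mat n)) X :=
    (hasFDerivAt_id X).const_smul (1 / 2 : ℝ)
  have h2 := (hd ((1 / 2 : ℝ) • X)).comp X h1
  have h3 := h2.mul' h2
  have h4 : (fun Y : Mat n => (NormedSpace.exp ∘ fun Y : Mat n => (1 / 2 : ℝ) • Y) Y *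
      (NormedSpace.exp ∘ fun Y : Mat n => (1 / 2 : ℝ) • Y) Y) = NormedSpace.exp := by
    funext Y
    simp only [Function.comp]
    rw [← exp_split]; norm_num
  have h5 := h3.congr_of_eventuallyEq (Filter.EventuallyEq.of_eq h4.symm)
  rw [(hd X).unique h5]
  simp [smul_add]

lemma trace_fderiv_pow (X B : Mat n) (k : ℕ) :
    (fderiv ℝ (NormedSpace.exp : Mat n → Mat n) X B).trace =
      (fderiv ℝ (NormedSpace.exp : Mat n → Mat n) (((1 / 2 : ℝ) ^ k) • X) B *
        NormedSpace.exp ((1 - (1 / 2 : ℝ) ^ k) • X)).trace := by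
  induction k with
  | zero => simp
  | succ k ih =>
    rw [ih, fderiv_half, smul_smul]
    have e1 : (1 / 2 : ℝ) * (1 / 2) ^ k = (1 / 2) ^ (k + 1) := by ring
    rw [e1]
    set D := fderiv ℝ (NormedSpace.exp : Mat n → Mat n) (((1 / 2 : ℝ) ^ (k + 1)) • X) B
    have e2 : NormedSpace.exp ((1 - (1 / 2 : ℝ) ^ (k + 1)) • X) =
        NormedSpace.exp (((1 / 2 : ℝ) ^ (k + 1)) • X) * NormedSpace.exp ((1 - (1 / 2 : ℝ) ^ k) • X) := by
      rw [← exp_split]; congr 2; ring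
    have e3 : NormedSpace.exp ((1 - (1 / 2 : ℝ) ^ (k + 1)) • X) =
        NormedSpace.exp ((1 - (1 / 2 : ℝ) ^ k) • X) * NormedSpace.exp (((1 / 2 : ℝ) ^ (k + 1)) • X) := by
      rw [← exp_split]; congr 2; ring
    have e4 : (NormedSpace.exp (((1 / 2 : ℝ) ^ (k + 1)) • X) * D *
        NormedSpace.exp ((1 - (1 / 2 : ℝ) ^ k) • X)).trace =
        (D * NormedSpace.exp ((1 - (1 / 2 : ℝ) ^ (k + 1)) • X)).trace := by
      rw [e3, mul_assoc, Matrix.trace_mul_comm, mul_assoc]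
    rw [smul_mul_assoc, add_mul, Matrix.trace_smul, Matrix.trace_add, e4, mul_assoc D, ← e2,
      ← two_smul ℝ, smul_smul]
    norm_num

lemma trace_fderiv (X B : Mat n) :
    (fderiv ℝ (NormedSpace.exp : Mat n → Mat n) X B).trace =
      (B * NormedSpace.exp X).trace := by
  have hc : Continuous (fun t : ℝ => (fderiv ℝ (NormedSpace.exp : Mat n → Mat n) (t • X) B *
      NormedSpace.exp ((1 - t) • X)).trace) := by
    have h1 : Continuous (fderiv ℝ (NormedSpace.exp : Mat n → Mat n)) :=
      (contDiff_mexp (r := 1)).continuous_fderiv (by simp)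
    have h2 : Continuous (NormedSpace.exp : Mat n → Mat n) := (contDiff_mexp (r := 1)).continuous
    have h3 : Continuous (fun t : ℝ => fderiv ℝ (NormedSpace.exp : Mat n → Mat n) (t • X) B) :=
      (h1.comp (continuous_id.smul continuous_const)).clm_apply continuous_const
    have h4 : Continuous (fun t : ℝ => (NormedSpace.exp ((1 - t) • X) : Mat n)) :=
      h2.comp ((continuous_const.sub continuous_id).smul continuous_const)
    exact (h3.mul h4).matrix_trace
  have hl := (hc.tendsto 0).comp (tendsto_pow_atTop_nhds_zero_of_lt_one
    (by norm_num : (0 : ℝ) ≤ 1 / 2) (by norm_num))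
  have h0 : fderiv ℝ (NormedSpace.exp : Mat n → Mat n) 0 = 1 := hasFDerivAt_exp_zero.fderiv
  simp only [zero_smul, h0, sub_zero, one_smul] at hl
  refine tendsto_nhds_unique ?_ hl
  refine tendsto_const_nhds.congr fun k => ?_
  exact trace_fderiv_pow X B k

lemma herm_exp (X : Mat n) (hX : X.IsHermitian) :
    ∃ (U : Matrix.unitaryGroup (Fin n) ℂ) (l : Fin n → ℝ), ∀ t : ℝ,
      NormedSpace.exp (t • X) =
        (U : Mat n) * Matrix.diagonal (fun a => (Real.exp (t * l a) : ℂ)) * star (U : Mat n) := by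
  refine ⟨hX.eigenvectorUnitary, hX.eigenvalues, fun t => ?_⟩
  set U := hX.eigenvectorUnitary
  have h1 : t • X = (U : Mat n) * Matrix.diagonal (fun a => ((t * hX.eigenvalues a : ℝ) : ℂ)) *
      (U : Mat n)⁻¹ := by
    conv_lhs => rw [hX.spectral_theorem]
    rw [Unitary.conjStarAlgAut_apply, ← smul_mul_assoc, ← mul_smul_comm, Matrix.inv_eq_left_inv (Unitary.coe_star_mul_self U)]
    congr 3
    ext a b
    simp [Matrix.diagonal_apply]
  rw [h1, Matrix.exp_conj (U : Mat n) _ (Unitary.toUnits U).isUnit, Matrix.exp_diagonal,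
    Matrix.inv_eq_left_inv (Unitary.coe_star_mul_self U)]
  congr 3
  funext a
  rw [Pi.coe_exp, Complex.ofReal_exp, Complex.exp_eq_exp_ℂ]

lemma col_bound (P : Mat n) (a : Fin n) : ∑ b, ‖P b a‖ ^ 2 ≤ ‖P‖ ^ 2 := by
  have h := Matrix.l2_opNorm_mulVec P (EuclideanSpace.single a (1 : ℂ))
  rw [PiLp.norm_single, norm_one, mul_one] at h
  have h2 := pow_le_pow_left₀ (norm_nonneg _) h 2
  rw [EuclideanSpace.norm_sq_eq] at h2
  simpa using h2

lemma row_bound (P : Mat n) (a : Fin n) : ∑ b, ‖P a b‖ ^ 2 ≤ ‖P‖ ^ 2 := by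
  have h := col_bound (Matrix.conjTranspose P) a
  rw [Matrix.l2_opNorm_conjTranspose] at h
  simpa using h

lemma cs_bound (P Q : Mat n) (a : Fin n) : ∑ b, ‖P b a‖ * ‖Q a b‖ ≤ ‖P‖ * ‖Q‖ := by
  have h := Finset.sum_mul_sq_le_sq_mul_sq Finset.univ (fun b => ‖P b a‖) (fun b => ‖Q a b‖)
  refine le_of_sq_le_sq ?_ (by positivity)
  rw [mul_pow]
  exact h.trans (mul_le_mul (col_bound P a) (row_bound Q a) (by positivity) (by positivity))

lemma exp_amgm (x y u : ℝ) (h0 : 0 ≤ u) (h1 : u ≤ 1) :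
    Real.exp (u * x) * Real.exp ((1 - u) * y) ≤ u * Real.exp x + (1 - u) * Real.exp y := by
  rw [← Real.exp_add]
  have := convexOn_exp.2 (Set.mem_univ x) (Set.mem_univ y) h0 (by linarith : 0 ≤ 1 - u) (by ring)
  simpa using this

lemma unitary_norm (U : Matrix.unitaryGroup (Fin n) ℂ) (V : Matrix.unitaryGroup (Fin n) ℂ)
    (A : Mat n) : ‖star (V : Mat n) * A * (U : Mat n)‖ = ‖A‖ := by
  rw [CStarRing.norm_mul_coe_unitary, ← Unitary.coe_star, CStarRing.norm_coe_unitary_mul]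

lemma trace_exp (U : Matrix.unitaryGroup (Fin n) ℂ) (d : Fin n → ℝ) :
    ((U : Mat n) * Matrix.diagonal (fun a => (d a : ℂ)) * star (U : Mat n)).trace.re =
      ∑ a, d a := by
  rw [Matrix.trace_mul_comm, ← mul_assoc, Unitary.coe_star_mul_self, one_mul, Matrix.trace_diagonal]
  simp

lemma holder (X Y A B : Mat n) (hX : X.IsHermitian) (hY : Y.IsHermitian) (u : ℝ)
    (h0 : 0 ≤ u) (h1 : u ≤ 1) :
    ‖(A * (NormedSpace.exp (u • Y) * B * NormedSpace.exp ((1 - u) • X))).trace‖ ≤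
      ‖A‖ * ‖B‖ * (u * (NormedSpace.exp Y).trace.re + (1 - u) * (NormedSpace.exp X).trace.re) := by
  obtain ⟨U, l, hU⟩ := herm_exp Y hY
  obtain ⟨V, r, hV⟩ := herm_exp X hX
  have tY : (NormedSpace.exp Y).trace.re = ∑ a, Real.exp (l a) := by
    have := hU 1
    rw [one_smul] at this
    rw [this, trace_exp]; simp
  have tX : (NormedSpace.exp X).trace.re = ∑ a, Real.exp (r a) := by
    have := hV 1
    rw [one_smul] at this
    rw [this, trace_exp]; simp
  rw [hU, hV, tX, tY]
  set P := star (V : Mat n) * A * (U : Mat n) with hP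
  set Q := star (U : Mat n) * B * (V : Mat n) with hQ
  set D := Matrix.diagonal (fun a => (Real.exp (u * l a) : ℂ)) with hD
  set E := Matrix.diagonal (fun a => (Real.exp ((1 - u) * r a) : ℂ)) with hE
  have key : (A * ((U : Mat n) * D * star (U : Mat n) * B * ((V : Mat n) * E * star (V : Mat n)))).trace
      = (P * D * (Q * E)).trace := by
    have : A * ((U : Mat n) * D * star (U : Mat n) * B * ((V : Mat n) * E * star (V : Mat n))) =
      (A * (U : Mat n) * D * star (U : Mat n) * B * (V : Mat n) * E) * star (V : Mat n) := by
      simp only [mul_assoc]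
    rw [this, Matrix.trace_mul_comm]
    simp only [hP, hQ, mul_assoc]
  rw [key]
  have e : (P * D * (Q * E)).trace = ∑ b, ∑ a, P b a * (Real.exp (u * l a) : ℂ) *
      (Q a b * (Real.exp ((1 - u) * r b) : ℂ)) := by
    simp only [Matrix.trace, Matrix.diag, Matrix.mul_apply (M := P * D)]
    simp only [hD, hE, Matrix.mul_diagonal]
  rw [e]
  have nP : ‖P‖ = ‖A‖ := unitary_norm _ _ _
  have nQ : ‖Q‖ = ‖B‖ := unitary_norm _ _ _
  calc ‖∑ b, ∑ a, P b a * (Real.exp (u * l a) : ℂ) * (Q a b * (Real.exp ((1 - u) * r b) : ℂ))‖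
      ≤ ∑ b, ∑ a, ‖P b a * (Real.exp (u * l a) : ℂ) *
          (Q a b * (Real.exp ((1 - u) * r b) : ℂ))‖ :=
        (norm_sum_le _ _).trans (Finset.sum_le_sum fun b _ => norm_sum_le _ _)
    _ ≤ ∑ b, ∑ a, (u * (Real.exp (l a) * (‖P b a‖ * ‖Q a b‖)) +
          (1 - u) * (Real.exp (r b) * (‖Q a b‖ * ‖P b a‖))) := by
        refine Finset.sum_le_sum fun b _ => Finset.sum_le_sum fun a _ => ?_
        rw [norm_mul, norm_mul, norm_mul, Complex.norm_real, Complex.norm_real, Real.norm_eq_abs,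
          Real.norm_eq_abs, Real.abs_exp, Real.abs_exp]
        have := mul_le_mul_of_nonneg_left (exp_amgm (l a) (r b) u h0 h1)
          (mul_nonneg (norm_nonneg (P b a)) (norm_nonneg (Q a b)))
        linarith
    _ = u * ∑ a, Real.exp (l a) * ∑ b, ‖P b a‖ * ‖Q a b‖ +
          (1 - u) * ∑ b, Real.exp (r b) * ∑ a, ‖Q a b‖ * ‖P b a‖ := by
        simp only [Finset.sum_add_distrib, Finset.mul_sum]
        congr 1
        exact Finset.sum_comm
    _ ≤ u * ∑ a, Real.exp (l a) * (‖P‖ * ‖Q‖) +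
          (1 - u) * ∑ b, Real.exp (r b) * (‖Q‖ * ‖P‖) := by
        have : 0 ≤ 1 - u := by linarith
        gcongr with a _ b _
        · exact cs_bound P Q a
        · exact cs_bound Q P b
    _ = _ := by
        rw [nP, nQ, ← Finset.sum_mul, ← Finset.sum_mul]; ring

lemma duhamel_bound (X Y A : Mat n) (hX : X.IsHermitian) (hY : Y.IsHermitian) :
    ‖(A * NormedSpace.exp Y).trace - (A * NormedSpace.exp X).trace‖ ≤
      ‖A‖ * ‖Y - X‖ * max (NormedSpace.exp Y).trace.re (NormedSpace.exp X).trace.re := by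
  have hd : ∀ u : ℝ, HasDerivAt (fun u : ℝ => (A * (NormedSpace.exp (u • Y) *
      NormedSpace.exp ((1 - u) • X))).trace)
      ((A * (NormedSpace.exp (u • Y) * (Y - X) * NormedSpace.exp ((1 - u) • X))).trace) u := by
    intro u
    have h1 : HasDerivAt (fun u : ℝ => (NormedSpace.exp (u • Y) : Mat n))
      (NormedSpace.exp (u • Y) * Y) u := hasDerivAt_exp_smul_const Y u
    have h2 : HasDerivAt (fun u : ℝ => (NormedSpace.exp ((1 - u) • X) : Mat n))
      ((-1 : ℝ) • (X * NormedSpace.exp ((1 - u) • X))) u :=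
      (hasDerivAt_exp_smul_const' X (1 - u)).scomp u ((hasDerivAt_id u).const_sub 1)
    have h3 := (h1.mul h2).const_mul A
    let T : Mat n →L[ℝ] ℂ := LinearMap.toContinuousLinearMap (Matrix.traceLinearMap (Fin n) ℝ ℂ)
    have h4 := T.hasFDerivAt.comp_hasDerivAt u h3
    have e5 : A * (NormedSpace.exp (u • Y) * (Y - X) * NormedSpace.exp ((1 - u) • X)) =
        A * (NormedSpace.exp (u • Y) * Y * NormedSpace.exp ((1 - u) • X) +
          NormedSpace.exp (u • Y) * ((-1 : ℝ) • (X * NormedSpace.exp ((1 - u) • X)))) := by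
      rw [neg_smul, one_smul]
      noncomm_ring
    rw [e5]
    exact h4
  have := norm_image_sub_le_of_norm_deriv_le_segment_01' (fun u _ => (hd u).hasDerivWithinAt)
    (C := ‖A‖ * ‖Y - X‖ * max (NormedSpace.exp Y).trace.re (NormedSpace.exp X).trace.re) (by
      intro u hu
      refine (holder X Y A (Y - X) hX hY u hu.1 hu.2.le).trans ?_
      refine mul_le_mul_of_nonneg_left ?_ (by positivity)
      have a1 := mul_le_mul_of_nonneg_left (le_max_left (NormedSpace.exp Y).trace.re
        (NormedSpace.exp X).trace.re) hu.1
      have a2 := mul_le_mul_of_nonneg_left (le_max_right (NormedSpace.exp Y).trace.re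
        (NormedSpace.exp X).trace.re) (by linarith [hu.2] : 0 ≤ 1 - u)
      linarith)
  simpa using this

/-- The Hamiltonian as a continuous linear map. -/
noncomputable def hamL (H : Fin m → Mat n) : (Fin m → ℝ) →L[ℝ] Mat n :=
  LinearMap.toContinuousLinearMap
    { toFun := ham H
      map_add' := fun x y => by simp [ham, add_smul, Finset.sum_add_distrib]
      map_smul' := fun c x => by simp [ham, Finset.smul_sum, smul_smul] }

lemma hamL_apply (H : Fin m → Mat n) (x : Fin m → ℝ) : hamL H x = ham H x := rfl

lemma ham_single (H : Fin m → Mat n) (k : Fin m) : ham H (Pi.single k 1) = H k := by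
  simp [ham, Pi.single_apply]

lemma ham_herm (H : Fin m → Mat n) (hH : ∀ i, (H i).IsHermitian) (x : Fin m → ℝ) :
    (ham H x).IsHermitian := by
  unfold Matrix.IsHermitian ham
  rw [Matrix.conjTranspose_sum]
  refine Finset.sum_congr rfl fun i _ => ?_
  rw [Matrix.conjTranspose_smul, (hH i).eq]
  simp

/-- Real part of the trace against `A`. -/
noncomputable def reTr (A : Mat n) : Mat n →L[ℝ] ℝ :=
  Complex.reCLM.comp (LinearMap.toContinuousLinearMap
    ((Matrix.traceLinearMap (Fin n) ℝ ℂ).comp (LinearMap.mulLeft ℝ A)))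

lemma reTr_apply (A B : Mat n) : reTr A B = (A * B).trace.re := rfl

/-- The function `θ ↦ Re Tr[A exp H(θ)]`. -/
noncomputable def gA (H : Fin m → Mat n) (A : Mat n) (θ : Fin m → ℝ) : ℝ :=
  reTr A (NormedSpace.exp (hamL H θ))

lemma gA_eq (H : Fin m → Mat n) (A : Mat n) (θ : Fin m → ℝ) :
    gA H A θ = (A * NormedSpace.exp (ham H θ)).trace.re := rfl

lemma gA_one (H : Fin m → Mat n) : gA H 1 = Z H := by
  funext θ
  rw [gA_eq, one_mul]; rfl

lemma contDiff_gA (H : Fin m → Mat n) (A : Mat n) : ContDiff ℝ 1 (gA H A) :=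
  (reTr A).contDiff.comp (contDiff_mexp.comp (hamL H).contDiff)

lemma hasFDerivAt_Z (H : Fin m → Mat n) (θ : Fin m → ℝ) :
    HasFDerivAt (Z H) ((reTr 1).comp ((fderiv ℝ NormedSpace.exp (hamL H θ)).comp (hamL H))) θ := by
  rw [← gA_one]
  have hd := ((contDiff_mexp (n := n) (r := 1)).differentiable (by simp) (hamL H θ)).hasFDerivAt
  exact (reTr 1).hasFDerivAt.comp θ (hd.comp θ (hamL H).hasFDerivAt)

lemma fderiv_Z (H : Fin m → Mat n) (θ v : Fin m → ℝ) :
    fderiv ℝ (Z H) θ v = gA H (ham H v) θ := by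
  rw [(hasFDerivAt_Z H θ).fderiv]
  change reTr 1 (fderiv ℝ NormedSpace.exp (hamL H θ) (hamL H v)) = _
  rw [reTr_apply, one_mul, trace_fderiv]
  rfl

lemma Z_pos (hn : 0 < n) (H : Fin m → Mat n) (hH : ∀ i, (H i).IsHermitian) (θ : Fin m → ℝ) :
    0 < Z H θ := by
  obtain ⟨U, l, hU⟩ := herm_exp (ham H θ) (ham_herm H hH θ)
  have h := hU 1
  rw [one_smul] at h
  rw [Z, h, trace_exp]
  have : Nonempty (Fin n) := ⟨⟨0, hn⟩⟩
  exact Finset.sum_pos (fun a _ => Real.exp_pos _) Finset.univ_nonempty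

lemma gA_bound (hn : 0 < n) (H : Fin m → Mat n) (hH : ∀ i, (H i).IsHermitian) (A : Mat n)
    (θ : Fin m → ℝ) : |gA H A θ| ≤ ‖A‖ * Z H θ := by
  have h := holder (ham H θ) (ham H θ) A 1 (ham_herm H hH θ) (ham_herm H hH θ) 0 le_rfl zero_le_one
  have : Nonempty (Fin n) := ⟨⟨0, hn⟩⟩
  simp only [zero_smul, NormedSpace.exp_zero, mul_one, one_mul, sub_zero, one_smul, zero_mul,
    zero_add, CStarRing.norm_one] at h
  exact (Complex.abs_re_le_norm _).trans h

lemma gA_deriv_bound (H : Fin m → Mat n) (hH : ∀ i, (H i).IsHermitian)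
    (A : Mat n) (θ v : Fin m → ℝ) :
    |fderiv ℝ (gA H A) θ v| ≤ ‖A‖ * ‖ham H v‖ * Z H θ := by
  have hZc : Continuous (Z H) := by rw [← gA_one]; exact (contDiff_gA H 1).continuous
  have hline : HasDerivAt (fun s : ℝ => θ + s • v) v 0 := by
    simpa using ((hasDerivAt_id (0 : ℝ)).smul_const v).const_add θ
  have hd0 : HasFDerivAt (gA H A) (fderiv ℝ (gA H A) θ) (θ + (0 : ℝ) • v) := by
    rw [zero_smul, add_zero]
    exact ((contDiff_gA H A).differentiable (by simp) θ).hasFDerivAt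
  have hd := hd0.comp_hasDerivAt (0 : ℝ) hline
  have hZ0 : 0 ≤ Z H θ := by
    obtain ⟨U, l, hU⟩ := herm_exp (ham H θ) (ham_herm H hH θ)
    have h := hU 1
    rw [one_smul] at h
    rw [Z, h, trace_exp]
    positivity
  have key : ∀ ε : ℝ, 0 < ε → |fderiv ℝ (gA H A) θ v| ≤ ‖A‖ * ‖ham H v‖ * (Z H θ + ε) := by
    intro ε hε
    rw [← Real.norm_eq_abs]
    refine hd.le_of_lip' (by positivity) ?_
    have hc : Continuous (fun s : ℝ => Z H (θ + s • v)) := by fun_prop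
    have hev := (hc.tendsto 0).eventually (gt_mem_nhds
      (show Z H (θ + (0 : ℝ) • v) < Z H θ + ε by simpa using hε))
    filter_upwards [hev] with s hs
    have hb := duhamel_bound (ham H θ) (ham H (θ + s • v)) A (ham_herm H hH _) (ham_herm H hH _)
    have e : ham H (θ + s • v) - ham H θ = s • ham H v := by
      simp only [← hamL_apply, map_add, map_smul, add_sub_cancel_left]
    rw [e, norm_smul] at hb
    have hm : max (Z H (θ + s • v)) (Z H θ) ≤ Z H θ + ε := max_le hs.le (by linarith)
    have hre : ‖gA H A (θ + s • v) - gA H A θ‖ ≤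
        ‖A‖ * (‖s‖ * ‖ham H v‖) * max (Z H (θ + s • v)) (Z H θ) := by
      refine le_trans ?_ hb
      rw [gA_eq, gA_eq, ← Complex.sub_re, Real.norm_eq_abs]
      exact Complex.abs_re_le_norm _
    simp only [Function.comp, zero_smul, add_zero, sub_zero]
    calc _ ≤ _ := hre
      _ ≤ ‖A‖ * (‖s‖ * ‖ham H v‖) * (Z H θ + ε) := mul_le_mul_of_nonneg_left hm (by positivity)
      _ = _ := by ring
  have ht : Filter.Tendsto (fun ε : ℝ => ‖A‖ * ‖ham H v‖ * (Z H θ + ε)) (nhdsWithin 0 (Set.Ioi 0))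
      (nhds (‖A‖ * ‖ham H v‖ * Z H θ)) := by
    have : Continuous (fun ε : ℝ => ‖A‖ * ‖ham H v‖ * (Z H θ + ε)) := by fun_prop
    have h2 := (this.tendsto 0).mono_left (nhdsWithin_le_nhds (s := Set.Ioi 0))
    simpa using h2
  refine ge_of_tendsto ht ?_
  filter_upwards [self_mem_nhdsWithin] with ε hε using key ε hε

lemma hasFDerivAt_logZ (hn : 0 < n) (H : Fin m → Mat n) (hH : ∀ i, (H i).IsHermitian)
    (θ : Fin m → ℝ) : HasFDerivAt (logZ H) ((Z H θ)⁻¹ • fderiv ℝ (Z H) θ) θ :=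
  (hasFDerivAt_Z H θ).differentiableAt.hasFDerivAt.log (Z_pos hn H hH θ).ne'

lemma logZ_part (hn : 0 < n) (H : Fin m → Mat n) (hH : ∀ i, (H i).IsHermitian)
    (θ : Fin m → ℝ) (j k : Fin m) :
    DifferentiableAt ℝ (fun θ' => fderiv ℝ (logZ H) θ' (Pi.single k 1)) θ ∧
      |fderiv ℝ (fun θ' => fderiv ℝ (logZ H) θ' (Pi.single k 1)) θ (Pi.single j 1)| ≤
        2 * ‖H j‖ * ‖H k‖ := by
  have e : (fun θ' => fderiv ℝ (logZ H) θ' (Pi.single k 1)) =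
      fun θ' => gA H (H k) θ' * (Inv.inv ∘ Z H) θ' := by
    funext θ'
    rw [(hasFDerivAt_logZ hn H hH θ').fderiv]
    simp [fderiv_Z, ham_single, mul_comm]
  rw [e]
  have hz := Z_pos hn H hH θ
  have hg : HasFDerivAt (gA H (H k)) (fderiv ℝ (gA H (H k)) θ) θ :=
    ((contDiff_gA H (H k)).differentiable (by simp) θ).hasFDerivAt
  have hZ := (hasFDerivAt_Z H θ).differentiableAt.hasFDerivAt
  have hd := hg.fun_mul ((hasDerivAt_inv hz.ne').comp_hasFDerivAt θ hZ)
  refine ⟨hd.differentiableAt, ?_⟩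
  rw [hd.fderiv]
  have b1 := gA_deriv_bound H hH (H k) θ (Pi.single j 1)
  have b2 := gA_bound hn H hH (H k) θ
  have b3 := gA_bound hn H hH (H j) θ
  have b4 := fderiv_Z H θ (Pi.single j 1)
  rw [ham_single] at b1 b4
  simp only [ContinuousLinearMap.smul_apply, ContinuousLinearMap.add_apply, Function.comp, smul_eq_mul, b4]
  set a := fderiv ℝ (gA H (H k)) θ (Pi.single j 1)
  set b := gA H (H k) θ
  set c := gA H (H j) θ
  set z := Z H θ
  have hbc : |b * c| ≤ (‖H k‖ * z) * (‖H j‖ * z) := by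
    rw [abs_mul]
    exact mul_le_mul b2 b3 (abs_nonneg _) (by positivity)
  have hza : |z * a| ≤ z * (‖H k‖ * ‖H j‖ * z) := by
    rw [abs_mul, abs_of_pos hz]
    exact mul_le_mul_of_nonneg_left b1 hz.le
  have hsum : |z * a - b * c| ≤ 2 * ‖H j‖ * ‖H k‖ * z ^ 2 := by
    have := abs_sub (z * a) (b * c)
    nlinarith
  have : |(z * a - b * c) / z ^ 2| ≤ 2 * ‖H j‖ * ‖H k‖ := by
    rw [abs_div, abs_of_pos (pow_pos hz 2), div_le_iff₀ (pow_pos hz 2)]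
    exact hsum
  convert this using 2
  field_simp
  ring

/-- The second partial derivatives `∂²(log Z)/∂θ_j ∂θ_k` exist and are bounded in absolute
value by `2‖H_j‖·‖H_k‖` (operator norm); the same holds for the QBM objective `F`, which
differs from `log Z` by a linear function of `θ`. -/
theorem second_partials_exist_and_bounded (H : Fin m → Matrix (Fin n) (Fin n) ℂ)
    (hHerm : ∀ i, (H i).IsHermitian)
    (η : Matrix (Fin n) (Fin n) ℂ) (hη : η.PosSemidef) (hηtr : η.trace = 1)
    (θ : Fin m → ℝ) (j k : Fin m) :
    (DifferentiableAt ℝ (fun θ' => fderiv ℝ (logZ H) θ' (Pi.single k 1)) θ ∧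
      |fderiv ℝ (fun θ' => fderiv ℝ (logZ H) θ' (Pi.single k 1)) θ (Pi.single j 1)| ≤
        2 * ‖H j‖ * ‖H k‖) ∧
    (DifferentiableAt ℝ (fun θ' => fderiv ℝ (F H η) θ' (Pi.single k 1)) θ ∧
      |fderiv ℝ (fun θ' => fderiv ℝ (F H η) θ' (Pi.single k 1)) θ (Pi.single j 1)| ≤
        2 * ‖H j‖ * ‖H k‖) := by
  have hn : 0 < n := by
    rcases Nat.eq_zero_or_pos n with h | h
    · subst h
      simp [Matrix.trace] at hηtr
    · exact h
  have h1 := logZ_part hn H hHerm θ j k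
  refine ⟨h1, ?_⟩
  let L : (Fin m → ℝ) →L[ℝ] ℝ :=
    ∑ i, (η * H i).trace.re • ContinuousLinearMap.proj (R := ℝ) (φ := fun _ : Fin m => ℝ) i
  have hF : F H η = fun x => logZ H x - L x := by
    funext x
    simp [F, L, mul_comm]
  have e : (fun θ' => fderiv ℝ (F H η) θ' (Pi.single k 1)) =
      fun θ' => fderiv ℝ (logZ H) θ' (Pi.single k 1) - L (Pi.single k 1) := by
    funext θ'
    have hd := (hasFDerivAt_logZ hn H hHerm θ').differentiableAt.hasFDerivAt.fun_sub
      (L.hasFDerivAt (x := θ'))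
    rw [hF, hd.fderiv]
    rfl
  rw [e]
  refine ⟨h1.1.sub_const _, ?_⟩
  rw [fderiv_sub_const]
  exact h1.2

end QBM5
end

section
/- The gradient map G : ℝ^m → ℝ^m defined by G(θ)_i = Tr[ρ_θ H_i] is Lipschitz continuous with Lipschitz constant L = 2m·max_{1≤j≤m} ‖H_j‖² with respect to the Euclidean norm on ℝ^m. Consequently, for any density matrix η the QBM objective F (and hence the quantum relative entropy S(η‖ρ_θ) as a function of θ) is L-smooth with L = 2m·max_j ‖H_j‖². -/
open scoped Matrix.Norms.L2Operator ComplexOrder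

namespace QBM6

variable {n m : ℕ}

/-- The Hamiltonian `H(θ) = ∑ i, θ i • H i`. -/
noncomputable def ham (H : Fin m → Matrix (Fin n) (Fin n) ℂ) (θ : Fin m → ℝ) :
    Matrix (Fin n) (Fin n) ℂ :=
  ∑ i, θ i • H i

/-- The partition function `Z(θ) = Tr[exp H(θ)]` (its real part). -/
noncomputable def Z (H : Fin m → Matrix (Fin n) (Fin n) ℂ) (θ : Fin m → ℝ) : ℝ :=
  (NormedSpace.exp (ham H θ)).trace.re

/-- The Gibbs state `ρ_θ = exp H(θ) / Z(θ)`. -/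
noncomputable def gibbs (H : Fin m → Matrix (Fin n) (Fin n) ℂ) (θ : Fin m → ℝ) :
    Matrix (Fin n) (Fin n) ℂ :=
  (Z H θ : ℂ)⁻¹ • NormedSpace.exp (ham H θ)

/-- The log-partition function `θ ↦ log Z(θ)`. -/
noncomputable def logZ (H : Fin m → Matrix (Fin n) (Fin n) ℂ) (θ : Fin m → ℝ) : ℝ :=
  Real.log (Z H θ)

/-- The QBM objective `F(θ) = log Z(θ) − ∑ i, θ i * Tr[η H i]`. -/
noncomputable def F (H : Fin m → Matrix (Fin n) (Fin n) ℂ) (η : Matrix (Fin n) (Fin n) ℂ)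
    (θ : Fin m → ℝ) : ℝ :=
  logZ H θ - ∑ i, θ i * (η * H i).trace.re

/-- The Gibbs expectation-value (gradient) map `G(θ)_i = Tr[ρ_θ H_i]`,
as a map of Euclidean spaces. -/
noncomputable def G (H : Fin m → Matrix (Fin n) (Fin n) ℂ)
    (θ : EuclideanSpace ℝ (Fin m)) : EuclideanSpace ℝ (Fin m) :=
  WithLp.toLp 2 fun i => (gibbs H θ.ofLp * H i).trace.re

/-- The gradient of the QBM objective, `∇F(θ)_i = Tr[ρ_θ H_i] − Tr[η H_i]`. -/
noncomputable def gradF (H : Fin m → Matrix (Fin n) (Fin n) ℂ)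
    (η : Matrix (Fin n) (Fin n) ℂ) (θ : EuclideanSpace ℝ (Fin m)) :
    EuclideanSpace ℝ (Fin m) :=
  WithLp.toLp 2 fun i => (gibbs H θ.ofLp * H i).trace.re - (η * H i).trace.re

theorem exp_sub_le (a b : ℝ) :
    |Real.exp a - Real.exp b| ≤ |a - b| * ((Real.exp a + Real.exp b) / 2) := by
  wlog h : b ≤ a generalizing a b
  · have := this b a (le_of_not_ge h)
    rw [abs_sub_comm, abs_sub_comm a b, add_comm (Real.exp a)]
    exact this
  have h1 : 0 ≤ a - b := by linarith
  have h2 : (0:ℝ) ≤ Real.exp (a - b) - 1 := by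
    have := Real.one_le_exp h1
    linarith
  have h3 := Real.le_log_one_add_of_nonneg h2
  have h4 : 1 + (Real.exp (a - b) - 1) = Real.exp (a - b) := by ring
  rw [h4, Real.log_exp, div_le_iff₀ (by linarith)] at h3
  have h5 : Real.exp a = Real.exp (a - b) * Real.exp b := by
    rw [← Real.exp_add]; congr 1; ring
  have hb := Real.exp_pos b
  rw [abs_of_nonneg h1, abs_of_nonneg (by have := Real.exp_le_exp.2 h; linarith), h5]
  nlinarith

theorem col_sq_le (X : Matrix (Fin n) (Fin n) ℂ) (j : Fin n) :
    ∑ i, ‖X i j‖ ^ 2 ≤ ‖X‖ ^ 2 := by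
  have h := Matrix.l2_opNorm_mulVec X (EuclideanSpace.single j (1 : ℂ))
  have h2 : ‖EuclideanSpace.single j (1 : ℂ)‖ = 1 := by simp
  rw [h2, mul_one] at h
  have h3 := pow_le_pow_left₀ (norm_nonneg _) h 2
  rw [EuclideanSpace.norm_sq_eq] at h3
  simpa using h3

theorem row_sq_le (X : Matrix (Fin n) (Fin n) ℂ) (i : Fin n) :
    ∑ j, ‖X i j‖ ^ 2 ≤ ‖X‖ ^ 2 := by
  have h := col_sq_le X.conjTranspose i
  rw [Matrix.l2_opNorm_conjTranspose] at h
  simpa [Matrix.conjTranspose_apply] using h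

theorem entry_le (X : Matrix (Fin n) (Fin n) ℂ) (i j : Fin n) : ‖X i j‖ ≤ ‖X‖ := by
  have h := row_sq_le X i
  have h2 : ‖X i j‖ ^ 2 ≤ ∑ j, ‖X i j‖ ^ 2 :=
    Finset.single_le_sum (f := fun j => ‖X i j‖ ^ 2) (fun _ _ => by positivity)
      (Finset.mem_univ j)
  exact le_of_sq_le_sq (h2.trans h) (norm_nonneg _)

theorem row_mul_col_le (X M : Matrix (Fin n) (Fin n) ℂ) (i : Fin n) :
    ∑ j, ‖X i j‖ * ‖M j i‖ ≤ ‖X‖ * ‖M‖ := by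
  refine (Real.sum_mul_le_sqrt_mul_sqrt _ _ _).trans ?_
  gcongr
  · exact Real.sqrt_le_iff.2 ⟨norm_nonneg _, row_sq_le X i⟩
  · exact Real.sqrt_le_iff.2 ⟨norm_nonneg _, col_sq_le M i⟩

theorem spectral_form (A : Matrix (Fin n) (Fin n) ℂ) (hA : A.IsHermitian) :
    ∃ U ∈ unitary (Matrix (Fin n) (Fin n) ℂ), ∃ α : Fin n → ℝ,
      A = U * Matrix.diagonal (fun i => (α i : ℂ)) * star U ∧
      NormedSpace.exp A = U * Matrix.diagonal (fun i => (Real.exp (α i) : ℂ)) * star U := by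
  have h1 := hA.spectral_theorem
  rw [Unitary.conjStarAlgAut_apply] at h1
  set U := hA.eigenvectorUnitary with hU
  refine ⟨U, U.2, hA.eigenvalues, h1, ?_⟩
  have h2 : (U : Matrix (Fin n) (Fin n) ℂ) * star (U : Matrix (Fin n) (Fin n) ℂ) = 1 :=
    (Unitary.mem_iff.1 U.2).2
  have h3 : (U : Matrix (Fin n) (Fin n) ℂ)⁻¹ = star (U : Matrix (Fin n) (Fin n) ℂ) :=
    Matrix.inv_eq_right_inv h2
  have h4 : IsUnit (U : Matrix (Fin n) (Fin n) ℂ) :=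
    IsUnit.of_mul_eq_one _ h2
  conv_lhs => rw [h1]
  rw [← h3]
  erw [Matrix.exp_conj _ _ h4]
  rw [Matrix.exp_diagonal]
  congr 3
  ext i
  rw [Pi.coe_exp]
  simp [Complex.exp_eq_exp_ℂ]

theorem trace_conj (U : Matrix (Fin n) (Fin n) ℂ) (hU : U ∈ unitary (Matrix (Fin n) (Fin n) ℂ))
    (p : Fin n → ℂ) : (U * Matrix.diagonal p * star U).trace = ∑ i, p i := by
  rw [Matrix.trace_mul_comm, ← mul_assoc, (Unitary.mem_iff.1 hU).1, one_mul,
    Matrix.trace_diagonal]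

/-- entries of `U* (A - B) W` -/
theorem cross_entry (U W : Matrix (Fin n) (Fin n) ℂ)
    (hU : U ∈ unitary (Matrix (Fin n) (Fin n) ℂ)) (hW : W ∈ unitary (Matrix (Fin n) (Fin n) ℂ))
    (p q : Fin n → ℂ) (i j : Fin n) :
    (star U * (U * Matrix.diagonal p * star U - W * Matrix.diagonal q * star W) * W) i j
      = (p i - q j) * (star U * W) i j := by
  have h : star U * (U * Matrix.diagonal p * star U - W * Matrix.diagonal q * star W) * W
      = Matrix.diagonal p * (star U * W) - (star U * W) * Matrix.diagonal q := by
    calc _ = (star U * U) * Matrix.diagonal p * (star U * W)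
          - (star U * W) * Matrix.diagonal q * (star W * W) := by noncomm_ring
      _ = _ := by rw [(Unitary.mem_iff.1 hU).1, (Unitary.mem_iff.1 hW).1, one_mul, mul_one]
  rw [h, Matrix.sub_apply, Matrix.diagonal_mul, Matrix.mul_diagonal]
  ring

theorem norm_cross (U W V : Matrix (Fin n) (Fin n) ℂ)
    (hU : U ∈ unitary (Matrix (Fin n) (Fin n) ℂ)) (hW : W ∈ unitary (Matrix (Fin n) (Fin n) ℂ)) :
    ‖star U * V * W‖ = ‖V‖ := by
  rw [CStarRing.norm_mul_mem_unitary _ hW, CStarRing.norm_mem_unitary_mul _ (Unitary.star_mem hU)]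

theorem trace_diff (U W K : Matrix (Fin n) (Fin n) ℂ)
    (hU : U ∈ unitary (Matrix (Fin n) (Fin n) ℂ)) (hW : W ∈ unitary (Matrix (Fin n) (Fin n) ℂ))
    (p q : Fin n → ℂ) :
    ((U * Matrix.diagonal p * star U - W * Matrix.diagonal q * star W) * K).trace
      = ∑ i, ∑ j, (p i - q j) * (star U * W) i j * (star W * K * U) j i := by
  have h : ((U * Matrix.diagonal p * star U - W * Matrix.diagonal q * star W) * K).trace
    = ((star U * (U * Matrix.diagonal p * star U - W * Matrix.diagonal q * star W) * W)
      * (star W * K * U)).trace := by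
    set D := U * Matrix.diagonal p * star U - W * Matrix.diagonal q * star W
    calc (D * K).trace = (D * (W * star W) * K * (U * star U)).trace := by
          rw [(Unitary.mem_iff.1 hU).2, (Unitary.mem_iff.1 hW).2, mul_one, mul_one]
      _ = ((D * W * star W * K * U) * star U).trace := by simp only [mul_assoc]
      _ = (star U * (D * W * star W * K * U)).trace := Matrix.trace_mul_comm _ _
      _ = _ := by simp only [mul_assoc]
  rw [h, Matrix.trace]
  refine Finset.sum_congr rfl fun i _ => ?_
  rw [Matrix.diag_apply, Matrix.mul_apply]
  refine Finset.sum_congr rfl fun j _ => ?_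
  rw [cross_entry U W hU hW]

/-- Main perturbation bound for states `e^{α'}`, `e^{β'}` written in their eigenbases. -/
theorem trace_bound (U W K : Matrix (Fin n) (Fin n) ℂ)
    (hU : U ∈ unitary (Matrix (Fin n) (Fin n) ℂ)) (hW : W ∈ unitary (Matrix (Fin n) (Fin n) ℂ))
    (α β : Fin n → ℝ) (hα : ∑ i, Real.exp (α i) = 1) (hβ : ∑ i, Real.exp (β i) = 1) :
    ‖((U * Matrix.diagonal (fun i => (Real.exp (α i) : ℂ)) * star U
        - W * Matrix.diagonal (fun i => (Real.exp (β i) : ℂ)) * star W) * K).trace‖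
      ≤ ‖U * Matrix.diagonal (fun i => (α i : ℂ)) * star U
        - W * Matrix.diagonal (fun i => (β i : ℂ)) * star W‖ * ‖K‖ := by
  rw [trace_diff U W K hU hW]
  set V := U * Matrix.diagonal (fun i => (α i : ℂ)) * star U
        - W * Matrix.diagonal (fun i => (β i : ℂ)) * star W with hV
  set X := star U * V * W with hX
  set M := star W * K * U with hM
  have hXn : ‖X‖ = ‖V‖ := norm_cross U W V hU hW
  have hMn : ‖M‖ = ‖K‖ := norm_cross W U K hW hU
  have hXe : ∀ i j, X i j = ((α i : ℂ) - β j) * (star U * W) i j := fun i j =>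
    cross_entry U W hU hW _ _ i j
  have key : ∀ i j, ‖((Real.exp (α i) : ℂ) - Real.exp (β j)) * (star U * W) i j * M j i‖
      ≤ Real.exp (α i) / 2 * (‖X i j‖ * ‖M j i‖) + Real.exp (β j) / 2 * (‖X i j‖ * ‖M j i‖) := by
    intro i j
    rw [norm_mul, norm_mul, hXe, norm_mul, ← Complex.ofReal_sub, ← Complex.ofReal_sub,
      Complex.norm_real, Complex.norm_real, Real.norm_eq_abs, Real.norm_eq_abs]
    have h1 := exp_sub_le (α i) (β j)
    have h2 : 0 ≤ ‖(star U * W) i j‖ * ‖M j i‖ := by positivity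
    nlinarith [mul_le_mul_of_nonneg_right h1 h2]
  calc _ ≤ ∑ i, ∑ j, ‖((Real.exp (α i) : ℂ) - Real.exp (β j)) * (star U * W) i j * M j i‖ :=
        (norm_sum_le _ _).trans (Finset.sum_le_sum fun i _ => norm_sum_le _ _)
    _ ≤ ∑ i, ∑ j, (Real.exp (α i) / 2 * (‖X i j‖ * ‖M j i‖)
          + Real.exp (β j) / 2 * (‖X i j‖ * ‖M j i‖)) :=
        Finset.sum_le_sum fun i _ => Finset.sum_le_sum fun j _ => key i j
    _ = ∑ i, Real.exp (α i) / 2 * ∑ j, ‖X i j‖ * ‖M j i‖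
          + ∑ j, Real.exp (β j) / 2 * ∑ i, ‖M j i‖ * ‖X i j‖ := by
        simp only [Finset.sum_add_distrib, Finset.mul_sum]
        congr 1
        rw [Finset.sum_comm]
        simp only [mul_comm (‖M _ _‖)]
    _ ≤ ∑ i, Real.exp (α i) / 2 * (‖X‖ * ‖M‖) + ∑ j, Real.exp (β j) / 2 * (‖M‖ * ‖X‖) := by
        gcongr with i _ j _
        · exact row_mul_col_le X M i
        · exact row_mul_col_le M X j
    _ = ‖V‖ * ‖K‖ := by
        rw [← Finset.sum_mul, ← Finset.sum_mul, ← Finset.sum_div, ← Finset.sum_div, hα, hβ,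
          hXn, hMn]
        ring

/-- One-sided bound on partition functions (Peierls). -/
theorem partition_bound (U W : Matrix (Fin n) (Fin n) ℂ)
    (hU : U ∈ unitary (Matrix (Fin n) (Fin n) ℂ)) (hW : W ∈ unitary (Matrix (Fin n) (Fin n) ℂ))
    (α β : Fin n → ℝ) :
    ∑ j, Real.exp (β j) ≤ Real.exp ‖U * Matrix.diagonal (fun i => (α i : ℂ)) * star U
        - W * Matrix.diagonal (fun i => (β i : ℂ)) * star W‖ * ∑ i, Real.exp (α i) := by
  set V := U * Matrix.diagonal (fun i => (α i : ℂ)) * star U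
        - W * Matrix.diagonal (fun i => (β i : ℂ)) * star W with hV
  set X := star U * V * W with hX
  set Q := star U * W with hQ
  have hQu : Q ∈ unitary (Matrix (Fin n) (Fin n) ℂ) := mul_mem (Unitary.star_mem hU) hW
  have hXn : ‖X‖ = ‖V‖ := norm_cross U W V hU hW
  have hXe : ∀ i j, X i j = ((α i : ℂ) - β j) * Q i j := fun i j =>
    cross_entry U W hU hW _ _ i j
  have hcol : ∀ j, ∑ i, ‖Q i j‖ ^ 2 = 1 := by
    intro j
    have h := congrFun (congrFun (Unitary.mem_iff.1 hQu).1 j) j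
    rw [Matrix.mul_apply, Matrix.one_apply_eq] at h
    have h2 : ((∑ i, ‖Q i j‖ ^ 2 : ℝ) : ℂ) = 1 := by
      rw [← h]
      push_cast
      refine Finset.sum_congr rfl fun i _ => ?_
      rw [Matrix.star_apply]
      exact (Complex.conj_mul' _).symm
    exact_mod_cast h2
  have hrow : ∀ i, ∑ j, ‖Q i j‖ ^ 2 = 1 := by
    intro j
    have h := congrFun (congrFun (Unitary.mem_iff.1 hQu).2 j) j
    rw [Matrix.mul_apply, Matrix.one_apply_eq] at h
    have h2 : ((∑ i, ‖Q j i‖ ^ 2 : ℝ) : ℂ) = 1 := by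
      rw [← h]
      push_cast
      refine Finset.sum_congr rfl fun i _ => ?_
      rw [Matrix.star_apply]
      exact (Complex.mul_conj' _).symm
    exact_mod_cast h2
  have hd : ∀ j, β j ≤ ‖V‖ + ∑ i, ‖Q i j‖ ^ 2 * α i := by
    intro j
    have h1 : (star Q * X) j j = ((∑ i, ‖Q i j‖ ^ 2 * α i - β j : ℝ) : ℂ) := by
      have : ∑ i, ‖Q i j‖ ^ 2 * α i - β j = ∑ i, ‖Q i j‖ ^ 2 * (α i - β j) := by
        simp only [mul_sub, Finset.sum_sub_distrib]
        rw [← Finset.sum_mul, hcol, one_mul]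
      rw [this, Matrix.mul_apply]
      push_cast
      refine Finset.sum_congr rfl fun i _ => ?_
      rw [Matrix.star_apply, hXe, ← Complex.conj_mul']
      simp only [RCLike.star_def]
      ring
    have h2 := entry_le (star Q * X) j j
    rw [CStarRing.norm_mem_unitary_mul _ (Unitary.star_mem hQu), hXn, h1, Complex.norm_real,
      Real.norm_eq_abs, abs_le] at h2
    linarith [h2.1]
  calc ∑ j, Real.exp (β j)
      ≤ ∑ j, Real.exp ‖V‖ * ∑ i, ‖Q i j‖ ^ 2 * Real.exp (α i) := by
        refine Finset.sum_le_sum fun j _ => ?_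
        refine (Real.exp_le_exp.2 (hd j)).trans ?_
        rw [Real.exp_add]
        gcongr
        exact convexOn_exp.map_sum_le (t := Finset.univ) (w := fun i => ‖Q i j‖ ^ 2)
          (p := α) (fun _ _ => by positivity) (hcol j) (fun _ _ => Set.mem_univ _)
    _ = _ := by
        rw [← Finset.mul_sum, Finset.sum_comm]
        congr 1
        refine Finset.sum_congr rfl fun i _ => ?_
        rw [← Finset.sum_mul, hrow, one_mul]

theorem conj_shift (U : Matrix (Fin n) (Fin n) ℂ)
    (hU : U ∈ unitary (Matrix (Fin n) (Fin n) ℂ)) (α : Fin n → ℝ) (c : ℝ) :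
    U * Matrix.diagonal (fun i => ((α i - c : ℝ) : ℂ)) * star U
      = U * Matrix.diagonal (fun i => (α i : ℂ)) * star U - (c : ℂ) • 1 := by
  have h : Matrix.diagonal (fun i => ((α i - c : ℝ) : ℂ))
      = Matrix.diagonal (fun i => (α i : ℂ)) - (c : ℂ) • (1 : Matrix (Fin n) (Fin n) ℂ) := by
    rw [Matrix.smul_one_eq_diagonal, Matrix.diagonal_sub]
    simp
  rw [h, mul_sub, sub_mul, mul_smul_comm, smul_mul_assoc, mul_one, (Unitary.mem_iff.1 hU).2]

theorem gibbs_bound (A B K : Matrix (Fin n) (Fin n) ℂ) (hn : 0 < n)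
    (hA : A.IsHermitian) (hB : B.IsHermitian) :
    ‖((((NormedSpace.exp A).trace.re : ℂ)⁻¹ • NormedSpace.exp A
      - ((NormedSpace.exp B).trace.re : ℂ)⁻¹ • NormedSpace.exp B) * K).trace‖
      ≤ 2 * ‖A - B‖ * ‖K‖ := by
  haveI : Nonempty (Fin n) := ⟨⟨0, hn⟩⟩
  obtain ⟨U, hU, α, hA1, hA2⟩ := spectral_form A hA
  obtain ⟨W, hW, β, hB1, hB2⟩ := spectral_form B hB
  have tr : ∀ (U : Matrix (Fin n) (Fin n) ℂ) (_ : U ∈ unitary (Matrix (Fin n) (Fin n) ℂ))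
      (α : Fin n → ℝ), (U * Matrix.diagonal (fun i => (Real.exp (α i) : ℂ)) * star U).trace.re
        = ∑ i, Real.exp (α i) := by
    intro U hU α
    rw [trace_conj U hU, ← Complex.ofReal_sum, Complex.ofReal_re]
  have pos : ∀ α : Fin n → ℝ, 0 < ∑ i, Real.exp (α i) := fun α =>
    Finset.sum_pos (fun _ _ => Real.exp_pos _) Finset.univ_nonempty
  have nrm : ∀ (U : Matrix (Fin n) (Fin n) ℂ) (α : Fin n → ℝ),
      ((∑ i, Real.exp (α i) : ℝ) : ℂ)⁻¹ •
        (U * Matrix.diagonal (fun i => (Real.exp (α i) : ℂ)) * star U)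
      = U * Matrix.diagonal
        (fun i => (Real.exp (α i - Real.log (∑ i, Real.exp (α i))) : ℂ)) * star U := by
    intro U α
    rw [← smul_mul_assoc, ← mul_smul_comm, ← Matrix.diagonal_smul]
    congr 3
    ext i
    rw [Real.exp_sub, Real.exp_log (pos α)]
    simp [div_eq_inv_mul]
  have one : ∀ α : Fin n → ℝ,
      ∑ i, Real.exp (α i - Real.log (∑ i, Real.exp (α i))) = 1 := by
    intro α
    simp only [Real.exp_sub, Real.exp_log (pos α)]
    rw [← Finset.sum_div, div_self (pos α).ne']
  have lg1 : Real.log (∑ i, Real.exp (β i)) ≤ ‖A - B‖ + Real.log (∑ i, Real.exp (α i)) := by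
    have h := partition_bound U W hU hW α β
    rw [← hA1, ← hB1] at h
    have h2 := Real.log_le_log (pos β) h
    rwa [Real.log_mul (Real.exp_pos _).ne' (pos α).ne', Real.log_exp] at h2
  have lg2 : Real.log (∑ i, Real.exp (α i)) ≤ ‖A - B‖ + Real.log (∑ i, Real.exp (β i)) := by
    have h := partition_bound W U hW hU β α
    rw [← hA1, ← hB1, norm_sub_rev] at h
    have h2 := Real.log_le_log (pos α) h
    rwa [Real.log_mul (Real.exp_pos _).ne' (pos β).ne', Real.log_exp] at h2
  rw [hA2, hB2, tr U hU, tr W hW, nrm, nrm]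
  refine (trace_bound U W K hU hW _ _ (one α) (one β)).trans ?_
  gcongr
  rw [conj_shift U hU, conj_shift W hW, ← hA1, ← hB1]
  set a := Real.log (∑ i, Real.exp (α i))
  set b := Real.log (∑ i, Real.exp (β i))
  have e : A - (a : ℂ) • (1 : Matrix (Fin n) (Fin n) ℂ) - (B - (b : ℂ) • 1)
      = (A - B) + ((b - a : ℝ) : ℂ) • 1 := by
    push_cast
    rw [sub_smul]; abel
  rw [e]
  refine (norm_add_le _ _).trans ?_
  have h1 : ‖((b - a : ℝ) : ℂ) • (1 : Matrix (Fin n) (Fin n) ℂ)‖ ≤ ‖A - B‖ := by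
    rw [norm_smul, CStarRing.norm_one, mul_one, Complex.norm_real, Real.norm_eq_abs, abs_le]
    constructor <;> linarith
  linarith

theorem ham_herm (H : Fin m → Matrix (Fin n) (Fin n) ℂ)
    (hHerm : ∀ i, (H i).IsHermitian) (θ : Fin m → ℝ) : (ham H θ).IsHermitian := by
  unfold ham Matrix.IsHermitian
  rw [Matrix.conjTranspose_sum]
  refine Finset.sum_congr rfl fun i _ => ?_
  rw [Matrix.conjTranspose_smul, (hHerm i).eq]
  simp

theorem G_lip (H : Fin m → Matrix (Fin n) (Fin n) ℂ) (hn : 0 < n)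
    (hHerm : ∀ i, (H i).IsHermitian) (S : ℝ) (hS : ∀ j, ‖H j‖ ^ 2 ≤ S) (hS0 : 0 ≤ S)
    (a b : EuclideanSpace ℝ (Fin m)) : ‖G H a - G H b‖ ≤ 2 * m * S * ‖a - b‖ := by
  have hH : ∀ j, ‖H j‖ ≤ Real.sqrt S := fun j => Real.le_sqrt_of_sq_le (hS j)
  have h1 : ‖ham H a.ofLp - ham H b.ofLp‖ ≤ Real.sqrt S * (Real.sqrt m * ‖a - b‖) := by
    have e : ham H a.ofLp - ham H b.ofLp = ∑ i, (a i - b i) • H i := by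
      unfold ham
      simp only [sub_smul, Finset.sum_sub_distrib]
    rw [e]
    calc _ ≤ ∑ i, ‖(a i - b i) • H i‖ := norm_sum_le _ _
      _ ≤ ∑ i, 1 * ‖(a - b) i‖ * Real.sqrt S := by
          refine Finset.sum_le_sum fun i _ => ?_
          rw [norm_smul, one_mul]
          exact mul_le_mul_of_nonneg_left (hH i) (norm_nonneg _)
      _ = Real.sqrt S * ∑ i, 1 * ‖(a - b) i‖ := by rw [← Finset.sum_mul, mul_comm]
      _ ≤ _ := by
          gcongr
          refine (Real.sum_mul_le_sqrt_mul_sqrt _ _ _).trans ?_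
          rw [EuclideanSpace.norm_eq]
          simp
  have h2 : ∀ i, ‖(G H a - G H b) i‖ ≤ 2 * S * Real.sqrt m * ‖a - b‖ := by
    intro i
    have e : (G H a - G H b) i = ((gibbs H a.ofLp - gibbs H b.ofLp) * H i).trace.re := by
      simp [G, sub_mul, Matrix.trace_sub]
    rw [e]
    refine (Complex.abs_re_le_norm _).trans ?_
    refine (gibbs_bound _ _ (H i) hn (ham_herm H hHerm _) (ham_herm H hHerm _)).trans ?_
    calc _ ≤ 2 * (Real.sqrt S * (Real.sqrt m * ‖a - b‖)) * Real.sqrt S := by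
          gcongr
          exact hH i
      _ = 2 * (Real.sqrt S * Real.sqrt S) * Real.sqrt m * ‖a - b‖ := by ring
      _ = _ := by rw [Real.mul_self_sqrt hS0]
  rw [EuclideanSpace.norm_eq]
  refine Real.sqrt_le_iff.2 ⟨by positivity, ?_⟩
  calc _ ≤ ∑ i : Fin m, (2 * S * Real.sqrt m * ‖a - b‖) ^ 2 :=
        Finset.sum_le_sum fun i _ => pow_le_pow_left₀ (norm_nonneg _) (h2 i) 2
    _ = m * (4 * S ^ 2 * (Real.sqrt m) ^ 2 * ‖a - b‖ ^ 2) := by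
        rw [Finset.sum_const, Finset.card_univ, Fintype.card_fin, nsmul_eq_mul]; ring
    _ = _ := by rw [Real.sq_sqrt (Nat.cast_nonneg m)]; ring
    _ ≤ _ := le_refl _

/-- The gradient map `G(θ)_i = Tr[ρ_θ H_i]` is Lipschitz with constant
`L = 2m·max_j ‖H_j‖²` in the Euclidean norm; hence, for any density matrix `η`,
the QBM objective (the relative entropy as a function of `θ`) is `L`-smooth:
its gradient `∇F` is `L`-Lipschitz. -/
theorem gradient_lipschitz (hm : 0 < m) (H : Fin m → Matrix (Fin n) (Fin n) ℂ)
    (hHerm : ∀ i, (H i).IsHermitian)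
    (η : Matrix (Fin n) (Fin n) ℂ) (hη : η.PosSemidef) (hηtr : η.trace = 1)
    (L : ℝ) (hL : L = 2 * m * (Finset.univ.sup' ⟨⟨0, hm⟩, Finset.mem_univ _⟩ fun j => ‖H j‖ ^ 2)) :
    (∀ a b : EuclideanSpace ℝ (Fin m), ‖G H a - G H b‖ ≤ L * ‖a - b‖) ∧
    (∀ a b : EuclideanSpace ℝ (Fin m), ‖gradF H η a - gradF H η b‖ ≤ L * ‖a - b‖) := by
  have hn : 0 < n := by
    rcases Nat.eq_zero_or_pos n with h | h
    · subst h
      simp [Matrix.trace] at hηtr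
    · exact h
  have hS : ∀ j, ‖H j‖ ^ 2 ≤
      Finset.univ.sup' ⟨⟨0, hm⟩, Finset.mem_univ _⟩ fun j => ‖H j‖ ^ 2 := fun j =>
    Finset.le_sup' (fun j => ‖H j‖ ^ 2) (Finset.mem_univ j)
  have h := G_lip H hn hHerm _ hS ((sq_nonneg _).trans (hS ⟨0, hm⟩))
  rw [← hL] at h
  refine ⟨h, fun a b => ?_⟩
  have e : gradF H η a - gradF H η b = G H a - G H b := by
    ext i
    simp [gradF, G]
  rw [e]
  exact h a b

end QBM6
end

section
/- Let η be a density matrix, F(θ) = log Z(θ) − ∑_{i=1}^m θ_i Tr[η H_i], and L = 2m·max_{1≤i≤m} ‖H_i‖². For any θ ∈ ℝ^m and any γ > 0, the exact gradient-descent step θ' = θ − γ·∇F(θ) satisfies F(θ') − F(θ) ≤ −γ·(1 − γL/2)·‖∇F(θ)‖². In particular, if γ ≤ 2/L then F(θ') ≤ F(θ), so exact gradient descent on the quantum relative entropy with learning rate at most 2/L never increases the relative entropy. -/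
open scoped Matrix.Norms.L2Operator ComplexOrder

namespace QBM10

variable {n m : ℕ}

/-- The Hamiltonian `H(θ) = ∑ i, θ i • H i`. -/
noncomputable def ham (H : Fin m → Matrix (Fin n) (Fin n) ℂ) (θ : Fin m → ℝ) :
    Matrix (Fin n) (Fin n) ℂ :=
  ∑ i, θ i • H i

/-- The partition function `Z(θ) = Tr[exp H(θ)]` (its real part). -/
noncomputable def Z (H : Fin m → Matrix (Fin n) (Fin n) ℂ) (θ : Fin m → ℝ) : ℝ :=
  (NormedSpace.exp (ham H θ)).trace.re

/-- The Gibbs state `ρ_θ = exp H(θ) / Z(θ)`. -/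
noncomputable def gibbs (H : Fin m → Matrix (Fin n) (Fin n) ℂ) (θ : Fin m → ℝ) :
    Matrix (Fin n) (Fin n) ℂ :=
  (Z H θ : ℂ)⁻¹ • NormedSpace.exp (ham H θ)

/-- The log-partition function `θ ↦ log Z(θ)`. -/
noncomputable def logZ (H : Fin m → Matrix (Fin n) (Fin n) ℂ) (θ : Fin m → ℝ) : ℝ :=
  Real.log (Z H θ)

/-- The QBM objective `F(θ) = log Z(θ) − ∑ i, θ i * Tr[η H i]`. -/
noncomputable def F (H : Fin m → Matrix (Fin n) (Fin n) ℂ) (η : Matrix (Fin n) (Fin n) ℂ)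
    (θ : Fin m → ℝ) : ℝ :=
  logZ H θ - ∑ i, θ i * (η * H i).trace.re

/-- The gradient of the QBM objective, `∇F(θ)_i = Tr[ρ_θ H_i] − Tr[η H_i]`. -/
noncomputable def gradF (H : Fin m → Matrix (Fin n) (Fin n) ℂ)
    (η : Matrix (Fin n) (Fin n) ℂ) (θ : EuclideanSpace ℝ (Fin m)) :
    EuclideanSpace ℝ (Fin m) :=
  WithLp.toLp 2 fun i => (gibbs H θ * H i).trace.re - (η * H i).trace.re

/-- Second-order scalar bound for the exponential. -/
lemma exp_quad (d : ℝ) : 6 * (Real.exp d - 1 - d) ≤ d ^ 2 * (2 + Real.exp d) := by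
  let G : ℝ → ℝ := fun d => d ^ 2 * (2 + Real.exp d) - 6 * (Real.exp d - 1 - d)
  let G1 : ℝ → ℝ := fun d => 4 * d + 2 * d * Real.exp d + d ^ 2 * Real.exp d - 6 * Real.exp d + 6
  have hG : ∀ x, HasDerivAt G (G1 x) x := by
    intro x
    have h := (((hasDerivAt_id x).pow 2).mul ((Real.hasDerivAt_exp x).const_add 2)).sub
      ((((Real.hasDerivAt_exp x).sub_const 1).sub (hasDerivAt_id x)).const_mul 6)
    refine h.congr_deriv ?_
    simp [G1]; ring
  have hG1 : ∀ x, HasDerivAt G1 (4 + Real.exp x * (x ^ 2 + 4 * x - 4)) x := by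
    intro x
    have h := (((((hasDerivAt_id x).const_mul 4).add
      (((hasDerivAt_id x).const_mul 2).mul (Real.hasDerivAt_exp x))).add
      (((hasDerivAt_id x).pow 2).mul (Real.hasDerivAt_exp x))).sub
      ((Real.hasDerivAt_exp x).const_mul 6)).add_const 6
    refine h.congr_deriv ?_
    simp; ring
  have hmono : Monotone G1 := by
    refine monotone_of_deriv_nonneg (fun x => (hG1 x).differentiableAt) (fun x => ?_)
    rw [(hG1 x).deriv]
    have h1 := Real.add_one_le_exp (-x)
    have h2 : Real.exp x * Real.exp (-x) = 1 := by rw [← Real.exp_add]; simp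
    have h3 := Real.exp_pos x
    nlinarith [mul_le_mul_of_nonneg_left h1 h3.le, mul_nonneg h3.le (sq_nonneg x)]
  have h10 : G1 0 = 0 := by simp [G1]
  have h00 : G 0 = 0 := by simp [G]
  have hcont : Continuous G := by fun_prop
  have key : 0 ≤ G d := by
    rcases le_total 0 d with h | h
    · have : MonotoneOn G (Set.Ici 0) := by
        refine monotoneOn_of_deriv_nonneg (convex_Ici 0) hcont.continuousOn
          (fun x _ => (hG x).differentiableAt.differentiableWithinAt) (fun x hx => ?_)
        rw [(hG x).deriv, ← h10]
        rw [interior_Ici] at hx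
        exact hmono hx.le
      rw [← h00]
      exact this (Set.mem_Ici.2 le_rfl) h h
    · have : AntitoneOn G (Set.Iic 0) := by
        refine antitoneOn_of_deriv_nonpos (convex_Iic 0) hcont.continuousOn
          (fun x _ => (hG x).differentiableAt.differentiableWithinAt) (fun x hx => ?_)
        rw [(hG x).deriv, ← h10]
        rw [interior_Iic] at hx
        exact hmono hx.le
      rw [← h00]
      exact this h (Set.mem_Iic.2 le_rfl) h
  simp only [G] at key
  linarith

/-- Two-point version. -/
lemma exp_quad' (a b : ℝ) : 6 * (Real.exp b - Real.exp a - Real.exp a * (b - a)) ≤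
    2 * (Real.exp a * (b - a) ^ 2) + Real.exp b * (b - a) ^ 2 := by
  have h := mul_le_mul_of_nonneg_left (exp_quad (b - a)) (Real.exp_pos a).le
  have e : Real.exp a * Real.exp (b - a) = Real.exp b := by rw [← Real.exp_add]; congr 1; ring
  have e1 : Real.exp a * (6 * (Real.exp (b - a) - 1 - (b - a))) =
      6 * (Real.exp a * Real.exp (b - a) - Real.exp a - Real.exp a * (b - a)) := by ring
  have e2 : Real.exp a * ((b - a) ^ 2 * (2 + Real.exp (b - a))) =
      2 * (Real.exp a * (b - a) ^ 2) + (Real.exp a * Real.exp (b - a)) * (b - a) ^ 2 := by ring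
  rw [e1, e2, e] at h
  exact h

/-- The spectral function `U diag(f) U*`. -/
noncomputable def specFn (U : Matrix.unitaryGroup (Fin n) ℂ) (f : Fin n → ℝ) :
    Matrix (Fin n) (Fin n) ℂ :=
  (U : Matrix (Fin n) (Fin n) ℂ) * Matrix.diagonal (fun i => (f i : ℂ)) *
    star (U : Matrix (Fin n) (Fin n) ℂ)

lemma star_mul_U (U : Matrix.unitaryGroup (Fin n) ℂ) :
    star (U : Matrix (Fin n) (Fin n) ℂ) * (U : Matrix (Fin n) (Fin n) ℂ) = 1 :=
  Unitary.star_mul_self_of_mem U.2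

lemma U_mul_star (U : Matrix.unitaryGroup (Fin n) ℂ) :
    (U : Matrix (Fin n) (Fin n) ℂ) * star (U : Matrix (Fin n) (Fin n) ℂ) = 1 :=
  Unitary.mul_star_self_of_mem U.2

lemma specFn_mul (U : Matrix.unitaryGroup (Fin n) ℂ) (f g : Fin n → ℝ) :
    specFn U f * specFn U g = specFn U (fun i => f i * g i) := by
  unfold specFn
  have : (fun i => ((f i * g i : ℝ) : ℂ)) = fun i => (f i : ℂ) * (g i : ℂ) := by
    ext i; push_cast; rfl
  rw [this, ← Matrix.diagonal_mul_diagonal]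
  calc _ = (U : Matrix (Fin n) (Fin n) ℂ) * Matrix.diagonal (fun i => (f i : ℂ)) *
        (star (U : Matrix (Fin n) (Fin n) ℂ) * (U : Matrix (Fin n) (Fin n) ℂ)) *
        Matrix.diagonal (fun i => (g i : ℂ)) * star (U : Matrix (Fin n) (Fin n) ℂ) := by
          simp only [Matrix.mul_assoc]
    _ = _ := by rw [star_mul_U]; simp only [Matrix.mul_assoc, Matrix.one_mul]

lemma specFn_one (U : Matrix.unitaryGroup (Fin n) ℂ) : specFn U (fun _ => 1) = 1 := by
  unfold specFn
  simp only [Complex.ofReal_one, Matrix.diagonal_one, Matrix.mul_one]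
  exact U_mul_star U

lemma exp_specFn (U : Matrix.unitaryGroup (Fin n) ℂ) (a : Fin n → ℝ) :
    NormedSpace.exp (specFn U a) = specFn U (fun i => Real.exp (a i)) := by
  have hinv : star (U : Matrix (Fin n) (Fin n) ℂ) = (U : Matrix (Fin n) (Fin n) ℂ)⁻¹ :=
    (Matrix.inv_eq_right_inv (U_mul_star U)).symm
  have hU : IsUnit (U : Matrix (Fin n) (Fin n) ℂ) :=
    ⟨⟨U, star (U : Matrix (Fin n) (Fin n) ℂ), U_mul_star U, star_mul_U U⟩, rfl⟩
  unfold specFn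
  rw [hinv, Matrix.exp_conj _ _ hU, Matrix.exp_diagonal]
  congr 3
  ext i
  rw [Pi.coe_exp, ← Complex.exp_eq_exp_ℂ, Complex.ofReal_exp]

/-- Overlap weights. -/
noncomputable def wt (U W : Matrix.unitaryGroup (Fin n) ℂ) (i j : Fin n) : ℝ :=
  Complex.normSq ((star (U : Matrix (Fin n) (Fin n) ℂ) * (W : Matrix (Fin n) (Fin n) ℂ)) i j)

lemma trace_specFn_mul (U W : Matrix.unitaryGroup (Fin n) ℂ) (f g : Fin n → ℝ) :
    (specFn U f * specFn W g).trace.re = ∑ i, ∑ j, wt U W i j * (f i * g j) := by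
  set M := star (U : Matrix (Fin n) (Fin n) ℂ) * (W : Matrix (Fin n) (Fin n) ℂ) with hM
  have h1 : (specFn U f * specFn W g).trace =
      (Matrix.diagonal (fun i => (f i : ℂ)) * M * Matrix.diagonal (fun i => (g i : ℂ)) *
        star M).trace := by
    unfold specFn
    rw [hM, star_mul, star_star]
    simp only [Matrix.mul_assoc]
    rw [Matrix.trace_mul_comm]
    simp only [Matrix.mul_assoc]
  rw [h1, Matrix.trace, Complex.re_sum]
  refine Finset.sum_congr rfl fun i _ => ?_
  rw [Matrix.diag_apply, Matrix.mul_apply, Complex.re_sum]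
  refine Finset.sum_congr rfl fun j _ => ?_
  rw [Matrix.mul_diagonal, Matrix.diagonal_mul, Matrix.star_apply]
  have : (f i : ℂ) * M i j * (g j : ℂ) * star (M i j) =
      ((Complex.normSq (M i j) * (f i * g j) : ℝ) : ℂ) := by
    push_cast
    rw [Complex.normSq_eq_conj_mul_self]
    simp only [RCLike.star_def]
    ring
  rw [this, Complex.ofReal_re]
  rfl

lemma entry_le (X : Matrix (Fin n) (Fin n) ℂ) (i : Fin n) : ‖X i i‖ ≤ ‖X‖ := by
  have h := Matrix.l2_opNorm_mulVec X (EuclideanSpace.single i (1 : ℂ))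
  have h2 := PiLp.norm_apply_le
    ((WithLp.toLp 2 (X.mulVec (EuclideanSpace.single i (1 : ℂ)))) : EuclideanSpace ℂ (Fin n)) i
  simp at h h2
  exact h2.trans h

lemma trace_specFn_mul_le (U : Matrix.unitaryGroup (Fin n) ℂ) (f : Fin n → ℝ)
    (hf : ∀ i, 0 ≤ f i) (X : Matrix (Fin n) (Fin n) ℂ) :
    (specFn U f * X).trace.re ≤ ‖X‖ * (specFn U f).trace.re := by
  set Y := star (U : Matrix (Fin n) (Fin n) ℂ) * X * (U : Matrix (Fin n) (Fin n) ℂ) with hY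
  have hYn : ‖Y‖ ≤ ‖X‖ := by
    rw [hY, CStarRing.norm_mul_coe_unitary]
    exact (CStarRing.norm_coe_unitary_mul (star U) X).le
  have h1 : (specFn U f * X).trace.re = ∑ i, f i * (Y i i).re := by
    have : (specFn U f * X).trace = (Matrix.diagonal (fun i => (f i : ℂ)) * Y).trace := by
      unfold specFn
      rw [hY]
      simp only [Matrix.mul_assoc]
      rw [Matrix.trace_mul_comm]
      simp only [Matrix.mul_assoc]
    rw [this, Matrix.trace, Complex.re_sum]
    refine Finset.sum_congr rfl fun i _ => ?_
    rw [Matrix.diag_apply, Matrix.diagonal_mul, Complex.re_ofReal_mul]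
  have h2 : (specFn U f).trace.re = ∑ i, f i := by
    unfold specFn
    rw [Matrix.trace_mul_comm, ← Matrix.mul_assoc, star_mul_U, Matrix.one_mul, Matrix.trace,
      Complex.re_sum]
    simp
  rw [h1, h2, Finset.mul_sum]
  refine Finset.sum_le_sum fun i _ => ?_
  rw [mul_comm]
  refine mul_le_mul_of_nonneg_right ?_ (hf i)
  exact (Complex.re_le_norm _).trans ((entry_le Y i).trans hYn)

lemma exists_specFn {A : Matrix (Fin n) (Fin n) ℂ} (hA : A.IsHermitian) :
    ∃ (U : Matrix.unitaryGroup (Fin n) ℂ) (a : Fin n → ℝ), A = specFn U a := by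
  refine ⟨hA.eigenvectorUnitary, hA.eigenvalues, ?_⟩
  conv_lhs => rw [hA.spectral_theorem, Unitary.conjStarAlgAut_apply]
  rfl

section spec
variable (U W : Matrix.unitaryGroup (Fin n) ℂ) (a b f g : Fin n → ℝ)

lemma tr_left : (specFn U f).trace.re = ∑ i, ∑ j, wt U W i j * f i := by
  have := trace_specFn_mul U W f (fun _ => 1)
  rw [specFn_one, Matrix.mul_one] at this
  simpa using this

lemma tr_right : (specFn W g).trace.re = ∑ i, ∑ j, wt U W i j * g j := by
  have := trace_specFn_mul U W (fun _ => 1) g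
  rw [specFn_one, Matrix.one_mul] at this
  simpa using this

lemma tr_left1 : (specFn U f * (specFn W b - specFn U a)).trace.re =
    ∑ i, ∑ j, wt U W i j * (f i * (b j - a i)) := by
  rw [Matrix.mul_sub, specFn_mul, Matrix.trace_sub, Complex.sub_re, trace_specFn_mul,
    tr_left U W]
  simp only [← Finset.sum_sub_distrib]
  refine Finset.sum_congr rfl fun i _ => Finset.sum_congr rfl fun j _ => ?_
  ring

lemma tr_right1 : (specFn W g * (specFn W b - specFn U a)).trace.re =
    ∑ i, ∑ j, wt U W i j * (g j * (b j - a i)) := by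
  rw [Matrix.mul_sub, specFn_mul, Matrix.trace_sub, Complex.sub_re,
    Matrix.trace_mul_comm (specFn W g) (specFn U a), trace_specFn_mul, tr_right U W]
  simp only [← Finset.sum_sub_distrib]
  refine Finset.sum_congr rfl fun i _ => Finset.sum_congr rfl fun j _ => ?_
  ring

lemma tr_left2 : (specFn U f * ((specFn W b - specFn U a) * (specFn W b - specFn U a))).trace.re =
    ∑ i, ∑ j, wt U W i j * (f i * (b j - a i) ^ 2) := by
  have e : (specFn U f * ((specFn W b - specFn U a) * (specFn W b - specFn U a))).trace =
      (specFn U f * specFn W (fun i => b i * b i)).trace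
      - (specFn U (fun i => a i * f i) * specFn W b).trace
      - (specFn U (fun i => f i * a i) * specFn W b).trace
      + (specFn U (fun i => f i * (a i * a i))).trace := by
    simp only [← specFn_mul]
    rw [Matrix.mul_assoc (specFn U a) (specFn U f) (specFn W b),
      Matrix.trace_mul_comm (specFn U a) (specFn U f * specFn W b)]
    simp only [← Matrix.trace_sub, ← Matrix.trace_add]
    congr 1
    noncomm_ring
  rw [e]
  simp only [Complex.add_re, Complex.sub_re, trace_specFn_mul, tr_left U W]
  simp only [← Finset.sum_sub_distrib, ← Finset.sum_add_distrib]
  refine Finset.sum_congr rfl fun i _ => Finset.sum_congr rfl fun j _ => ?_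
  ring

lemma wt_comm (i j : Fin n) : wt W U j i = wt U W i j := by
  unfold wt
  have : star (W : Matrix (Fin n) (Fin n) ℂ) * (U : Matrix (Fin n) (Fin n) ℂ) =
      star (star (U : Matrix (Fin n) (Fin n) ℂ) * (W : Matrix (Fin n) (Fin n) ℂ)) := by
    rw [star_mul, star_star]
  rw [this, Matrix.star_apply, RCLike.star_def, Complex.normSq_conj]

lemma tr_right2 : (specFn W g * ((specFn W b - specFn U a) * (specFn W b - specFn U a))).trace.re =
    ∑ i, ∑ j, wt U W i j * (g j * (b j - a i) ^ 2) := by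
  have e : (specFn W b - specFn U a) * (specFn W b - specFn U a) =
      (specFn U a - specFn W b) * (specFn U a - specFn W b) := by noncomm_ring
  rw [e, tr_left2 W U b a g, Finset.sum_comm]
  refine Finset.sum_congr rfl fun i _ => Finset.sum_congr rfl fun j _ => ?_
  rw [wt_comm U W]
  ring

lemma wt_nonneg (i j : Fin n) : 0 ≤ wt U W i j := Complex.normSq_nonneg _

end spec

lemma trace_exp_pos (hn : 0 < n) {A : Matrix (Fin n) (Fin n) ℂ} (hA : A.IsHermitian) :
    0 < (NormedSpace.exp A).trace.re := by
  obtain ⟨U, a, rfl⟩ := exists_specFn hA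
  have : Nonempty (Fin n) := ⟨⟨0, hn⟩⟩
  rw [exp_specFn]
  unfold specFn
  rw [Matrix.trace_mul_comm, ← Matrix.mul_assoc, star_mul_U, Matrix.one_mul, Matrix.trace,
    Complex.re_sum]
  refine Finset.sum_pos (fun i _ => ?_) Finset.univ_nonempty
  rw [Matrix.diag_apply, Matrix.diagonal_apply_eq, Complex.ofReal_re]
  exact Real.exp_pos _

lemma trace_exp_mul_le {A : Matrix (Fin n) (Fin n) ℂ} (hA : A.IsHermitian)
    (X : Matrix (Fin n) (Fin n) ℂ) :
    (NormedSpace.exp A * X).trace.re ≤ ‖X‖ * (NormedSpace.exp A).trace.re := by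
  obtain ⟨U, a, rfl⟩ := exists_specFn hA
  rw [exp_specFn]
  exact trace_specFn_mul_le U _ (fun i => (Real.exp_pos _).le) X

/-- Peierls–Bogoliubov-type inequality with an arbitrary shift `c`. -/
lemma klein_shift {A B : Matrix (Fin n) (Fin n) ℂ} (hA : A.IsHermitian) (hB : B.IsHermitian)
    (c : ℝ) : (NormedSpace.exp B).trace.re - (NormedSpace.exp B * (B - A)).trace.re
      + c * (NormedSpace.exp B).trace.re ≤ Real.exp c * (NormedSpace.exp A).trace.re := by
  obtain ⟨U, a, rfl⟩ := exists_specFn hA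
  obtain ⟨W, b, rfl⟩ := exists_specFn hB
  rw [exp_specFn, exp_specFn, tr_right1, tr_right U W, tr_left U W]
  simp only [Finset.mul_sum, ← Finset.sum_sub_distrib, ← Finset.sum_add_distrib]
  refine Finset.sum_le_sum fun i _ => Finset.sum_le_sum fun j _ => ?_
  have h := Real.add_one_le_exp (a i + c - b j)
  have h1 := mul_le_mul_of_nonneg_left h (Real.exp_pos (b j)).le
  rw [← Real.exp_add, show b j + (a i + c - b j) = c + a i by ring, Real.exp_add] at h1
  nlinarith [mul_le_mul_of_nonneg_left h1 (wt_nonneg U W i j)]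

lemma second_order {A B : Matrix (Fin n) (Fin n) ℂ} (hA : A.IsHermitian) (hB : B.IsHermitian) :
    6 * ((NormedSpace.exp B).trace.re - (NormedSpace.exp A).trace.re
      - (NormedSpace.exp A * (B - A)).trace.re) ≤
    2 * (NormedSpace.exp A * ((B - A) * (B - A))).trace.re
      + (NormedSpace.exp B * ((B - A) * (B - A))).trace.re := by
  obtain ⟨U, a, rfl⟩ := exists_specFn hA
  obtain ⟨W, b, rfl⟩ := exists_specFn hB
  rw [exp_specFn, exp_specFn, tr_left1, tr_left2, tr_right2, tr_right U W, tr_left U W]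
  simp only [Finset.mul_sum, ← Finset.sum_sub_distrib, ← Finset.sum_add_distrib]
  refine Finset.sum_le_sum fun i _ => Finset.sum_le_sum fun j _ => ?_
  nlinarith [mul_le_mul_of_nonneg_left (exp_quad' (a i) (b j)) (wt_nonneg U W i j)]

/-- Smoothness of the log-partition function. -/
lemma log_smooth (hn : 0 < n) {A B : Matrix (Fin n) (Fin n) ℂ} (hA : A.IsHermitian)
    (hB : B.IsHermitian) :
    Real.log (NormedSpace.exp B).trace.re - Real.log (NormedSpace.exp A).trace.re
      ≤ (NormedSpace.exp A * (B - A)).trace.re / (NormedSpace.exp A).trace.re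
        + ‖B - A‖ ^ 2 := by
  have hZA := trace_exp_pos hn hA
  have hZB := trace_exp_pos hn hB
  have k := klein_shift hA hB (Real.log ((NormedSpace.exp B).trace.re /
    (NormedSpace.exp A).trace.re))
  have s := second_order hA hB
  have b1 := trace_exp_mul_le hA ((B - A) * (B - A))
  have b2 := trace_exp_mul_le hB ((B - A) * (B - A))
  have b3 := trace_exp_mul_le hB (B - A)
  have b4 := trace_exp_mul_le hA (-(B - A))
  have hsq : ‖(B - A) * (B - A)‖ ≤ ‖B - A‖ ^ 2 := by
    rw [pow_two]; exact Matrix.l2_opNorm_mul _ _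
  rw [Matrix.mul_neg, Matrix.trace_neg, Complex.neg_re, norm_neg] at b4
  rw [← Real.log_div hZB.ne' hZA.ne']
  have hv := norm_nonneg (B - A)
  generalize ‖B - A‖ = v at *
  generalize ‖(B - A) * (B - A)‖ = q at *
  generalize (NormedSpace.exp A * (B - A)).trace.re = p at *
  generalize (NormedSpace.exp B * (B - A)).trace.re = p' at *
  generalize (NormedSpace.exp A).trace.re = ZA at *
  generalize (NormedSpace.exp B).trace.re = ZB at *
  have hr : 0 < ZB / ZA := div_pos hZB hZA
  obtain ⟨μ, rfl⟩ : ∃ μ, p = μ * ZA := ⟨p / ZA, by field_simp⟩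
  obtain ⟨r, rfl⟩ : ∃ r, ZB = r * ZA := ⟨ZB / ZA, by field_simp⟩
  rw [mul_div_cancel_right₀ _ hZA.ne'] at *
  rw [mul_div_cancel_right₀ _ hZA.ne']
  rw [Real.exp_log hr] at k
  by_cases hv2 : 2 ≤ v
  · have h1 : Real.log r ≤ v := by
      have : Real.log r * (r * ZA) ≤ v * (r * ZA) := by linarith
      exact le_of_mul_le_mul_right this hZB
    have h2 : -μ ≤ v := by
      have : -μ * ZA ≤ v * ZA := by linarith
      exact le_of_mul_le_mul_right this hZA
    nlinarith
  · push Not at hv2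
    have hx4 : v ^ 2 < 4 := by nlinarith
    have hx0 : 0 ≤ v ^ 2 := sq_nonneg v
    have c1 : q * ZA ≤ v ^ 2 * ZA := mul_le_mul_of_nonneg_right hsq hZA.le
    have c2 : q * (r * ZA) ≤ v ^ 2 * (r * ZA) := mul_le_mul_of_nonneg_right hsq hZB.le
    generalize v ^ 2 = x at *
    have h1 : r * (1 - x / 6) ≤ 1 + μ + x / 3 := by
      have : r * (1 - x / 6) * ZA ≤ (1 + μ + x / 3) * ZA := by linarith
      exact le_of_mul_le_mul_right this hZA
    have h2 : 1 + μ + x / 3 ≤ Real.exp (μ + x / 3) := by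
      linarith [Real.add_one_le_exp (μ + x / 3)]
    have h3 : 1 ≤ Real.exp (2 * x / 3) * (1 - x / 6) := by
      have := Real.add_one_le_exp (2 * x / 3)
      nlinarith
    have h4 : r ≤ Real.exp (μ + x) := by
      have e : Real.exp (μ + x) = Real.exp (μ + x / 3) * Real.exp (2 * x / 3) := by
        rw [← Real.exp_add]; congr 1; ring
      rw [e]
      calc r ≤ r * (Real.exp (2 * x / 3) * (1 - x / 6)) := le_mul_of_one_le_right hr.le h3
        _ = (r * (1 - x / 6)) * Real.exp (2 * x / 3) := by ring
        _ ≤ _ := mul_le_mul_of_nonneg_right (h1.trans h2) (Real.exp_pos _).le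
    calc Real.log r ≤ Real.log (Real.exp (μ + x)) := Real.log_le_log hr h4
      _ = _ := Real.log_exp _

lemma ham_herm (H : Fin m → Matrix (Fin n) (Fin n) ℂ) (hH : ∀ i, (H i).IsHermitian)
    (θ : Fin m → ℝ) : (ham H θ).IsHermitian := by
  unfold ham Matrix.IsHermitian
  rw [Matrix.conjTranspose_sum]
  refine Finset.sum_congr rfl fun i _ => ?_
  rw [Matrix.conjTranspose_smul, (hH i).eq]
  simp

/-- **Descent step for exact gradient descent on the relative entropy.** With
`L = 2m·max_i ‖H_i‖²`, the step `θ' = θ − γ∇F(θ)` satisfies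
`F(θ') − F(θ) ≤ −γ(1 − γL/2)‖∇F(θ)‖²`; in particular, if `γ ≤ 2/L` then
`F(θ') ≤ F(θ)`: gradient descent never increases the relative entropy. -/
theorem descent_step (hm : 0 < m) (H : Fin m → Matrix (Fin n) (Fin n) ℂ)
    (hHerm : ∀ i, (H i).IsHermitian)
    (η : Matrix (Fin n) (Fin n) ℂ) (hη : η.PosSemidef) (hηtr : η.trace = 1)
    (L : ℝ)
    (hL : L = 2 * m * (Finset.univ.sup' ⟨⟨0, hm⟩, Finset.mem_univ _⟩ fun i => ‖H i‖ ^ 2))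
    (θ : EuclideanSpace ℝ (Fin m)) (γ : ℝ) (hγ : 0 < γ)
    (θ' : EuclideanSpace ℝ (Fin m)) (hθ' : θ' = θ - γ • gradF H η θ) :
    F H η θ' - F H η θ ≤ -γ * (1 - γ * L / 2) * ‖gradF H η θ‖ ^ 2 ∧
      (γ ≤ 2 / L → F H η θ' ≤ F H η θ) := by
  have hn : 0 < n := by
    rcases Nat.eq_zero_or_pos n with h | h
    · subst h
      simp [Matrix.trace] at hηtr
    · exact h
  set g := gradF H η θ with hg
  set M := Finset.univ.sup' ⟨⟨0, hm⟩, Finset.mem_univ _⟩ fun i => ‖H i‖ ^ 2 with hM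
  have hMi : ∀ i, ‖H i‖ ^ 2 ≤ M := fun i =>
    Finset.le_sup' (fun i => ‖H i‖ ^ 2) (Finset.mem_univ i)
  have hM0 : 0 ≤ M := (sq_nonneg _).trans (hMi ⟨0, hm⟩)
  have hL0 : 0 ≤ L := by rw [hL]; positivity
  have hgsq : ‖g‖ ^ 2 = ∑ i, g i ^ 2 := EuclideanSpace.real_norm_sq_eq g
  have hV : ham H θ' - ham H θ = ∑ i, (-(γ * g i)) • H i := by
    unfold ham
    rw [← Finset.sum_sub_distrib]
    refine Finset.sum_congr rfl fun i _ => ?_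
    rw [← sub_smul]
    congr 1
    simp [hθ']
  have hVn : ‖ham H θ' - ham H θ‖ ^ 2 ≤ γ ^ 2 * (L / 2) * ‖g‖ ^ 2 := by
    have h1 : ‖ham H θ' - ham H θ‖ ≤ ∑ i, |γ * g i| * ‖H i‖ := by
      rw [hV]
      refine (norm_sum_le _ _).trans (Finset.sum_le_sum fun i _ => ?_)
      rw [norm_smul, norm_neg, Real.norm_eq_abs]
    calc _ ≤ (∑ i, |γ * g i| * ‖H i‖) ^ 2 := pow_le_pow_left₀ (norm_nonneg _) h1 2
      _ ≤ (∑ i, |γ * g i| ^ 2) * ∑ i, ‖H i‖ ^ 2 := Finset.sum_mul_sq_le_sq_mul_sq _ _ _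
      _ ≤ (∑ i, |γ * g i| ^ 2) * ∑ i : Fin m, M := by
          refine mul_le_mul_of_nonneg_left (Finset.sum_le_sum fun i _ => hMi i) ?_
          positivity
      _ = _ := by
          simp only [sq_abs, mul_pow, ← Finset.mul_sum, ← hgsq]
          rw [Finset.sum_const, Finset.card_univ, Fintype.card_fin, nsmul_eq_mul, hL]
          ring
  have hs := log_smooth hn (ham_herm H hHerm θ) (ham_herm H hHerm θ')
  have hlin : (NormedSpace.exp (ham H θ) * (ham H θ' - ham H θ)).trace.re /
      (NormedSpace.exp (ham H θ)).trace.re =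
      ∑ i, (-(γ * g i)) * (gibbs H θ * H i).trace.re := by
    have hgb : ∀ i, (gibbs H θ * H i).trace.re =
        (Z H θ)⁻¹ * (NormedSpace.exp (ham H θ) * H i).trace.re := by
      intro i
      unfold gibbs
      rw [Matrix.smul_mul, Matrix.trace_smul, smul_eq_mul, ← Complex.ofReal_inv,
        Complex.re_ofReal_mul]
    rw [hV, Matrix.mul_sum, Matrix.trace_sum, Complex.re_sum, Finset.sum_div]
    refine Finset.sum_congr rfl fun i _ => ?_
    rw [hgb, Matrix.mul_smul, Matrix.trace_smul, Complex.smul_re]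
    unfold Z
    rw [smul_eq_mul, div_eq_mul_inv]
    ring
  rw [hlin] at hs
  have hF : F H η θ' - F H η θ = (Real.log (NormedSpace.exp (ham H θ')).trace.re -
      Real.log (NormedSpace.exp (ham H θ)).trace.re) +
      ∑ i, (γ * g i) * (η * H i).trace.re := by
    have : ∑ i, (γ * g i) * (η * H i).trace.re = ∑ i, θ i * (η * H i).trace.re -
        ∑ i, θ' i * (η * H i).trace.re := by
      rw [← Finset.sum_sub_distrib]
      refine Finset.sum_congr rfl fun i _ => ?_
      rw [← sub_mul]
      congr 1
      simp [hθ']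
    rw [this]
    unfold F logZ Z
    ring
  have hcomb : ∑ i, (-(γ * g i)) * (gibbs H θ * H i).trace.re +
      ∑ i, (γ * g i) * (η * H i).trace.re = -γ * ‖g‖ ^ 2 := by
    rw [hgsq, ← Finset.sum_add_distrib, Finset.mul_sum]
    refine Finset.sum_congr rfl fun i _ => ?_
    have : g i = (gibbs H θ * H i).trace.re - (η * H i).trace.re := rfl
    rw [pow_two]
    nth_rw 4 [this]
    ring
  have main : F H η θ' - F H η θ ≤ -γ * (1 - γ * L / 2) * ‖g‖ ^ 2 := by
    rw [hF]
    linarith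
  refine ⟨main, fun hγL => ?_⟩
  have hLp : 0 < L := by
    rcases hL0.eq_or_lt with h | h
    · rw [← h] at hγL; simp at hγL; linarith
    · exact h
  have h1 : γ * L ≤ 2 := (le_div_iff₀ hLp).1 hγL
  have : 0 ≤ γ * (1 - γ * L / 2) * ‖g‖ ^ 2 :=
    mul_nonneg (mul_nonneg hγ.le (by linarith)) (sq_nonneg _)
  linarith

end QBM10
end

section
/- (Collinearity / Pythagorean identity.) Let η be a density matrix and a ∈ ℝ^m a parameter vector such that Tr[η H_i] = Tr[ρ_a H_i] for all i ∈ {1,…,m}. Then for every b ∈ ℝ^m, (−Tr[η H(b)] + log Z(b)) − (−Tr[η H(a)] + log Z(a)) = S(ρ_a‖ρ_b); equivalently, the quantum relative entropies satisfy S(η‖ρ_b) = S(η‖ρ_a) + S(ρ_a‖ρ_b). -/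
open scoped Matrix.Norms.L2Operator ComplexOrder

namespace QBM11

variable {n m : ℕ}

/-- The Hamiltonian `H(θ) = ∑ i, θ i • H i`. -/
noncomputable def ham (H : Fin m → Matrix (Fin n) (Fin n) ℂ) (θ : Fin m → ℝ) :
    Matrix (Fin n) (Fin n) ℂ :=
  ∑ i, θ i • H i

/-- The partition function `Z(θ) = Tr[exp H(θ)]` (its real part). -/
noncomputable def Z (H : Fin m → Matrix (Fin n) (Fin n) ℂ) (θ : Fin m → ℝ) : ℝ :=
  (NormedSpace.exp (ham H θ)).trace.re

/-- The Gibbs state `ρ_θ = exp H(θ) / Z(θ)`. -/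
noncomputable def gibbs (H : Fin m → Matrix (Fin n) (Fin n) ℂ) (θ : Fin m → ℝ) :
    Matrix (Fin n) (Fin n) ℂ :=
  (Z H θ : ℂ)⁻¹ • NormedSpace.exp (ham H θ)

/-- The log-partition function `θ ↦ log Z(θ)`. -/
noncomputable def logZ (H : Fin m → Matrix (Fin n) (Fin n) ℂ) (θ : Fin m → ℝ) : ℝ :=
  Real.log (Z H θ)

/-- The QBM objective `F(θ) = log Z(θ) − ∑ i, θ i * Tr[η H i]`. -/
noncomputable def F (H : Fin m → Matrix (Fin n) (Fin n) ℂ) (η : Matrix (Fin n) (Fin n) ℂ)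
    (θ : Fin m → ℝ) : ℝ :=
  logZ H θ - ∑ i, θ i * (η * H i).trace.re

/-- The quantum relative entropy between two Gibbs states of the family:
`S(ρ_a‖ρ_b) = Tr[ρ_a (H(a) − H(b))] − log Z(a) + log Z(b)`. -/
noncomputable def relEnt (H : Fin m → Matrix (Fin n) (Fin n) ℂ) (a b : Fin m → ℝ) : ℝ :=
  (gibbs H a * (ham H a - ham H b)).trace.re - logZ H a + logZ H b

theorem trace_mul_ham (H : Fin m → Matrix (Fin n) (Fin n) ℂ) (A : Matrix (Fin n) (Fin n) ℂ)
    (θ : Fin m → ℝ) : (A * ham H θ).trace.re = ∑ i, θ i * (A * H i).trace.re := by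
  simp [ham, Finset.mul_sum, Matrix.trace_sum, Matrix.trace_smul]

/-- **Collinearity / Pythagorean identity.** If the density matrix `η` has the same
expectation values as `ρ_a` on all the `H_i`, then for every `b`,
`(−Tr[η H(b)] + log Z(b)) − (−Tr[η H(a)] + log Z(a)) = S(ρ_a‖ρ_b)`;
equivalently `S(η‖ρ_b) = S(η‖ρ_a) + S(ρ_a‖ρ_b)`. -/
theorem collinearity (H : Fin m → Matrix (Fin n) (Fin n) ℂ)
    (hHerm : ∀ i, (H i).IsHermitian)
    (η : Matrix (Fin n) (Fin n) ℂ) (hη : η.PosSemidef) (hηtr : η.trace = 1)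
    (a : Fin m → ℝ) (hmatch : ∀ i, (η * H i).trace.re = (gibbs H a * H i).trace.re)
    (b : Fin m → ℝ) :
    (-(η * ham H b).trace.re + logZ H b) - (-(η * ham H a).trace.re + logZ H a) =
      relEnt H a b := by
  have key : ∀ θ : Fin m → ℝ, (η * ham H θ).trace.re = (gibbs H a * ham H θ).trace.re := by
    intro θ
    rw [trace_mul_ham, trace_mul_ham]
    exact Finset.sum_congr rfl fun i _ => by rw [hmatch i]
  rw [relEnt, mul_sub, Matrix.trace_sub, Complex.sub_re, key a, key b]
  ring

end QBM11
end

section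
/- Let a, b ∈ ℝ^m and ε > 0, and suppose |Tr[ρ_b H_i] − Tr[ρ_a H_i]| ≤ 2ε for all i ∈ {1,…,m}. Then S(ρ_a‖ρ_b) ≤ 2ε·‖b − a‖₁, where ‖b − a‖₁ = ∑_{i=1}^m |b_i − a_i|. -/
open scoped Matrix.Norms.L2Operator ComplexOrder

namespace QBM13

variable {n m : ℕ}

/-- The Hamiltonian `H(θ) = ∑ i, θ i • H i`. -/
noncomputable def ham (H : Fin m → Matrix (Fin n) (Fin n) ℂ) (θ : Fin m → ℝ) :
    Matrix (Fin n) (Fin n) ℂ :=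
  ∑ i, θ i • H i

/-- The partition function `Z(θ) = Tr[exp H(θ)]` (its real part). -/
noncomputable def Z (H : Fin m → Matrix (Fin n) (Fin n) ℂ) (θ : Fin m → ℝ) : ℝ :=
  (NormedSpace.exp (ham H θ)).trace.re

/-- The Gibbs state `ρ_θ = exp H(θ) / Z(θ)`. -/
noncomputable def gibbs (H : Fin m → Matrix (Fin n) (Fin n) ℂ) (θ : Fin m → ℝ) :
    Matrix (Fin n) (Fin n) ℂ :=
  (Z H θ : ℂ)⁻¹ • NormedSpace.exp (ham H θ)

/-- The log-partition function `θ ↦ log Z(θ)`. -/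
noncomputable def logZ (H : Fin m → Matrix (Fin n) (Fin n) ℂ) (θ : Fin m → ℝ) : ℝ :=
  Real.log (Z H θ)

/-- The QBM objective `F(θ) = log Z(θ) − ∑ i, θ i * Tr[η H i]`. -/
noncomputable def F (H : Fin m → Matrix (Fin n) (Fin n) ℂ) (η : Matrix (Fin n) (Fin n) ℂ)
    (θ : Fin m → ℝ) : ℝ :=
  logZ H θ - ∑ i, θ i * (η * H i).trace.re

/-- The quantum relative entropy between two Gibbs states of the family:
`S(ρ_a‖ρ_b) = Tr[ρ_a (H(a) − H(b))] − log Z(a) + log Z(b)`. -/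
noncomputable def relEnt (H : Fin m → Matrix (Fin n) (Fin n) ℂ) (a b : Fin m → ℝ) : ℝ :=
  (gibbs H a * (ham H a - ham H b)).trace.re - logZ H a + logZ H b

lemma conj_diag_trace (U V : Matrix (Fin n) (Fin n) ℂ) (f g : Fin n → ℝ) :
    ((V * Matrix.diagonal (fun j => (g j : ℂ)) * star V) *
      (U * Matrix.diagonal (fun i => (f i : ℂ)) * star U)).trace.re =
      ∑ i, ∑ j, Complex.normSq ((star U * V) i j) * (g j * f i) := by
  have h1 : ((V * Matrix.diagonal (fun j => (g j : ℂ)) * star V) *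
      (U * Matrix.diagonal (fun i => (f i : ℂ)) * star U)).trace =
      ((star U * V) * Matrix.diagonal (fun j => (g j : ℂ)) *
        (star (star U * V) * Matrix.diagonal (fun i => (f i : ℂ)))).trace := by
    rw [← Matrix.mul_assoc, Matrix.trace_mul_comm, star_mul, star_star]
    simp only [Matrix.mul_assoc]
  rw [h1]
  generalize star U * V = W
  simp only [Matrix.trace, Matrix.diag_apply, Matrix.mul_apply (M := W * _), Complex.re_sum,
    Matrix.mul_diagonal, Matrix.star_apply]
  refine Finset.sum_congr rfl fun i _ => Finset.sum_congr rfl fun j _ => ?_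
  simp [Complex.normSq_apply]
  ring

lemma spectral_exp (A : Matrix (Fin n) (Fin n) ℂ) (hA : A.IsHermitian) :
    ∃ (U : Matrix (Fin n) (Fin n) ℂ) (f : Fin n → ℝ), star U * U = 1 ∧ U * star U = 1 ∧
      A = U * Matrix.diagonal (fun i => (f i : ℂ)) * star U ∧
      NormedSpace.exp A =
        U * Matrix.diagonal (fun i => ((Real.exp (f i) : ℝ) : ℂ)) * star U := by
  have h1 : star (hA.eigenvectorUnitary : Matrix (Fin n) (Fin n) ℂ) * hA.eigenvectorUnitary = 1 :=
    Unitary.coe_star_mul_self _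
  have h2 : (hA.eigenvectorUnitary : Matrix (Fin n) (Fin n) ℂ) * star
    (hA.eigenvectorUnitary : Matrix (Fin n) (Fin n) ℂ) = 1 := Unitary.coe_mul_star_self _
  have h3 : A = (hA.eigenvectorUnitary : Matrix (Fin n) (Fin n) ℂ) *
      Matrix.diagonal (fun i => (hA.eigenvalues i : ℂ)) *
      star (hA.eigenvectorUnitary : Matrix (Fin n) (Fin n) ℂ) := by
    conv_lhs => rw [hA.spectral_theorem]
    rw [Unitary.conjStarAlgAut_apply]
    rfl
  refine ⟨hA.eigenvectorUnitary, hA.eigenvalues, h1, h2, h3, ?_⟩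
  generalize (hA.eigenvectorUnitary : Matrix (Fin n) (Fin n) ℂ) = U at *
  have hinv : U⁻¹ = star U := Matrix.inv_eq_right_inv h2
  have hU : IsUnit U := ⟨⟨U, star U, h2, h1⟩, rfl⟩
  conv_lhs => rw [h3]
  rw [← hinv, Matrix.exp_conj _ _ hU, Matrix.exp_diagonal]
  congr 3
  funext i
  rw [Pi.coe_exp, Complex.ofReal_exp, Complex.exp_eq_exp_ℂ]

lemma gibbs_variational (A B : Matrix (Fin n) (Fin n) ℂ) (hA : A.IsHermitian)
    (hB : B.IsHermitian) :
    ((((NormedSpace.exp B).trace.re : ℂ)⁻¹ • NormedSpace.exp B) * (B - A)).trace.re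
      - Real.log (NormedSpace.exp B).trace.re + Real.log (NormedSpace.exp A).trace.re ≥ 0 := by
  rcases Nat.eq_zero_or_pos n with hn | hn
  · subst hn
    simp [Matrix.trace]
  haveI : Nonempty (Fin n) := ⟨⟨0, hn⟩⟩
  obtain ⟨U, f, hU1, hU2, hA', hAe⟩ := spectral_exp A hA
  obtain ⟨V, g, hV1, hV2, hB', hBe⟩ := spectral_exp B hB
  set P : Fin n → Fin n → ℝ := fun i j => Complex.normSq ((star U * V) i j) with hP
  have oneU : (1 : Matrix (Fin n) (Fin n) ℂ) =
      U * Matrix.diagonal (fun _ => ((1 : ℝ) : ℂ)) * star U := by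
    simp [hU2]
  have oneV : (1 : Matrix (Fin n) (Fin n) ℂ) =
      V * Matrix.diagonal (fun _ => ((1 : ℝ) : ℂ)) * star V := by
    simp [hV2]
  have hWW : (star U * V) * star (star U * V) = 1 := by
    rw [star_mul, star_star, Matrix.mul_assoc, ← Matrix.mul_assoc V, hV2, Matrix.one_mul, hU1]
  have hWW' : star (star U * V) * (star U * V) = 1 := by
    rw [star_mul, star_star, Matrix.mul_assoc, ← Matrix.mul_assoc U, hU2, Matrix.one_mul, hV1]
  have hrow : ∀ i, ∑ j, P i j = 1 := by
    intro i
    have := congrArg Complex.re (congrFun (congrFun hWW i) i)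
    rw [Matrix.mul_apply, Complex.re_sum] at this
    simpa [hP, Complex.normSq_apply] using this
  have hcol : ∀ j, ∑ i, P i j = 1 := by
    intro j
    have := congrArg Complex.re (congrFun (congrFun hWW' j) j)
    rw [Matrix.mul_apply, Complex.re_sum] at this
    simpa [hP, Complex.normSq_apply] using this
  have hZA : (NormedSpace.exp A).trace.re = ∑ i, Real.exp (f i) := by
    have h := conj_diag_trace U V (fun i => Real.exp (f i)) (fun _ => 1)
    rw [← oneV, ← hAe, Matrix.one_mul] at h
    rw [h]
    refine Finset.sum_congr rfl fun i _ => ?_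
    rw [← Finset.sum_mul, hrow i]; simp
  have hZB : (NormedSpace.exp B).trace.re = ∑ j, Real.exp (g j) := by
    have h := conj_diag_trace U V (fun _ => 1) (fun j => Real.exp (g j))
    rw [← oneU, ← hBe, Matrix.mul_one] at h
    rw [h, Finset.sum_comm]
    refine Finset.sum_congr rfl fun j _ => ?_
    rw [← Finset.sum_mul, hcol j]; simp
  have hBA : (NormedSpace.exp B * A).trace.re =
      ∑ i, ∑ j, P i j * (Real.exp (g j) * f i) := by
    rw [hBe]
    conv_lhs => rw [hA']
    exact conj_diag_trace U V f (fun j => Real.exp (g j))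
  have hBB : (NormedSpace.exp B * B).trace.re =
      ∑ i, ∑ j, P i j * (Real.exp (g j) * g j) := by
    have h := conj_diag_trace U V (fun _ => 1) (fun j => Real.exp (g j) * g j)
    rw [← oneU, Matrix.mul_one] at h
    have h2 : NormedSpace.exp B * B =
        V * Matrix.diagonal (fun j => ((Real.exp (g j) * g j : ℝ) : ℂ)) * star V := by
      rw [hBe]
      conv_lhs => rw [hB']
      calc _ = V * Matrix.diagonal (fun j => ((Real.exp (g j) : ℝ) : ℂ)) * (star V * V) *
            Matrix.diagonal (fun j => (g j : ℂ)) * star V := by simp only [Matrix.mul_assoc]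
        _ = _ := by
          rw [hV1, Matrix.mul_one, Matrix.mul_assoc V, Matrix.diagonal_mul_diagonal]
          simp only [Complex.ofReal_mul]
    rw [h2, h]
    simp [hP]
  have hpA : 0 < (NormedSpace.exp A).trace.re := by
    rw [hZA]; exact Finset.sum_pos (fun i _ => Real.exp_pos _) Finset.univ_nonempty
  have hpB : 0 < (NormedSpace.exp B).trace.re := by
    rw [hZB]; exact Finset.sum_pos (fun i _ => Real.exp_pos _) Finset.univ_nonempty
  rw [← Complex.ofReal_inv, Matrix.smul_mul, Matrix.trace_smul, smul_eq_mul,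
    Complex.re_ofReal_mul, Matrix.mul_sub, Matrix.trace_sub, Complex.sub_re, hBA, hBB]
  generalize (NormedSpace.exp A).trace.re = za at *
  generalize (NormedSpace.exp B).trace.re = zb at *
  have key : ∀ i j, P i j * (Real.exp (f i) / za) ≥
      P i j * (Real.exp (g j) / zb * (1 + (f i - Real.log za) - (g j - Real.log zb))) := by
    intro i j
    refine mul_le_mul_of_nonneg_left ?_ (Complex.normSq_nonneg _)
    have h1 : Real.exp (f i) / za = Real.exp (f i - Real.log za) := by
      rw [Real.exp_sub, Real.exp_log hpA]
    have h2 : Real.exp (g j) / zb = Real.exp (g j - Real.log zb) := by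
      rw [Real.exp_sub, Real.exp_log hpB]
    rw [h1, h2]
    generalize f i - Real.log za = x
    generalize g j - Real.log zb = y
    have h3 := Real.add_one_le_exp (x - y)
    have h4 : Real.exp x = Real.exp y * Real.exp (x - y) := by
      rw [← Real.exp_add]; congr 1; ring
    rw [h4]
    exact mul_le_mul_of_nonneg_left (by linarith) (Real.exp_pos _).le
  have hsum := Finset.sum_le_sum fun i (_ : i ∈ (Finset.univ : Finset (Fin n))) =>
    Finset.sum_le_sum fun j (_ : j ∈ (Finset.univ : Finset (Fin n))) => key i j
  have e1 : ∑ i, ∑ j, P i j * (Real.exp (f i) / za) = 1 := by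
    simp only [← Finset.sum_mul, hrow, one_mul, ← Finset.sum_div]
    rw [← hZA, div_self hpA.ne']
  have e2 : ∑ i, ∑ j, P i j * Real.exp (g j) = zb := by
    rw [Finset.sum_comm]
    simp only [← Finset.sum_mul, hcol, one_mul]
    exact hZB.symm
  have e3 : ∑ i, ∑ j, P i j * (Real.exp (g j) / zb *
      (1 + (f i - Real.log za) - (g j - Real.log zb))) =
      zb⁻¹ * (1 - Real.log za + Real.log zb) * (∑ i, ∑ j, P i j * Real.exp (g j))
       + zb⁻¹ * (∑ i, ∑ j, P i j * (Real.exp (g j) * f i))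
       - zb⁻¹ * (∑ i, ∑ j, P i j * (Real.exp (g j) * g j)) := by
    simp only [Finset.mul_sum, ← Finset.sum_add_distrib, ← Finset.sum_sub_distrib]
    refine Finset.sum_congr rfl fun i _ => Finset.sum_congr rfl fun j _ => ?_
    ring
  rw [e1, e3, e2] at hsum
  have e4 : zb⁻¹ * (1 - Real.log za + Real.log zb) * zb = 1 - Real.log za + Real.log zb := by
    field_simp
  rw [e4] at hsum
  rw [mul_sub]
  linarith

lemma ham_herm (H : Fin m → Matrix (Fin n) (Fin n) ℂ)
    (hHerm : ∀ i, (H i).IsHermitian) (θ : Fin m → ℝ) : (ham H θ).IsHermitian := by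
  unfold ham Matrix.IsHermitian
  rw [Matrix.conjTranspose_sum]
  refine Finset.sum_congr rfl fun i _ => ?_
  rw [Matrix.conjTranspose_smul, (hHerm i).eq]
  simp

lemma trace_ham (H : Fin m → Matrix (Fin n) (Fin n) ℂ) (R : Matrix (Fin n) (Fin n) ℂ)
    (θ : Fin m → ℝ) : (R * ham H θ).trace.re = ∑ i, θ i * (R * H i).trace.re := by
  unfold ham
  rw [Finset.mul_sum, Matrix.trace_sum, Complex.re_sum]
  refine Finset.sum_congr rfl fun i _ => ?_
  rw [Matrix.mul_smul, Matrix.trace_smul, Complex.smul_re, smul_eq_mul]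

/-- If all Gibbs expectation values of `ρ_a` and `ρ_b` agree to within `2ε`, then
`S(ρ_a‖ρ_b) ≤ 2ε·‖b − a‖₁`. -/
theorem relEnt_le_of_close_expectations (H : Fin m → Matrix (Fin n) (Fin n) ℂ)
    (hHerm : ∀ i, (H i).IsHermitian) (a b : Fin m → ℝ) (ε : ℝ) (hε : 0 < ε)
    (hclose : ∀ i, |(gibbs H b * H i).trace.re - (gibbs H a * H i).trace.re| ≤ 2 * ε) :
    relEnt H a b ≤ 2 * ε * ∑ i, |b i - a i| := by
  have h0 : 0 ≤ relEnt H b a :=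
    gibbs_variational (ham H a) (ham H b) (ham_herm H hHerm a) (ham_herm H hHerm b)
  have hs : relEnt H a b + relEnt H b a =
      ∑ i, (b i - a i) * ((gibbs H b * H i).trace.re - (gibbs H a * H i).trace.re) := by
    unfold relEnt
    simp only [Matrix.mul_sub, Matrix.trace_sub, Complex.sub_re, trace_ham, sub_mul, mul_sub,
      Finset.sum_sub_distrib]
    ring
  have hb : ∑ i, (b i - a i) * ((gibbs H b * H i).trace.re - (gibbs H a * H i).trace.re) ≤
      2 * ε * ∑ i, |b i - a i| := by
    rw [Finset.mul_sum]
    refine Finset.sum_le_sum fun i _ => ?_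
    refine (le_abs_self _).trans ?_
    rw [abs_mul, mul_comm]
    exact mul_le_mul_of_nonneg_right (hclose i) (abs_nonneg _)
  linarith

end QBM13
end

section
/- (Peierls–Bogoliubov / Gibbs variational inequality.) For all parameter vectors a, b ∈ ℝ^m, log Z(b) ≥ log Z(a) + Tr[ρ_a (H(b) − H(a))]; equivalently, the quantum relative entropy between Gibbs states is nonnegative: S(ρ_a‖ρ_b) ≥ 0. -/
open scoped Matrix.Norms.L2Operator ComplexOrder

namespace QBM14

variable {n m : ℕ}

/-- The Hamiltonian `H(θ) = ∑ i, θ i • H i`. -/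
noncomputable def ham (H : Fin m → Matrix (Fin n) (Fin n) ℂ) (θ : Fin m → ℝ) :
    Matrix (Fin n) (Fin n) ℂ :=
  ∑ i, θ i • H i

/-- The partition function `Z(θ) = Tr[exp H(θ)]` (its real part). -/
noncomputable def Z (H : Fin m → Matrix (Fin n) (Fin n) ℂ) (θ : Fin m → ℝ) : ℝ :=
  (NormedSpace.exp (ham H θ)).trace.re

/-- The Gibbs state `ρ_θ = exp H(θ) / Z(θ)`. -/
noncomputable def gibbs (H : Fin m → Matrix (Fin n) (Fin n) ℂ) (θ : Fin m → ℝ) :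
    Matrix (Fin n) (Fin n) ℂ :=
  (Z H θ : ℂ)⁻¹ • NormedSpace.exp (ham H θ)

/-- The log-partition function `θ ↦ log Z(θ)`. -/
noncomputable def logZ (H : Fin m → Matrix (Fin n) (Fin n) ℂ) (θ : Fin m → ℝ) : ℝ :=
  Real.log (Z H θ)

/-- The QBM objective `F(θ) = log Z(θ) − ∑ i, θ i * Tr[η H i]`. -/
noncomputable def F (H : Fin m → Matrix (Fin n) (Fin n) ℂ) (η : Matrix (Fin n) (Fin n) ℂ)
    (θ : Fin m → ℝ) : ℝ :=
  logZ H θ - ∑ i, θ i * (η * H i).trace.re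

/-- The quantum relative entropy between two Gibbs states of the family:
`S(ρ_a‖ρ_b) = Tr[ρ_a (H(a) − H(b))] − log Z(a) + log Z(b)`. -/
noncomputable def relEnt (H : Fin m → Matrix (Fin n) (Fin n) ℂ) (a b : Fin m → ℝ) : ℝ :=
  (gibbs H a * (ham H a - ham H b)).trace.re - logZ H a + logZ H b

open Matrix in
lemma diag_exists (A : Matrix (Fin n) (Fin n) ℂ) (hA : A.IsHermitian) :
    ∃ (U : Matrix (Fin n) (Fin n) ℂ) (d : Fin n → ℝ), U * Uᴴ = 1 ∧ Uᴴ * U = 1 ∧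
      A = U * diagonal (fun i => (d i : ℂ)) * Uᴴ ∧
      NormedSpace.exp A = U * diagonal (fun i => ((Real.exp (d i) : ℝ) : ℂ)) * Uᴴ := by
  have h1 : (hA.eigenvectorUnitary : Matrix (Fin n) (Fin n) ℂ) *
      (hA.eigenvectorUnitary : Matrix (Fin n) (Fin n) ℂ)ᴴ = 1 :=
    Unitary.mul_star_self_of_mem hA.eigenvectorUnitary.2
  have h2 : (hA.eigenvectorUnitary : Matrix (Fin n) (Fin n) ℂ)ᴴ *
      (hA.eigenvectorUnitary : Matrix (Fin n) (Fin n) ℂ) = 1 :=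
    Unitary.star_mul_self_of_mem hA.eigenvectorUnitary.2
  have h3 : A = (hA.eigenvectorUnitary : Matrix (Fin n) (Fin n) ℂ) *
      diagonal (fun i => (hA.eigenvalues i : ℂ)) *
      (hA.eigenvectorUnitary : Matrix (Fin n) (Fin n) ℂ)ᴴ := by
    have := hA.spectral_theorem
    rw [Unitary.conjStarAlgAut_apply] at this
    exact this
  generalize (hA.eigenvectorUnitary : Matrix (Fin n) (Fin n) ℂ) = U at h1 h2 h3
  refine ⟨U, hA.eigenvalues, h1, h2, h3, ?_⟩
  generalize hA.eigenvalues = d at h3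
  have hU : IsUnit U := ⟨⟨U, Uᴴ, h1, h2⟩, rfl⟩
  have hi : U⁻¹ = Uᴴ := Matrix.inv_eq_right_inv h1
  rw [h3, ← hi, Matrix.exp_conj _ _ hU, Matrix.exp_diagonal]
  congr 3
  ext i
  rw [Pi.coe_exp, ← Complex.exp_eq_exp_ℂ, Complex.ofReal_exp]

open Matrix in
lemma trace_conj (U : Matrix (Fin n) (Fin n) ℂ) (hU : Uᴴ * U = 1) (d : Fin n → ℝ) :
    (U * diagonal (fun i => (d i : ℂ)) * Uᴴ).trace.re = ∑ i, d i := by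
  rw [Matrix.trace_mul_comm, ← Matrix.mul_assoc, hU, Matrix.one_mul, Matrix.trace_diagonal]
  simp

open Matrix in
lemma trace_two (U V : Matrix (Fin n) (Fin n) ℂ) (d e : Fin n → ℝ) :
    ((U * diagonal (fun i => (d i : ℂ)) * Uᴴ) *
      (V * diagonal (fun i => (e i : ℂ)) * Vᴴ)).trace.re =
      ∑ i, ∑ j, Complex.normSq ((Uᴴ * V) i j) * (d i * e j) := by
  have : ((U * diagonal (fun i => (d i : ℂ)) * Uᴴ) *
      (V * diagonal (fun i => (e i : ℂ)) * Vᴴ)).trace =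
      ((diagonal (fun i => (d i : ℂ)) * (Uᴴ * V)) *
        (diagonal (fun i => (e i : ℂ)) * (Uᴴ * V)ᴴ)).trace := by
    rw [Matrix.conjTranspose_mul, Matrix.conjTranspose_conjTranspose,
      Matrix.mul_assoc U, Matrix.mul_assoc U, Matrix.trace_mul_comm U]
    simp only [Matrix.mul_assoc]
  rw [this]
  generalize Uᴴ * V = W
  simp only [Matrix.trace, Matrix.diag, Matrix.mul_apply (M := _ * W), Complex.re_sum,
    Matrix.diagonal_mul, Matrix.conjTranspose_apply]
  refine Finset.sum_congr rfl fun i _ => Finset.sum_congr rfl fun j _ => ?_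
  simp [Complex.normSq_apply]
  ring

open Matrix in
lemma row_sum (W : Matrix (Fin n) (Fin n) ℂ) (hW : W * Wᴴ = 1) (i : Fin n) :
    ∑ j, Complex.normSq (W i j) = 1 := by
  have := congrArg Complex.re (congrFun (congrFun hW i) i)
  simp only [Matrix.mul_apply, Complex.re_sum, Matrix.conjTranspose_apply,
    Matrix.one_apply_eq, Complex.one_re] at this
  rw [← this]
  refine Finset.sum_congr rfl fun j _ => ?_
  simp [Complex.normSq_apply]

open Matrix in
lemma col_sum (W : Matrix (Fin n) (Fin n) ℂ) (hW : Wᴴ * W = 1) (j : Fin n) :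
    ∑ i, Complex.normSq (W i j) = 1 := by
  have := congrArg Complex.re (congrFun (congrFun hW j) j)
  simp only [Matrix.mul_apply, Complex.re_sum, Matrix.conjTranspose_apply,
    Matrix.one_apply_eq, Complex.one_re] at this
  rw [← this]
  refine Finset.sum_congr rfl fun i _ => ?_
  simp [Complex.normSq_apply]

open Matrix in
/-- Positivity of the trace of the exponential and the Klein-type inequality with a shift. -/
lemma klein (A B : Matrix (Fin n) (Fin n) ℂ) (hA : A.IsHermitian) (hB : B.IsHermitian)
    (c : ℝ) :
    (NormedSpace.exp A).trace.re + (NormedSpace.exp A * (B - A)).trace.re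
      - c * (NormedSpace.exp A).trace.re ≤ Real.exp (-c) * (NormedSpace.exp B).trace.re := by
  obtain ⟨U, d, hU1, hU2, hAd, hAe⟩ := diag_exists A hA
  obtain ⟨V, e, hV1, hV2, hBd, hBe⟩ := diag_exists B hB
  have hW1 : (Uᴴ * V) * (Uᴴ * V)ᴴ = 1 := by
    rw [conjTranspose_mul, conjTranspose_conjTranspose, Matrix.mul_assoc, ← Matrix.mul_assoc V,
      hV1, Matrix.one_mul, hU2]
  have hW2 : (Uᴴ * V)ᴴ * (Uᴴ * V) = 1 := by
    rw [conjTranspose_mul, conjTranspose_conjTranspose, Matrix.mul_assoc, ← Matrix.mul_assoc U,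
      hU1, Matrix.one_mul, hV2]
  have hr := row_sum _ hW1
  have hc := col_sum _ hW2
  have hAA : (NormedSpace.exp A * A).trace.re = ∑ i, Real.exp (d i) * d i := by
    rw [← trace_conj U hU2]
    congr 2
    rw [hAe]
    nth_rewrite 1 [hAd]
    rw [Matrix.mul_assoc _ Uᴴ, ← Matrix.mul_assoc Uᴴ, ← Matrix.mul_assoc Uᴴ, hU2, Matrix.one_mul,
      ← Matrix.mul_assoc, Matrix.mul_assoc U, Matrix.diagonal_mul_diagonal]
    simp
  have hAB : (NormedSpace.exp A * B).trace.re =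
      ∑ i, ∑ j, Complex.normSq ((Uᴴ * V) i j) * (Real.exp (d i) * e j) := by
    rw [← trace_two, ← hAe, ← hBd]
  have hAt : (NormedSpace.exp A).trace.re = ∑ i, Real.exp (d i) := by
    rw [hAe, trace_conj U hU2]
  have hBt : (NormedSpace.exp B).trace.re = ∑ i, Real.exp (e i) := by
    rw [hBe, trace_conj V hV2]
  rw [Matrix.mul_sub, Matrix.trace_sub, Complex.sub_re, hAA, hAB, hAt, hBt]
  generalize Uᴴ * V = W at hr hc
  have key : ∑ i, ∑ j, Complex.normSq (W i j) * (Real.exp (d i) * (1 + (e j - c - d i))) ≤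
      ∑ i, ∑ j, Complex.normSq (W i j) * (Real.exp (-c) * Real.exp (e j)) := by
    refine Finset.sum_le_sum fun i _ => Finset.sum_le_sum fun j _ => ?_
    refine mul_le_mul_of_nonneg_left ?_ (Complex.normSq_nonneg _)
    have h := Real.add_one_le_exp (e j - c - d i)
    have h' : Real.exp (-c) * Real.exp (e j) = Real.exp (d i) * Real.exp (e j - c - d i) := by
      rw [← Real.exp_add, ← Real.exp_add]
      congr 1
      ring
    rw [h']
    exact mul_le_mul_of_nonneg_left (by linarith) (Real.exp_pos _).le
  have hR : ∑ i, ∑ j, Complex.normSq (W i j) * (Real.exp (-c) * Real.exp (e j)) =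
      Real.exp (-c) * ∑ j, Real.exp (e j) := by
    rw [Finset.sum_comm, Finset.mul_sum]
    refine Finset.sum_congr rfl fun j _ => ?_
    rw [← Finset.sum_mul, hc, one_mul]
  have hL : ∑ i, ∑ j, Complex.normSq (W i j) * (Real.exp (d i) * (1 + (e j - c - d i))) =
      ∑ i, Real.exp (d i) + (∑ i, ∑ j, Complex.normSq (W i j) * (Real.exp (d i) * e j) -
        ∑ i, Real.exp (d i) * d i) - c * ∑ i, Real.exp (d i) := by
    rw [Finset.mul_sum, ← Finset.sum_sub_distrib, ← Finset.sum_add_distrib,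
      ← Finset.sum_sub_distrib]
    refine Finset.sum_congr rfl fun i _ => ?_
    have : ∀ j, Complex.normSq (W i j) * (Real.exp (d i) * (1 + (e j - c - d i))) =
        Complex.normSq (W i j) * (Real.exp (d i) * e j) +
        Complex.normSq (W i j) * (Real.exp (d i) * (1 - c - d i)) := fun j => by ring
    simp only [this]
    rw [Finset.sum_add_distrib, ← Finset.sum_mul _ _ (Real.exp (d i) * (1 - c - d i)), hr]
    ring
  linarith

lemma trace_exp_pos (hn : n ≠ 0) (A : Matrix (Fin n) (Fin n) ℂ) (hA : A.IsHermitian) :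
    0 < (NormedSpace.exp A).trace.re := by
  obtain ⟨U, d, hU1, hU2, hAd, hAe⟩ := diag_exists A hA
  rw [hAe, trace_conj U hU2]
  have : NeZero n := ⟨hn⟩
  exact Finset.sum_pos (fun i _ => Real.exp_pos _) Finset.univ_nonempty

lemma ham_herm (H : Fin m → Matrix (Fin n) (Fin n) ℂ)
    (hHerm : ∀ i, (H i).IsHermitian) (a : Fin m → ℝ) : (ham H a).IsHermitian := by
  unfold ham Matrix.IsHermitian
  rw [Matrix.conjTranspose_sum]
  refine Finset.sum_congr rfl fun i _ => ?_
  rw [Matrix.conjTranspose_smul, (hHerm i).eq, star_trivial]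

lemma main_ineq (H : Fin m → Matrix (Fin n) (Fin n) ℂ)
    (hHerm : ∀ i, (H i).IsHermitian) (a b : Fin m → ℝ) :
    logZ H a + (gibbs H a * (ham H b - ham H a)).trace.re ≤ logZ H b := by
  rcases eq_or_ne n 0 with rfl | hn
  · simp [logZ, Z, Matrix.trace]
  have ha := ham_herm H hHerm a
  have hb := ham_herm H hHerm b
  have pa : 0 < Z H a := trace_exp_pos hn _ ha
  have pb : 0 < Z H b := trace_exp_pos hn _ hb
  have k := klein _ _ ha hb (logZ H b - logZ H a)
  change Z H a + _ - _ * Z H a ≤ _ * Z H b at k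
  have he : Real.exp (-(logZ H b - logZ H a)) * Z H b = Z H a := by
    rw [neg_sub, Real.exp_sub, logZ, logZ, Real.exp_log pa, Real.exp_log pb]
    field_simp
  rw [he] at k
  have hg : (gibbs H a * (ham H b - ham H a)).trace.re =
      (Z H a)⁻¹ * (NormedSpace.exp (ham H a) * (ham H b - ham H a)).trace.re := by
    rw [gibbs, Matrix.smul_mul, Matrix.trace_smul, smul_eq_mul, ← Complex.ofReal_inv,
      Complex.re_ofReal_mul]
  rw [hg]
  have : (Z H a)⁻¹ * (NormedSpace.exp (ham H a) * (ham H b - ham H a)).trace.re ≤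
      logZ H b - logZ H a := by
    rw [inv_mul_le_iff₀ pa]
    linarith
  linarith

/-- **Peierls–Bogoliubov / Gibbs variational inequality.**
`log Z(b) ≥ log Z(a) + Tr[ρ_a (H(b) − H(a))]`; equivalently `S(ρ_a‖ρ_b) ≥ 0`. -/
theorem peierls_bogoliubov (H : Fin m → Matrix (Fin n) (Fin n) ℂ)
    (hHerm : ∀ i, (H i).IsHermitian) (a b : Fin m → ℝ) :
    logZ H b ≥ logZ H a + (gibbs H a * (ham H b - ham H a)).trace.re ∧
      0 ≤ relEnt H a b := by
  have h := main_ineq H hHerm a b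
  refine ⟨h, ?_⟩
  have e : (gibbs H a * (ham H a - ham H b)).trace.re =
      -(gibbs H a * (ham H b - ham H a)).trace.re := by
    rw [← neg_sub (ham H b), Matrix.mul_neg, Matrix.trace_neg, Complex.neg_re]
  rw [relEnt, e]
  linarith

end QBM14
end

section
/- (Quantum Pinsker bound on expectation values for Gibbs states.) For all parameter vectors a, b ∈ ℝ^m and every nonzero Hermitian n×n matrix H, |Tr[H·(ρ_a − ρ_b)]| ≤ ‖H‖·√(2·S(ρ_a‖ρ_b)), where ‖H‖ is the operator (spectral) norm. -/
open scoped Matrix.Norms.L2Operator ComplexOrder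

namespace QBM15

variable {n m : ℕ}

/-- The Hamiltonian `H(θ) = ∑ i, θ i • H i`. -/
noncomputable def ham (H : Fin m → Matrix (Fin n) (Fin n) ℂ) (θ : Fin m → ℝ) :
    Matrix (Fin n) (Fin n) ℂ :=
  ∑ i, θ i • H i

/-- The partition function `Z(θ) = Tr[exp H(θ)]` (its real part). -/
noncomputable def Z (H : Fin m → Matrix (Fin n) (Fin n) ℂ) (θ : Fin m → ℝ) : ℝ :=
  (NormedSpace.exp (ham H θ)).trace.re

/-- The Gibbs state `ρ_θ = exp H(θ) / Z(θ)`. -/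
noncomputable def gibbs (H : Fin m → Matrix (Fin n) (Fin n) ℂ) (θ : Fin m → ℝ) :
    Matrix (Fin n) (Fin n) ℂ :=
  (Z H θ : ℂ)⁻¹ • NormedSpace.exp (ham H θ)

/-- The log-partition function `θ ↦ log Z(θ)`. -/
noncomputable def logZ (H : Fin m → Matrix (Fin n) (Fin n) ℂ) (θ : Fin m → ℝ) : ℝ :=
  Real.log (Z H θ)

/-- The QBM objective `F(θ) = log Z(θ) − ∑ i, θ i * Tr[η H i]`. -/
noncomputable def F (H : Fin m → Matrix (Fin n) (Fin n) ℂ) (η : Matrix (Fin n) (Fin n) ℂ)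
    (θ : Fin m → ℝ) : ℝ :=
  logZ H θ - ∑ i, θ i * (η * H i).trace.re

/-- The quantum relative entropy between two Gibbs states of the family:
`S(ρ_a‖ρ_b) = Tr[ρ_a (H(a) − H(b))] − log Z(a) + log Z(b)`. -/
noncomputable def relEnt (H : Fin m → Matrix (Fin n) (Fin n) ℂ) (a b : Fin m → ℝ) : ℝ :=
  (gibbs H a * (ham H a - ham H b)).trace.re - logZ H a + logZ H b

lemma log_bound (t : ℝ) (ht : 0 < t) : (t-1)*(5*t+1)/(t*(2*t+4)) ≤ Real.log t := by
  set g : ℝ → ℝ := fun t => Real.log t - (t-1)*(5*t+1)/(t*(2*t+4)) with hg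
  have hd : ∀ x : ℝ, 0 < x → HasDerivAt g ((x-1)^3/(x^2*(x+2)^2)) x := by
    intro x hx
    have h1 : HasDerivAt (fun t : ℝ => (t-1)*(5*t+1)) (10*x-4) x := by
      have := ((hasDerivAt_id x).sub_const 1).mul (((hasDerivAt_id x).const_mul 5).add_const 1)
      refine this.congr_deriv ?_
      simp; ring
    have h2 : HasDerivAt (fun t : ℝ => t*(2*t+4)) (4*x+4) x := by
      have := (hasDerivAt_id x).mul (((hasDerivAt_id x).const_mul 2).add_const 4)
      refine this.congr_deriv ?_
      simp; ring
    have h3 := (Real.hasDerivAt_log hx.ne').sub (h1.div h2 (by positivity))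
    refine h3.congr_deriv ?_
    field_simp
    ring
  have g1 : g 1 = 0 := by simp [hg]
  have key : 0 ≤ g t := by
    rcases le_total t 1 with h | h
    · have : AntitoneOn g (Set.Icc t 1) := by
        apply antitoneOn_of_hasDerivWithinAt_nonpos (f' := fun x => (x-1)^3/(x^2*(x+2)^2)) (convex_Icc _ _)
        · intro x hx; exact (hd x (ht.trans_le hx.1)).continuousAt.continuousWithinAt
        · intro x hx; rw [interior_Icc] at hx
          exact (hd x (ht.trans hx.1)).hasDerivWithinAt
        · intro x hx; rw [interior_Icc] at hx
          apply div_nonpos_of_nonpos_of_nonneg _ (by positivity)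
          have : 0 ≤ 1 - x := by linarith [hx.2]
          have := pow_nonneg this 3
          nlinarith
      rw [← g1]
      exact this ⟨le_rfl, h⟩ ⟨h, le_rfl⟩ h
    · have : MonotoneOn g (Set.Icc 1 t) := by
        apply monotoneOn_of_hasDerivWithinAt_nonneg (f' := fun x => (x-1)^3/(x^2*(x+2)^2)) (convex_Icc _ _)
        · intro x hx; exact (hd x (one_pos.trans_le hx.1)).continuousAt.continuousWithinAt
        · intro x hx; rw [interior_Icc] at hx
          exact (hd x (one_pos.trans hx.1)).hasDerivWithinAt
        · intro x hx; rw [interior_Icc] at hx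
          have : 0 ≤ x - 1 := by linarith [hx.1]
          positivity
      rw [← g1]
      exact this ⟨le_rfl, h⟩ ⟨h, le_rfl⟩ h
  simp only [hg] at key
  linarith

lemma scalar_bound (x y : ℝ) (hx : 0 < x) (hy : 0 < y) :
    (x-y)^2 ≤ (2/3*x+4/3*y) * (x * Real.log x - x * Real.log y - x + y) := by
  have h := log_bound (x/y) (by positivity)
  rw [Real.log_div hx.ne' hy.ne'] at h
  have e : (x/y-1)*(5*(x/y)+1)/((x/y)*(2*(x/y)+4)) = (x-y)*(5*x+y)/(x*(2*x+4*y)) := by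
    field_simp
  rw [e, div_le_iff₀ (by positivity)] at h
  nlinarith

lemma col_bound (M : Matrix (Fin n) (Fin n) ℂ) (i : Fin n) :
    ∑ j, ‖M j i‖ ^ 2 ≤ ‖M‖ ^ 2 := by
  have h := Matrix.l2_opNorm_mulVec M (EuclideanSpace.single i (1:ℂ))
  rw [EuclideanSpace.norm_single, norm_one, mul_one] at h
  have h2 := pow_le_pow_left₀ (norm_nonneg _) h 2
  rw [EuclideanSpace.norm_sq_eq] at h2
  simpa using h2

lemma row_bound (M : Matrix (Fin n) (Fin n) ℂ) (j : Fin n) :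
    ∑ i, ‖M j i‖ ^ 2 ≤ ‖M‖ ^ 2 := by
  have h := col_bound (M.conjTranspose) j
  rw [Matrix.l2_opNorm_conjTranspose] at h
  simpa using h

lemma col_sum (U : Matrix.unitaryGroup (Fin n) ℂ) (i : Fin n) :
    ∑ j, ‖(U : Matrix (Fin n) (Fin n) ℂ) j i‖ ^ 2 = 1 := by
  have h : (star (U : Matrix (Fin n) (Fin n) ℂ) * U) i i = 1 := by
    rw [Unitary.coe_star_mul_self]; simp
  rw [Matrix.mul_apply] at h
  have h2 : ∀ j, (star (U : Matrix (Fin n) (Fin n) ℂ)) i j * (U : Matrix (Fin n) (Fin n) ℂ) j i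
      = ((‖(U : Matrix (Fin n) (Fin n) ℂ) j i‖ ^ 2 : ℝ) : ℂ) := by
    intro j
    rw [Matrix.star_apply, Complex.star_def, Complex.conj_mul']
    push_cast; rfl
  simp only [h2] at h
  exact_mod_cast h

lemma row_sum (U : Matrix.unitaryGroup (Fin n) ℂ) (i : Fin n) :
    ∑ j, ‖(U : Matrix (Fin n) (Fin n) ℂ) i j‖ ^ 2 = 1 := by
  have h := col_sum (star U) i
  simpa using h

lemma core (C : Matrix.unitaryGroup (Fin n) ℂ) (M : Matrix (Fin n) (Fin n) ℂ) (p q : Fin n → ℝ)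
    (hp : ∀ i, 0 < p i) (hq : ∀ i, 0 < q i) (hp1 : ∑ i, p i = 1) (hq1 : ∑ i, q i = 1) :
    (∑ i, ∑ j, ((C : Matrix (Fin n) (Fin n) ℂ) i j * M j i).re * (p i - q j)) ^ 2 ≤
      ‖M‖ ^ 2 * (2 * (∑ i, p i * Real.log (p i) -
        ∑ i, ∑ j, p i * ‖(C : Matrix (Fin n) (Fin n) ℂ) i j‖ ^ 2 * Real.log (q j))) := by
  set c : Fin n → Fin n → ℝ := fun i j => ‖(C : Matrix (Fin n) (Fin n) ℂ) i j‖ ^ 2 with hc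
  have hc1 : ∀ i, ∑ j, c i j = 1 := fun i => row_sum C i
  have hc2 : ∀ j, ∑ i, c i j = 1 := fun j => col_sum C j
  set d : Fin n → Fin n → ℝ := fun i j =>
    p i * Real.log (p i) - p i * Real.log (q j) - p i + q j with hd
  have hw : ∀ i j, 0 < 2/3 * p i + 4/3 * q j := fun i j => by
    have := hp i; have := hq j; positivity
  have hd1 : ∀ i j, (p i - q j)^2 ≤ (2/3 * p i + 4/3 * q j) * d i j := fun i j =>
    scalar_bound _ _ (hp i) (hq j)
  have hd0 : ∀ i j, 0 ≤ d i j := fun i j => by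
    by_contra h
    push Not at h
    have := mul_neg_of_pos_of_neg (hw i j) h
    linarith [hd1 i j, sq_nonneg (p i - q j)]
  have cs := Finset.sum_sq_le_sum_mul_sum_of_sq_le_mul (Finset.univ : Finset (Fin n × Fin n))
    (r := fun x => ((C : Matrix (Fin n) (Fin n) ℂ) x.1 x.2 * M x.2 x.1).re * (p x.1 - q x.2))
    (f := fun x => c x.1 x.2 * d x.1 x.2)
    (g := fun x => ‖M x.2 x.1‖ ^ 2 * (2/3 * p x.1 + 4/3 * q x.2))
    (fun x _ => mul_nonneg (sq_nonneg _) (hd0 _ _))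
    (fun x _ => mul_nonneg (sq_nonneg _) (hw _ _).le)
    (fun x _ => by
      have h1 : ((C : Matrix (Fin n) (Fin n) ℂ) x.1 x.2 * M x.2 x.1).re ^ 2
          ≤ c x.1 x.2 * ‖M x.2 x.1‖ ^ 2 := by
        rw [hc, ← mul_pow, ← norm_mul, ← sq_abs]
        exact pow_le_pow_left₀ (abs_nonneg _) (Complex.abs_re_le_norm _) 2
      rw [mul_pow]
      calc _ ≤ (c x.1 x.2 * ‖M x.2 x.1‖ ^ 2) * ((2/3 * p x.1 + 4/3 * q x.2) * d x.1 x.2) :=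
            mul_le_mul h1 (hd1 _ _) (sq_nonneg _) (mul_nonneg (sq_nonneg _) (sq_nonneg _))
        _ = _ := by ring)
  simp only [Fintype.sum_prod_type] at cs
  have hf : ∑ i, ∑ j, c i j * d i j = ∑ i, p i * Real.log (p i) -
        ∑ i, ∑ j, p i * c i j * Real.log (q j) := by
    have e : ∀ i j, c i j * d i j = c i j * (p i * Real.log (p i)) - p i * c i j * Real.log (q j)
        - c i j * p i + c i j * q j := fun i j => by simp only [hd]; ring
    simp only [e, Finset.sum_add_distrib, Finset.sum_sub_distrib]
    rw [Finset.sum_comm (f := fun i j => c i j * q j)]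
    simp only [← Finset.sum_mul, hc1, hc2, one_mul, hp1, hq1]
    ring
  have hg : ∑ i, ∑ j, ‖M j i‖ ^ 2 * (2/3 * p i + 4/3 * q j) ≤ 2 * ‖M‖ ^ 2 := by
    have e : ∀ i j, ‖M j i‖ ^ 2 * (2/3 * p i + 4/3 * q j) = ‖M j i‖ ^ 2 * (2/3 * p i) +
      ‖M j i‖ ^ 2 * (4/3 * q j) := fun i j => by ring
    simp only [e, Finset.sum_add_distrib]
    rw [Finset.sum_comm (f := fun i j => ‖M j i‖ ^ 2 * (4/3 * q j))]
    simp only [← Finset.sum_mul]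
    have h1 : ∑ i, (∑ j, ‖M j i‖ ^ 2) * (2/3 * p i) ≤ ∑ i, ‖M‖ ^ 2 * (2/3 * p i) :=
      Finset.sum_le_sum fun i _ => mul_le_mul_of_nonneg_right (col_bound M i)
        (by have := hp i; positivity)
    have h2 : ∑ j, (∑ i, ‖M j i‖ ^ 2) * (4/3 * q j) ≤ ∑ j, ‖M‖ ^ 2 * (4/3 * q j) :=
      Finset.sum_le_sum fun i _ => mul_le_mul_of_nonneg_right (row_bound M i)
        (by have := hq i; positivity)
    simp only [← Finset.mul_sum, hp1, hq1] at h1 h2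
    linarith
  have hf0 : 0 ≤ ∑ i, ∑ j, c i j * d i j :=
    Finset.sum_nonneg fun i _ => Finset.sum_nonneg fun j _ => mul_nonneg (sq_nonneg _) (hd0 _ _)
  refine cs.trans ((mul_le_mul_of_nonneg_left hg hf0).trans (le_of_eq ?_))
  rw [hf]; ring

lemma exp_spectral {B : Matrix (Fin n) (Fin n) ℂ} (hB : B.IsHermitian) :
    ∃ (U : Matrix.unitaryGroup (Fin n) ℂ) (l : Fin n → ℝ),
      B = (U : Matrix (Fin n) (Fin n) ℂ) * Matrix.diagonal (fun i => (l i : ℂ)) *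
        star (U : Matrix (Fin n) (Fin n) ℂ) ∧
      NormedSpace.exp B = (U : Matrix (Fin n) (Fin n) ℂ) *
        Matrix.diagonal (fun i => ((Real.exp (l i) : ℝ) : ℂ)) *
        star (U : Matrix (Fin n) (Fin n) ℂ) := by
  have h : B = (hB.eigenvectorUnitary : Matrix (Fin n) (Fin n) ℂ) *
      Matrix.diagonal (fun i => (hB.eigenvalues i : ℂ)) *
        star (hB.eigenvectorUnitary : Matrix (Fin n) (Fin n) ℂ) := by
    conv_lhs => rw [hB.spectral_theorem, Unitary.conjStarAlgAut_apply]
    rfl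
  refine ⟨hB.eigenvectorUnitary, hB.eigenvalues, h, ?_⟩
  have hinv : star (hB.eigenvectorUnitary : Matrix (Fin n) (Fin n) ℂ) =
      (hB.eigenvectorUnitary : Matrix (Fin n) (Fin n) ℂ)⁻¹ :=
    (Matrix.inv_eq_left_inv (Unitary.coe_star_mul_self _)).symm
  have hu : IsUnit (hB.eigenvectorUnitary : Matrix (Fin n) (Fin n) ℂ) :=
    (Unitary.toUnits hB.eigenvectorUnitary).isUnit
  conv_lhs => rw [h, hinv, Matrix.exp_conj (hB.eigenvectorUnitary : Matrix (Fin n) (Fin n) ℂ) _ hu,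
    Matrix.exp_diagonal]
  rw [hinv]
  congr 3
  funext i
  rw [Pi.coe_exp, ← Complex.exp_eq_exp_ℂ, Complex.ofReal_exp]

lemma trace_conj (U : Matrix.unitaryGroup (Fin n) ℂ) (D : Matrix (Fin n) (Fin n) ℂ) :
    ((U : Matrix (Fin n) (Fin n) ℂ) * D * star (U : Matrix (Fin n) (Fin n) ℂ)).trace = D.trace := by
  rw [Matrix.trace_mul_cycle, Unitary.coe_star_mul_self, one_mul]

lemma gibbs_spectral [NeZero n] (H : Fin m → Matrix (Fin n) (Fin n) ℂ)
    (hHerm : ∀ i, (H i).IsHermitian) (a : Fin m → ℝ) :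
    ∃ (U : Matrix.unitaryGroup (Fin n) ℂ) (p : Fin n → ℝ), (∀ i, 0 < p i) ∧ ∑ i, p i = 1 ∧
      ham H a = (U : Matrix (Fin n) (Fin n) ℂ) *
        Matrix.diagonal (fun i => ((Real.log (p i) + logZ H a : ℝ) : ℂ)) *
        star (U : Matrix (Fin n) (Fin n) ℂ) ∧
      gibbs H a = (U : Matrix (Fin n) (Fin n) ℂ) *
        Matrix.diagonal (fun i => ((p i : ℝ) : ℂ)) *
        star (U : Matrix (Fin n) (Fin n) ℂ) := by
  have hh : (ham H a).IsHermitian := by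
    unfold ham
    rw [Matrix.IsHermitian, Matrix.conjTranspose_sum]
    refine Finset.sum_congr rfl fun i _ => ?_
    rw [Matrix.conjTranspose_smul, (hHerm i).eq, star_trivial]
  obtain ⟨U, l, h1, h2⟩ := exp_spectral hh
  have hZ : Z H a = ∑ i, Real.exp (l i) := by
    rw [Z, h2, trace_conj, Matrix.trace_diagonal, Complex.re_sum]
    simp only [Complex.ofReal_re]
  have hZ0 : 0 < Z H a := by
    rw [hZ]; exact Finset.sum_pos (fun i _ => Real.exp_pos _) Finset.univ_nonempty
  refine ⟨U, fun i => Real.exp (l i) / Z H a, fun i => div_pos (Real.exp_pos _) hZ0, ?_, ?_, ?_⟩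
  · rw [← Finset.sum_div, ← hZ, div_self hZ0.ne']
  · conv_lhs => rw [h1]
    congr 3
    funext i
    rw [Real.log_div (Real.exp_pos _).ne' hZ0.ne', Real.log_exp, logZ, sub_add_cancel]
  · rw [gibbs, h2, ← smul_mul_assoc, ← mul_smul_comm, ← Matrix.diagonal_smul]
    congr 3
    funext i
    simp only [Pi.smul_apply, smul_eq_mul, Complex.ofReal_div]
    rw [div_eq_inv_mul]

/-- **Quantum Pinsker bound on expectation values for Gibbs states.** For every nonzero
Hermitian `A`, `|Tr[A(ρ_a − ρ_b)]| ≤ ‖A‖·√(2·S(ρ_a‖ρ_b))` (operator norm). -/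
theorem pinsker_expectation_bound (H : Fin m → Matrix (Fin n) (Fin n) ℂ)
    (hHerm : ∀ i, (H i).IsHermitian) (a b : Fin m → ℝ)
    (A : Matrix (Fin n) (Fin n) ℂ) (hA : A.IsHermitian) (hA0 : A ≠ 0) :
    |(A * (gibbs H a - gibbs H b)).trace.re| ≤ ‖A‖ * Real.sqrt (2 * relEnt H a b) := by
  have hn : NeZero n := ⟨by
    rintro rfl
    exact hA0 (Subsingleton.elim _ _)⟩
  obtain ⟨U, p, hp, hp1, hHa, hGa⟩ := gibbs_spectral H hHerm a
  obtain ⟨V, q, hq, hq1, hHb, hGb⟩ := gibbs_spectral H hHerm b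
  have hUU : star (U : Matrix (Fin n) (Fin n) ℂ) * U = 1 := Unitary.coe_star_mul_self U
  have hUU' : (U : Matrix (Fin n) (Fin n) ℂ) * star (U : Matrix (Fin n) (Fin n) ℂ) = 1 :=
    Unitary.coe_mul_star_self U
  have hVV' : (V : Matrix (Fin n) (Fin n) ℂ) * star (V : Matrix (Fin n) (Fin n) ℂ) = 1 :=
    Unitary.coe_mul_star_self V
  set C : Matrix.unitaryGroup (Fin n) ℂ := star U * V with hC
  have hCc : (C : Matrix (Fin n) (Fin n) ℂ) = star (U : Matrix (Fin n) (Fin n) ℂ) * V := rfl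
  set M : Matrix (Fin n) (Fin n) ℂ := star (V : Matrix (Fin n) (Fin n) ℂ) * A * U with hM
  have hMn : ‖M‖ = ‖A‖ := by
    rw [hM, CStarRing.norm_mul_coe_unitary, ← Unitary.coe_star, CStarRing.norm_coe_unitary_mul]
  have hk := core C M p q hp hq hp1 hq1
  have t1 : (A * gibbs H a).trace = ∑ i, ∑ j, (C : Matrix (Fin n) (Fin n) ℂ) i j * M j i * p i := by
    have : (A * gibbs H a).trace =
        ((C : Matrix (Fin n) (Fin n) ℂ) * M * Matrix.diagonal (fun i => ((p i : ℝ) : ℂ))).trace := by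
      rw [hGa, ← mul_assoc, Matrix.trace_mul_comm, hCc, hM]
      congr 1
      simp only [mul_assoc]
      rw [← mul_assoc (V : Matrix (Fin n) (Fin n) ℂ), hVV', one_mul]
    rw [this, Matrix.trace]
    refine Finset.sum_congr rfl fun i _ => ?_
    rw [Matrix.diag_apply, Matrix.mul_diagonal, Matrix.mul_apply, Finset.sum_mul]
  have t2 : (A * gibbs H b).trace = ∑ i, ∑ j, (C : Matrix (Fin n) (Fin n) ℂ) i j * M j i * q j := by
    have : (A * gibbs H b).trace =
        (M * (C : Matrix (Fin n) (Fin n) ℂ) * Matrix.diagonal (fun i => ((q i : ℝ) : ℂ))).trace := by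
      rw [hGb, ← mul_assoc, Matrix.trace_mul_comm, hCc, hM]
      congr 1
      simp only [mul_assoc]
      rw [← mul_assoc (U : Matrix (Fin n) (Fin n) ℂ), hUU', one_mul]
    rw [this, Matrix.trace, Finset.sum_comm]
    refine Finset.sum_congr rfl fun i _ => ?_
    rw [Matrix.diag_apply, Matrix.mul_diagonal, Matrix.mul_apply, Finset.sum_mul]
    refine Finset.sum_congr rfl fun j _ => by ring
  have t3 : (gibbs H a * ham H a).trace = ((∑ i, p i * (Real.log (p i) + logZ H a) : ℝ) : ℂ) := by
    have : gibbs H a * ham H a = (U : Matrix (Fin n) (Fin n) ℂ) *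
        Matrix.diagonal (fun i => (p i : ℂ) * ((Real.log (p i) + logZ H a : ℝ) : ℂ)) *
        star (U : Matrix (Fin n) (Fin n) ℂ) := by
      rw [hGa, hHa, ← Matrix.diagonal_mul_diagonal]
      simp only [mul_assoc]
      rw [← mul_assoc (star (U : Matrix (Fin n) (Fin n) ℂ)), hUU, one_mul]
    rw [this, trace_conj, Matrix.trace_diagonal]
    push_cast
    rfl
  have t4 : (gibbs H a * ham H b).trace = ((∑ i, ∑ j, p i *
      ‖(C : Matrix (Fin n) (Fin n) ℂ) i j‖ ^ 2 * (Real.log (q j) + logZ H b) : ℝ) : ℂ) := by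
    have : (gibbs H a * ham H b).trace = (Matrix.diagonal (fun i => (p i : ℂ)) *
        ((C : Matrix (Fin n) (Fin n) ℂ) *
        Matrix.diagonal (fun i => ((Real.log (q i) + logZ H b : ℝ) : ℂ)) *
        star (C : Matrix (Fin n) (Fin n) ℂ))).trace := by
      rw [hGa, hHb, mul_assoc, mul_assoc, Matrix.trace_mul_comm, hCc, star_mul, star_star]
      simp only [mul_assoc]
    rw [this, Matrix.trace]
    push_cast
    refine Finset.sum_congr rfl fun i _ => ?_
    rw [Matrix.diag_apply, Matrix.diagonal_mul, Matrix.mul_apply, Finset.mul_sum]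
    refine Finset.sum_congr rfl fun j _ => ?_
    rw [Matrix.mul_diagonal, Matrix.star_apply, Complex.star_def, ← Complex.mul_conj']
    push_cast
    ring
  have hrel : relEnt H a b = ∑ i, p i * Real.log (p i) -
        ∑ i, ∑ j, p i * ‖(C : Matrix (Fin n) (Fin n) ℂ) i j‖ ^ 2 * Real.log (q j) := by
    rw [relEnt, mul_sub, Matrix.trace_sub, t3, t4, ← Complex.ofReal_sub, Complex.ofReal_re]
    simp only [mul_add, Finset.sum_add_distrib, ← Finset.sum_mul, ← Finset.mul_sum, row_sum,
      mul_one, hp1]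
    ring
  have htr : (A * (gibbs H a - gibbs H b)).trace.re =
      ∑ i, ∑ j, ((C : Matrix (Fin n) (Fin n) ℂ) i j * M j i).re * (p i - q j) := by
    rw [mul_sub, Matrix.trace_sub, t1, t2, Complex.sub_re]
    simp only [Complex.re_sum, Complex.re_mul_ofReal, mul_sub, Finset.sum_sub_distrib]
  rw [← hrel, ← htr, hMn] at hk
  have := Real.abs_le_sqrt hk
  rwa [Real.sqrt_mul (sq_nonneg _), Real.sqrt_sq (norm_nonneg _)] at this

end QBM15
end

section
/- (Closed-form mean-field solution.) Let x, y, z be real numbers with 0 < r < 1 where r = √(x² + y² + z²), and set θ^x = x·arctanh(r)/r, θ^y = y·arctanh(r)/r, θ^z = z·arctanh(r)/r. Then the single-qubit Gibbs state ρ = exp(θ^x·σx + θ^y·σy + θ^z·σz)/Tr[exp(θ^x·σx + θ^y·σy + θ^z·σz)] reproduces the target expectation values exactly: Tr[ρ·σx] = x, Tr[ρ·σy] = y, and Tr[ρ·σz] = z. -/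
namespace Pauli18

/-- The Pauli matrix `σx`. -/
def σx : Matrix (Fin 2) (Fin 2) ℂ := !![0, 1; 1, 0]

/-- The Pauli matrix `σy`. -/
def σy : Matrix (Fin 2) (Fin 2) ℂ := !![0, -Complex.I; Complex.I, 0]

/-- The Pauli matrix `σz`. -/
def σz : Matrix (Fin 2) (Fin 2) ℂ := !![1, 0; 0, -1]

/-- The inverse hyperbolic tangent, `arctanh r = ½·log((1+r)/(1−r))`. -/
noncomputable def arctanh (r : ℝ) : ℝ := Real.log ((1 + r) / (1 - r)) / 2

theorem exp_smul_of_sq_one {A : Type*} [NormedRing A] [NormedAlgebra ℝ A] [CompleteSpace A]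
    (N : A) (hN : N * N = 1) (a : ℝ) :
    NormedSpace.exp (a • N) = Real.cosh a • (1 : A) + Real.sinh a • N := by
  have h1 : HasSum (fun n : ℕ => ((n.factorial : ℝ)⁻¹) • (a • N) ^ n)
      (NormedSpace.exp (a • N)) := NormedSpace.exp_series_hasSum_exp' (𝕂 := ℝ) (a • N)
  refine h1.unique (HasSum.even_add_odd ?_ ?_)
  · have h := (Real.hasSum_cosh a).smul_const (1 : A)
    convert h using 2 with n
    rw [smul_pow, pow_mul N, pow_two N, hN, one_pow, smul_smul, div_eq_inv_mul]
  · have h := (Real.hasSum_sinh a).smul_const N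
    convert h using 2 with n
    rw [smul_pow, pow_succ N, pow_mul N, pow_two N, hN, one_pow, one_mul, smul_smul,
      div_eq_inv_mul]

open scoped Matrix.Norms.Operator in
theorem matrix_exp_smul (N : Matrix (Fin 2) (Fin 2) ℂ) (hN : N * N = 1) (a : ℝ) :
    NormedSpace.exp (a • N) = Real.cosh a • (1 : Matrix (Fin 2) (Fin 2) ℂ) + Real.sinh a • N :=
  exp_smul_of_sq_one N hN a

/-- **Closed-form mean-field solution.** For target expectation values `x, y, z` with
`0 < r < 1`, `r = √(x² + y² + z²)`, the parameters `θ^k = (k/r)·arctanh r` (for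
`k = x, y, z`) produce a single-qubit Gibbs state that reproduces the targets exactly. -/
theorem mean_field_closed_form (x y z : ℝ) (r : ℝ)
    (hr : r = Real.sqrt (x ^ 2 + y ^ 2 + z ^ 2)) (hr0 : 0 < r) (hr1 : r < 1)
    (θx θy θz : ℝ)
    (hθx : θx = x * arctanh r / r)
    (hθy : θy = y * arctanh r / r)
    (hθz : θz = z * arctanh r / r)
    (ρ : Matrix (Fin 2) (Fin 2) ℂ)
    (hρ : ρ = ((NormedSpace.exp (θx • σx + θy • σy + θz • σz)).trace)⁻¹ •
      NormedSpace.exp (θx • σx + θy • σy + θz • σz)) :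
    (ρ * σx).trace.re = x ∧ (ρ * σy).trace.re = y ∧ (ρ * σz).trace.re = z := by
  have hsq : x ^ 2 + y ^ 2 + z ^ 2 = r ^ 2 := by
    rw [hr, Real.sq_sqrt (by positivity)]
  have ht : Real.tanh (arctanh r) = r := by
    have h : arctanh r = Real.artanh r := by
      rw [Real.artanh_eq_half_log ⟨by linarith, hr1.le⟩, arctanh]; ring
    rw [h, Real.tanh_artanh ⟨by linarith, hr1⟩]
  generalize arctanh r = a at *
  have hc : Real.cosh a ≠ 0 := (Real.cosh_pos a).ne'
  have hs : Real.sinh a = r * Real.cosh a := by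
    rw [Real.tanh_eq_sinh_div_cosh] at ht
    field_simp at ht
    linarith
  have hr' : r ≠ 0 := hr0.ne'
  have hrc : (r : ℂ) ≠ 0 := by exact_mod_cast hr'
  have hcc : (Real.cosh a : ℂ) ≠ 0 := by exact_mod_cast hc
  have hsqc : (x : ℂ) ^ 2 + (y : ℂ) ^ 2 + (z : ℂ) ^ 2 = (r : ℂ) ^ 2 := by exact_mod_cast hsq
  let N : Matrix (Fin 2) (Fin 2) ℂ :=
    !![(z / r : ℂ), (x - y * Complex.I) / r; (x + y * Complex.I) / r, -(z / r)]
  have hN : N * N = 1 := by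
    ext i j
    fin_cases i <;> fin_cases j <;>
      simp [N, Matrix.mul_apply, Fin.sum_univ_two] <;> field_simp <;>
      ring_nf <;> simp only [Complex.I_sq] <;> linear_combination hsqc
  have hA : θx • σx + θy • σy + θz • σz = a • N := by
    subst hθx hθy hθz
    ext i j
    fin_cases i <;> fin_cases j <;> simp [N, σx, σy, σz] <;> ring
  have hE : NormedSpace.exp (θx • σx + θy • σy + θz • σz) =
      (Real.cosh a : ℂ) • !![(1 + z : ℂ), x - y * Complex.I; x + y * Complex.I, 1 - z] := by
    rw [hA, matrix_exp_smul N hN, hs]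
    ext i j
    fin_cases i <;> fin_cases j <;> simp [N, -Complex.ofReal_cosh] <;> field_simp
    ring
  rw [hE] at hρ
  have hρ2 : ρ = !![((1 + z) / 2 : ℂ), (x - y * Complex.I) / 2;
      (x + y * Complex.I) / 2, (1 - z) / 2] := by
    rw [hρ, Matrix.trace_smul, Matrix.trace_fin_two, smul_smul]
    have h : (((Real.cosh a : ℂ) • (1 + z + (1 - z) : ℂ))⁻¹ * Real.cosh a) = 1 / 2 := by
      rw [smul_eq_mul]
      have : (1 + z + (1 - z) : ℂ) = 2 := by ring
      rw [this]; field_simp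
    simp only [Matrix.of_apply, Matrix.cons_val', Matrix.cons_val_zero, Matrix.cons_val_one,
      Matrix.cons_val_fin_one]
    rw [h]
    ext i j
    fin_cases i <;> fin_cases j <;> simp <;> ring
  subst hρ2
  refine ⟨?_, ?_, ?_⟩
  · simp [σx, Matrix.trace_fin_two]
  · simp [σy, Matrix.trace_fin_two]
    ring
  · simp [σz, Matrix.trace_fin_two]
    ring

end Pauli18
end
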